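/- arXiv:1912.10665 — 3 statements merged into one kernel-verified Lean document; each statement's English description precedes it below -/
import Mathlib

section
/- Let Γ ⊆ ℕ = {1,2,3,...} be a set satisfying Σ_{γ∈Γ} 1/√γ < ∞. Then for every weight w satisfying condition (A), the system of exponentials E(ℕ∖Γ) = {e^{2πint} : n ∈ ℕ∖Γ} spans the weighted space L²(𝕋, w), i.e. finite linear combinations of these exponentials are dense in L²([0,1], w(t)dt). -/
open MeasureTheory

noncomputable section

/-- The weighted measure `w(t) dt` on `(0,1)`. -/
def wMeasure (w : ℝ → ℝ) : Measure ℝ :=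
  (volume.restrict (Set.Ioo (0:ℝ) 1)).withDensity (fun t => ENNReal.ofReal (w t))

/-- The exponential `e^{2πiλt}`. -/
def expf (l : ℝ) : ℝ → ℂ := fun t => Complex.exp (2 * Real.pi * Complex.I * l * t)

/-- Finite linear combinations of the exponentials `e^{2πiλt}`, `λ ∈ S`, are dense in
`L²([0,1], w(t)dt)`. -/
def ExpSpans (w : ℝ → ℝ) (S : Set ℝ) : Prop :=
  closure ((Submodule.span ℂ
      {g : Lp ℂ 2 (wMeasure w) | ∃ l ∈ S, (g : ℝ → ℂ) =ᵐ[wMeasure w] expf l} :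
        Submodule ℂ (Lp ℂ 2 (wMeasure w))) : Set (Lp ℂ 2 (wMeasure w))) = Set.univ

/-- `∫₀¹ log w(t) dt = -∞`: the positive part is finite and the negative part is infinite. -/
def LogIntNegInf (w : ℝ → ℝ) : Prop :=
  (∫⁻ t in Set.Ioo (0:ℝ) 1, ENNReal.ofReal (Real.log (w t))) ≠ ⊤ ∧
  (∫⁻ t in Set.Ioo (0:ℝ) 1, ENNReal.ofReal (-(Real.log (w t)))) = ⊤

/-- Condition (A): `w` is positive, increasing and bounded on `(0,1)`
and `∫₀¹ log w(t) dt = -∞`. -/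
def ConditionA (w : ℝ → ℝ) : Prop :=
  (∀ t ∈ Set.Ioo (0:ℝ) 1, 0 < w t) ∧ MonotoneOn w (Set.Ioo (0:ℝ) 1) ∧
  BddAbove (w '' Set.Ioo (0:ℝ) 1) ∧ LogIntNegInf w



def kr (q : ℂ) : ℂ :=
  (1/512 : ℝ) * (12 * (Complex.I / (q - 1/2 + Complex.I/4)) - 5 * (1 / (q - 1/2 + Complex.I/4))^2)

lemma kr_re (q : ℂ) (hq : 0 ≤ q.im) :
    (kr q).re = (1/512) * (12 * ((q.im + 1/4) / ((q.re - 1/2)^2 + (q.im+1/4)^2))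
      - 5 * (((q.re-1/2)^2 - (q.im+1/4)^2) / ((q.re - 1/2)^2 + (q.im+1/4)^2)^2)) := by
  have hy : 0 < q.im + 1/4 := by linarith
  have hD : (q.re - 1/2)^2 + (q.im+1/4)^2 ≠ 0 := by positivity
  have e : q - 1/2 + Complex.I/4 = ⟨q.re - 1/2, q.im + 1/4⟩ := by
    apply Complex.ext <;> simp
  unfold kr
  rw [e, Complex.re_ofReal_mul]
  congr 1
  simp only [Complex.sub_re, Complex.mul_re, Complex.div_re, Complex.div_im, Complex.normSq_mk, Complex.I_re,
    Complex.I_im, pow_two, Complex.one_re, Complex.one_im]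
  norm_num
  field_simp

lemma kr_den_ne (q : ℂ) (hq : 0 ≤ q.im) : q - 1/2 + Complex.I/4 ≠ 0 := by
  intro h
  have := congrArg Complex.im h
  simp at this
  norm_num at this
  linarith

lemma kr_norm (q : ℂ) (hq : 0 ≤ q.im) : ‖kr q‖ ≤ 1 := by
  have h4 : (1/4 : ℝ) ≤ ‖q - 1/2 + Complex.I/4‖ := by
    have h := Complex.abs_im_le_norm (q - 1/2 + Complex.I/4)
    have : (q - 1/2 + Complex.I/4).im = q.im + 1/4 := by simp
    rw [this, abs_of_nonneg (by linarith)] at h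
    linarith
  have h5 : ‖1 / (q - 1/2 + Complex.I/4)‖ ≤ 4 := by
    rw [norm_div, norm_one, div_le_iff₀ (by linarith)]; linarith
  have h6 : ‖Complex.I / (q - 1/2 + Complex.I/4)‖ ≤ 4 := by
    rw [norm_div, Complex.norm_I, div_le_iff₀ (by linarith)]; linarith
  unfold kr
  rw [norm_mul]
  have h7 : ‖12 * (Complex.I / (q - 1/2 + Complex.I/4)) - 5 * (1 / (q - 1/2 + Complex.I/4))^2‖ ≤ 12 * 4 + 5 * 4^2 := by
    refine (norm_sub_le _ _).trans ?_
    rw [norm_mul, norm_mul, norm_pow]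
    simp only [Complex.norm_ofNat]
    gcongr
  rw [Complex.norm_real]
  norm_num at h7 ⊢
  linarith

lemma kr_diff (q : ℂ) (hq : 0 ≤ q.im) : DifferentiableAt ℂ kr q := by
  have := kr_den_ne q hq
  unfold kr
  have h1 : DifferentiableAt ℂ (fun q : ℂ => q - 1/2 + Complex.I/4) q := by fun_prop
  exact ((((differentiableAt_const _).div h1 this).const_mul _).sub
    ((((differentiableAt_const _).div h1 this).pow 2).const_mul _)).const_mul _

lemma kr_real (t : ℝ) : (kr t).re ≤ max 0 (1 - t) := by
  rw [kr_re _ (by simp)]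
  simp only [Complex.ofReal_re, Complex.ofReal_im]
  have hD : 0 < (t - 1/2)^2 + (0+1/4)^2 := by positivity
  have e : (1/512) * (12 * ((0 + 1/4) / ((t - 1/2)^2 + (0+1/4)^2))
      - 5 * (((t-1/2)^2 - (0+1/4)^2) / ((t - 1/2)^2 + (0+1/4)^2)^2))
      = (1/256) * (t * (1 - t)) / ((t - 1/2)^2 + (0+1/4)^2)^2 := by
    field_simp
    ring
  rw [e]
  by_cases h : 0 ≤ t ∧ t ≤ 1
  · apply le_max_of_le_right
    rw [div_le_iff₀ (by positivity)]
    have : (1/256:ℝ) ≤ ((t - 1/2)^2 + (0+1/4)^2)^2 := by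
      nlinarith [sq_nonneg (t-1/2), sq_nonneg ((t-1/2)^2)]
    nlinarith [h.1, h.2]
  · apply le_max_of_le_left
    apply div_nonpos_of_nonpos_of_nonneg _ (by positivity)
    rcases not_and_or.1 h with h | h <;> nlinarith

lemma kr_low (q : ℂ) (p : ℝ) (hp : 0 < p) (hp2 : p ≤ 1/2) (hq : 1 ≤ q.im) :
    p * (1 / (512 * (‖q‖+1)^2)) ≤ (kr (q / p)).re := by
  have him : (q / (p:ℂ)).im = q.im / p := Complex.div_ofReal_im _ _
  have hre : (q / (p:ℂ)).re = q.re / p := Complex.div_ofReal_re _ _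
  rw [kr_re _ (by rw [him]; positivity), him, hre]
  set x := q.re / p - 1/2
  set y := q.im / p + 1/4
  have hy1 : 1 ≤ q.im / p := by rw [le_div_iff₀ hp]; linarith
  have hy : 1 ≤ y := by simp only [y]; linarith
  have hyp : 1 / p ≤ y := by
    have : 1 / p ≤ q.im / p := by gcongr
    simp only [y]; linarith
  have hD : x^2 + y^2 ≤ (‖q‖+1)^2 / p^2 := by
    have hn : ‖q‖^2 = q.re^2 + q.im^2 := by rw [← Complex.normSq_eq_norm_sq, Complex.normSq_apply]; ring
    have e : x^2 + y^2 = (q.re^2 + q.im^2 + p * (q.im/2 - q.re) + p^2 * (5/16)) / p^2 := by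
      simp only [x, y]; field_simp; ring
    rw [e]
    gcongr
    have h1 := Complex.abs_re_le_norm q
    have h2 := Complex.abs_im_le_norm q
    have h3 := abs_le.1 h1
    have h4 := abs_le.1 h2
    nlinarith [norm_nonneg q]
  have hDp : 0 < x^2 + y^2 := by positivity
  have h2 : (x^2 - y^2) / (x^2+y^2)^2 ≤ 1 / (x^2+y^2) := by
    rw [div_le_div_iff₀ (by positivity) hDp]
    nlinarith [sq_nonneg x, sq_nonneg y]
  have h3 : 7 * (1/p) / (x^2+y^2) ≤ 12 * (y / (x^2+y^2)) - 5 * (1 / (x^2+y^2)) := by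
    rw [show 12 * (y / (x^2+y^2)) - 5 * (1 / (x^2+y^2)) = (12 * y - 5) / (x^2+y^2) by ring]
    gcongr
    linarith
  have h4 : p / (‖q‖+1)^2 ≤ 7 * (1/p) / (x^2+y^2) := by
    have : 7 * (1/p) / ((‖q‖+1)^2 / p^2) ≤ 7 * (1/p) / (x^2+y^2) := by gcongr
    refine le_trans ?_ this
    have : 7 * (1/p) / ((‖q‖+1)^2 / p^2) = 7 * (p / (‖q‖+1)^2) := by field_simp
    rw [this]
    have : 0 ≤ p / (‖q‖+1)^2 := by positivity
    linarith
  have e : p * (1 / (512 * (‖q‖+1)^2)) = (1/512) * (p / (‖q‖+1)^2) := by field_simp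
  rw [e]
  gcongr
  linarith

def kR (b p : ℕ → ℝ) (N : ℕ) (q : ℂ) : ℂ := ∑ k ∈ Finset.range N, (b k : ℂ) * kr (q / (p k : ℂ))

lemma div_im_nonneg (q : ℂ) (hq : 0 ≤ q.im) (p : ℝ) (hp : 0 < p) : 0 ≤ (q / (p:ℂ)).im := by
  rw [Complex.div_ofReal_im]; positivity

lemma kR_diff (b p : ℕ → ℝ) (hp : ∀ k, 0 < p k) (N : ℕ) (q : ℂ) (hq : 0 ≤ q.im) :
    DifferentiableAt ℂ (kR b p N) q := by
  unfold kR
  refine DifferentiableAt.fun_sum fun k _ => ?_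
  refine DifferentiableAt.const_mul ?_ _
  exact DifferentiableAt.comp (g := kr) (f := fun q : ℂ => q / (p k : ℂ)) q
    (kr_diff _ (div_im_nonneg q hq _ (hp k))) (differentiableAt_id.div_const _)

lemma kR_norm (b p : ℕ → ℝ) (hb : ∀ k, 0 ≤ b k) (hp : ∀ k, 0 < p k) (N : ℕ) (q : ℂ) (hq : 0 ≤ q.im) :
    ‖kR b p N q‖ ≤ ∑ k ∈ Finset.range N, b k := by
  unfold kR
  refine (norm_sum_le _ _).trans (Finset.sum_le_sum fun k _ => ?_)
  rw [norm_mul, Complex.norm_real, Real.norm_of_nonneg (hb k)]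
  exact mul_le_of_le_one_right (hb k) (kr_norm _ (div_im_nonneg q hq _ (hp k)))

lemma kR_re (b p : ℕ → ℝ) (N : ℕ) (q : ℂ) :
    (kR b p N q).re = ∑ k ∈ Finset.range N, b k * (kr (q / (p k : ℂ))).re := by
  simp [kR]

lemma kR_real (b p : ℕ → ℝ) (hb : ∀ k, 0 ≤ b k) (N : ℕ) (t : ℝ) :
    (kR b p N t).re ≤ ∑ k ∈ Finset.range N, b k * max 0 (1 - t / p k) := by
  rw [kR_re]
  refine Finset.sum_le_sum fun k _ => mul_le_mul_of_nonneg_left ?_ (hb k)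
  have := kr_real (t / p k)
  push_cast at this
  exact this

/-- boundary part for positive t -/
lemma kR_pos (b p : ℕ → ℝ) (hb : ∀ k, 0 ≤ b k) (hp : ∀ k, 0 < p k) (N : ℕ) (t : ℝ) :
    ∃ A : Finset ℕ, (kR b p N ((Real.exp t - 1 : ℝ) : ℂ)).re ≤ ∑ k ∈ A, b k * (1 - t / p k) := by
  refine ⟨(Finset.range N).filter (fun k => 0 ≤ 1 - t / p k), (kR_real b p hb N _).trans ?_⟩
  rw [Finset.sum_filter]
  refine Finset.sum_le_sum fun k _ => ?_
  have h1 : t ≤ Real.exp t - 1 := by linarith [Real.add_one_le_exp t]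
  have h2 : t / p k ≤ (Real.exp t - 1) / p k := by have := hp k; gcongr
  split_ifs with h
  · refine mul_le_mul_of_nonneg_left (max_le h (by linarith)) (hb k)
  · rw [max_eq_left (by push Not at h; linarith), mul_zero]

lemma kR_neg (b p : ℕ → ℝ) (hb : ∀ k, 0 ≤ b k) (hp : ∀ k, 0 < p k) (hp2 : ∀ k, p k ≤ 1/2)
    (N : ℕ) (t : ℝ) (ht : t ≤ 0) :
    (kR b p N (t:ℂ)).re ≤ 0 := by
  rw [kR_re]
  refine Finset.sum_nonpos fun k _ => mul_nonpos_of_nonneg_of_nonpos (hb k) ?_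
  have h0 : t / p k ≤ 0 := div_nonpos_of_nonpos_of_nonneg ht (hp k).le
  have e : (t : ℂ) / (p k : ℂ) = ((t / p k : ℝ) : ℂ) := by push_cast; rfl
  rw [e]
  rw [kr_re _ (by simp)]
  simp only [Complex.ofReal_re, Complex.ofReal_im]
  set s := t / p k
  have hD : 0 < (s - 1/2)^2 + (0+1/4)^2 := by positivity
  have e : (1/512) * (12 * ((0 + 1/4) / ((s - 1/2)^2 + (0+1/4)^2))
      - 5 * (((s-1/2)^2 - (0+1/4)^2) / ((s - 1/2)^2 + (0+1/4)^2)^2))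
      = (1/256) * (s * (1 - s)) / ((s - 1/2)^2 + (0+1/4)^2)^2 := by
    field_simp
    ring
  rw [e]
  apply div_nonpos_of_nonpos_of_nonneg _ (by positivity)
  nlinarith

lemma quad_bound (t c : ℝ) : c * |t| - t^2 ≤ c^2 := by
  nlinarith [sq_nonneg (|t| - c/2), sq_abs t, sq_nonneg c]

/-- Quantitative uniqueness in the strip. -/
lemma strip_zero (G : ℂ → ℂ) (b p : ℕ → ℝ) (hb : ∀ k, 0 ≤ b k) (hp : ∀ k, 0 < p k)
    (hp2 : ∀ k, p k ≤ 1/2) (hbp : ¬ Summable fun k => b k * p k)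
    (hd : DiffContOnCl ℂ G (Complex.im ⁻¹' Set.Ioo 0 Real.pi)) (C c : ℝ) (hC : 0 ≤ C) (hc : 0 ≤ c)
    (hG : ∀ τ : ℂ, 0 ≤ τ.im → τ.im ≤ Real.pi → ‖G τ‖ ≤ C * Real.exp (c * |τ.re|))
    (hGs : ∀ t : ℝ, 0 < t → ∀ A : Finset ℕ,
      ‖G t‖ ≤ C * Real.exp (c * t - (∑ k ∈ A, b k * (1 - t / p k)) / 2)) :
    ∀ t : ℝ, G t = 0 := by
  set C' := C * Real.exp (c^2 + Real.pi^2) with hC'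
  have hC'0 : 0 ≤ C' := by positivity
  have him : ∀ τ : ℂ, 0 ≤ τ.im → τ.im ≤ Real.pi → 0 ≤ (Complex.exp τ - 1).im := by
    intro τ h1 h2
    rw [Complex.sub_im, Complex.exp_im]
    have := Real.sin_nonneg_of_nonneg_of_le_pi h1 h2
    simp; positivity
  let Φ : ℕ → ℂ → ℂ := fun N τ => G τ * Complex.exp (-τ^2 + kR b p N (Complex.exp τ - 1) / 2)
  have hcl : closure (Complex.im ⁻¹' Set.Ioo 0 Real.pi) = Complex.im ⁻¹' Set.Icc 0 Real.pi := by
    rw [Complex.closure_preimage_im, closure_Ioo Real.pi_pos.ne]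
  have hnorm : ∀ N τ, ‖Φ N τ‖ = ‖G τ‖ * Real.exp (τ.im^2 - τ.re^2 + (kR b p N (Complex.exp τ - 1)).re / 2) := by
    intro N τ
    simp only [Φ, norm_mul, Complex.norm_exp, Complex.add_re, Complex.neg_re]
    congr 2
    have : (kR b p N (Complex.exp τ - 1) / 2).re = (kR b p N (Complex.exp τ - 1)).re / 2 := by
      simp
    rw [this, pow_two, Complex.mul_re]
    ring
  have hdiffK : ∀ N (τ : ℂ), 0 ≤ τ.im → τ.im ≤ Real.pi →
      DifferentiableAt ℂ (fun τ => Complex.exp (-τ^2 + kR b p N (Complex.exp τ - 1) / 2)) τ := by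
    intro N τ h1 h2
    refine DifferentiableAt.cexp (DifferentiableAt.add (by fun_prop) (DifferentiableAt.div_const ?_ _))
    exact DifferentiableAt.comp (g := kR b p N) (f := fun τ : ℂ => Complex.exp τ - 1) τ
      (kR_diff b p hp N _ (him τ h1 h2)) (by fun_prop)
  have hΦd : ∀ N, DiffContOnCl ℂ (Φ N) (Complex.im ⁻¹' Set.Ioo 0 Real.pi) := by
    intro N
    refine ⟨hd.1.mul fun τ hτ => (hdiffK N τ hτ.1.le hτ.2.le).differentiableWithinAt,
      hd.2.mul fun τ hτ => ?_⟩
    rw [hcl] at hτ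
    exact (hdiffK N τ hτ.1 hτ.2).continuousAt.continuousWithinAt
  have hgen : ∀ N (τ : ℂ) (K : ℝ), 0 ≤ τ.im → τ.im ≤ Real.pi → (kR b p N (Complex.exp τ - 1)).re / 2 ≤ K →
      ‖Φ N τ‖ ≤ C' * Real.exp K := by
    intro N τ K h1 h2 h3
    rw [hnorm]
    calc _ ≤ (C * Real.exp (c * |τ.re|)) * Real.exp (Real.pi^2 - τ.re^2 + K) := by
          gcongr
          · exact hG τ h1 h2
      _ ≤ _ := by
          rw [hC', mul_assoc, mul_assoc, ← Real.exp_add, ← Real.exp_add]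
          refine mul_le_mul_of_nonneg_left (Real.exp_le_exp.2 ?_) hC
          linarith [quad_bound τ.re c]
  have hbd : ∀ N (τ : ℂ), 0 ≤ τ.im → τ.im ≤ Real.pi → ‖Φ N τ‖ ≤ C' := by
    intro N τ h1 h2
    refine PhragmenLindelof.horizontal_strip (hΦd N) ?_ ?_ ?_ h1 h2
    · refine ⟨0, by have := Real.pi_pos; simp; , 0, ?_⟩
      simp only [zero_mul, Real.exp_zero]
      refine Asymptotics.IsBigO.of_bound (C' * Real.exp ((∑ k ∈ Finset.range N, b k)/2)) ?_
      refine Filter.eventually_inf_principal.2 (Filter.Eventually.of_forall fun z hz => ?_)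
      rw [norm_one, mul_one]
      refine hgen N z _ hz.1.le hz.2.le ?_
      have := (Complex.re_le_norm _).trans (kR_norm b p hb hp N _ (him z hz.1.le hz.2.le))
      linarith
    · intro z hz
      have hzr : z = (z.re : ℂ) := by apply Complex.ext <;> simp [hz]
      by_cases h : 0 < z.re
      · obtain ⟨A, hA⟩ := kR_pos b p hb hp N z.re
        rw [hnorm, hz]
        have e : Complex.exp z - 1 = ((Real.exp z.re - 1 : ℝ) : ℂ) := by
          conv_lhs => rw [hzr]
          push_cast; rfl
        rw [e]
        have h5 := hGs z.re h A
        rw [← hzr] at h5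
        calc _ ≤ (C * Real.exp (c * z.re - (∑ k ∈ A, b k * (1 - z.re / p k)) / 2)) *
              Real.exp (0^2 - z.re^2 + (∑ k ∈ A, b k * (1 - z.re / p k)) / 2) := by
              gcongr
          _ ≤ _ := by
              rw [hC', mul_assoc, ← Real.exp_add]
              refine mul_le_mul_of_nonneg_left (Real.exp_le_exp.2 ?_) hC
              have := quad_bound z.re c
              rw [abs_of_pos h] at this
              nlinarith [Real.pi_pos]
      · have := hgen N z 0 hz.symm.le (hz.symm ▸ Real.pi_pos.le) ?_
        · simpa using this
        have e : Complex.exp z - 1 = ((Real.exp z.re - 1 : ℝ) : ℂ) := by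
          conv_lhs => rw [hzr]
          push_cast; rfl
        rw [e]
        have : Real.exp z.re ≤ 1 := Real.exp_le_one_iff.2 (not_lt.1 h)
        linarith [kR_neg b p hb hp hp2 N (Real.exp z.re - 1) (by linarith)]
    · intro z hz
      have hzr : z = (z.re : ℂ) + Real.pi * Complex.I := by apply Complex.ext <;> simp [hz]
      have := hgen N z 0 (hz.symm ▸ Real.pi_pos.le) hz.le ?_
      · simpa using this
      have e : Complex.exp z - 1 = ((- Real.exp z.re - 1 : ℝ) : ℂ) := by
        conv_lhs => rw [hzr]
        rw [Complex.exp_add, Complex.exp_pi_mul_I]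
        push_cast; ring
      rw [e]
      linarith [kR_neg b p hb hp hp2 N (-Real.exp z.re - 1) (by linarith [Real.exp_pos z.re])]
  -- vanish on an open set
  have hvan : ∀ τ : ℂ, 0 ≤ τ.im → τ.im ≤ Real.pi → 1 ≤ (Complex.exp τ - 1).im → G τ = 0 := by
    intro τ h1 h2 h3
    set q := Complex.exp τ - 1 with hq
    set κ := 1 / (512 * (‖q‖+1)^2) with hκ
    have hκ0 : 0 < κ := by positivity
    have hlow : ∀ N, κ * ∑ k ∈ Finset.range N, b k * p k ≤ (kR b p N q).re := by
      intro N
      rw [kR_re, Finset.mul_sum]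
      refine Finset.sum_le_sum fun k _ => ?_
      have := mul_le_mul_of_nonneg_left (kr_low q (p k) (hp k) (hp2 k) h3) (hb k)
      refine le_trans (le_of_eq ?_) this
      ring
    have htop : Filter.Tendsto (fun N => ∑ k ∈ Finset.range N, b k * p k) Filter.atTop Filter.atTop :=
      (not_summable_iff_tendsto_nat_atTop_of_nonneg (fun k => mul_nonneg (hb k) (hp k).le)).1 hbp
    have hle : ∀ N, ‖G τ‖ ≤ C' * Real.exp (τ.re^2 - τ.im^2) * Real.exp (-(κ / 2 * ∑ k ∈ Finset.range N, b k * p k)) := by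
      intro N
      have h5 := hbd N τ h1 h2
      rw [hnorm, ← le_div_iff₀ (Real.exp_pos _)] at h5
      refine h5.trans ?_
      rw [div_eq_mul_inv, ← Real.exp_neg, mul_assoc C', ← Real.exp_add]
      refine mul_le_mul_of_nonneg_left (Real.exp_le_exp.2 ?_) hC'0
      linarith [hlow N]
    have hlim : Filter.Tendsto (fun N => C' * Real.exp (τ.re^2 - τ.im^2) * Real.exp (-(κ / 2 * ∑ k ∈ Finset.range N, b k * p k)))
        Filter.atTop (nhds (C' * Real.exp (τ.re^2 - τ.im^2) * 0)) := by
      refine Filter.Tendsto.const_mul _ ?_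
      refine Real.tendsto_exp_neg_atTop_nhds_zero.comp ?_
      exact htop.const_mul_atTop (by positivity)
    rw [mul_zero] at hlim
    exact norm_le_zero_iff.1 (ge_of_tendsto' hlim hle)
  have hopen : IsOpen (Complex.im ⁻¹' Set.Ioo 0 Real.pi) := isOpen_Ioo.preimage Complex.continuous_im
  have hzero : Set.EqOn G 0 (Complex.im ⁻¹' Set.Ioo 0 Real.pi) := by
    have hconn : IsPreconnected (Complex.im ⁻¹' Set.Ioo 0 Real.pi) :=
      ((convex_Ioo 0 Real.pi).linear_preimage Complex.imLm).isPreconnected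
    set τ0 : ℂ := ((Real.log 4 : ℝ) : ℂ) + (Real.pi / 2 : ℝ) * Complex.I with hτ0
    have him0 : τ0.im = Real.pi / 2 := by
      simp only [hτ0, Complex.add_im, Complex.ofReal_im, Complex.im_ofReal_mul, Complex.I_im]; ring
    have hmem : τ0 ∈ Complex.im ⁻¹' Set.Ioo 0 Real.pi := by
      simp only [Set.mem_preimage, him0]
      constructor <;> linarith [Real.pi_pos]
    refine (hd.1.analyticOnNhd hopen).eqOn_zero_of_preconnected_of_eventuallyEq_zero hconn hmem ?_
    have hcont : Continuous fun τ : ℂ => (Complex.exp τ - 1).im := by fun_prop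
    have h1 : ∀ᶠ τ in nhds τ0, 1 < (Complex.exp τ - 1).im := by
      refine hcont.continuousAt.eventually_const_lt ?_
      simp only [Complex.sub_im, Complex.exp_im, him0]
      have : τ0.re = Real.log 4 := by
        simp only [hτ0, Complex.add_re, Complex.ofReal_re, Complex.re_ofReal_mul, Complex.I_re]; ring
      rw [this, Real.exp_log (by norm_num)]
      simp
    filter_upwards [h1, hopen.mem_nhds hmem] with τ h1 h2
    exact hvan τ h2.1.le h2.2.le h1.le
  intro t
  have hcl2 : Set.EqOn G 0 (closure (Complex.im ⁻¹' Set.Ioo 0 Real.pi)) :=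
    hzero.of_subset_closure hd.2 continuousOn_const subset_closure subset_rfl
  apply hcl2
  rw [hcl]
  simp [Real.pi_pos.le]
lemma param_int (μ : Measure ℝ) (h c : ℝ → ℂ) (hh : Integrable h μ)
    (hch : Integrable (fun x => h x * c x) μ) (hc : AEStronglyMeasurable c μ)
    (U : Set ℂ) (hU : IsOpen U) (B : ℂ → ℝ) (hBc : Continuous B)
    (hB : ∀ᵐ x ∂μ, ∀ τ ∈ closure U, ‖Complex.exp (c x * τ)‖ ≤ B τ) :
    DiffContOnCl ℂ (fun τ => ∫ x, h x * Complex.exp (c x * τ) ∂μ) U ∧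
    ∀ τ ∈ closure U, ‖∫ x, h x * Complex.exp (c x * τ) ∂μ‖ ≤ (∫ x, ‖h x‖ ∂μ) * B τ := by
  have hem : ∀ τ : ℂ, AEStronglyMeasurable (fun x => Complex.exp (c x * τ)) μ := fun τ =>
    Complex.continuous_exp.comp_aestronglyMeasurable (hc.mul_const τ)
  have hm : ∀ τ : ℂ, AEStronglyMeasurable (fun x => h x * Complex.exp (c x * τ)) μ := fun τ =>
    hh.1.mul (hem τ)
  have hbd : ∀ τ ∈ closure U, ∀ᵐ x ∂μ, ‖h x * Complex.exp (c x * τ)‖ ≤ ‖h x‖ * B τ := by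
    intro τ hτ
    filter_upwards [hB] with x hx
    rw [norm_mul]
    exact mul_le_mul_of_nonneg_left (hx τ hτ) (norm_nonneg _)
  have hIntg : ∀ τ ∈ closure U, Integrable (fun x => h x * Complex.exp (c x * τ)) μ := fun τ hτ =>
    (hh.norm.mul_const (B τ)).mono' (hm τ) (hbd τ hτ)
  refine ⟨⟨?_, ?_⟩, ?_⟩
  · intro τ hτ
    have hs : U ∩ {z | B z < B τ + 1} ∈ nhds τ := by
      refine Filter.inter_mem (hU.mem_nhds hτ) ?_
      exact (isOpen_lt hBc continuous_const).mem_nhds (by simp)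
    have := hasDerivAt_integral_of_dominated_loc_of_deriv_le (μ := μ) (𝕜 := ℂ)
      (F := fun τ x => h x * Complex.exp (c x * τ))
      (F' := fun τ x => h x * (Complex.exp (c x * τ) * c x))
      (bound := fun x => ‖h x * c x‖ * (B τ + 1)) (x₀ := τ) hs
      (Filter.Eventually.of_forall hm) (hIntg τ (subset_closure hτ))
      (hh.1.mul ((hem τ).mul hc)) ?_ (hch.norm.mul_const _) ?_
    · exact this.2.differentiableAt.differentiableWithinAt
    · filter_upwards [hB] with x hx z hz
      have := hx z (subset_closure hz.1)
      have h2 : B z < B τ + 1 := hz.2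
      rw [norm_mul, norm_mul, norm_mul]
      nlinarith [mul_nonneg (norm_nonneg (h x)) (norm_nonneg (c x))]
    · filter_upwards with x z hz
      have h1 : HasDerivAt (fun z : ℂ => c x * z) (c x) z := by
        simpa using (hasDerivAt_id z).const_mul (c x)
      exact (h1.cexp).const_mul (h x)
  · intro τ hτ
    refine continuousWithinAt_of_dominated (bound := fun x => ‖h x‖ * (B τ + 1))
      (Filter.Eventually.of_forall hm) ?_ (hh.norm.mul_const _) ?_
    · have h1 : ∀ᶠ z in nhdsWithin τ (closure U), B z < B τ + 1 :=
        nhdsWithin_le_nhds ((isOpen_lt hBc continuous_const).mem_nhds (by simp))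
      filter_upwards [h1, self_mem_nhdsWithin] with z hz hz2
      filter_upwards [hbd z hz2] with x hx
      exact hx.trans (mul_le_mul_of_nonneg_left hz.le (norm_nonneg _))
    · filter_upwards with x
      fun_prop
  · intro τ hτ
    rw [← integral_mul_const]
    exact norm_integral_le_of_norm_le (hh.norm.mul_const _) (hbd τ hτ)
structure CoreHyp (φ : ℂ → ℂ) (C : ℝ) : Prop where
  hC : 0 ≤ C
  hc : ContinuousOn φ Complex.slitPlane
  hd : ∀ z ∈ Complex.slitPlane, z ∉ Set.range (fun n : ℤ => (n : ℂ)) → DifferentiableAt ℂ φ z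
  hb1 : ∀ z : ℂ, 1 ≤ |z.im| → ‖φ z‖ ≤ C / ‖z‖ ^ 4
  hb2 : ∀ (N : ℕ) (z : ℂ), z.re = N + 1/2 → ‖φ z‖ ≤ C / ‖z‖ ^ 4

def fe (φ : ℂ → ℂ) (τ z : ℂ) : ℂ := φ z * Complex.exp (-(2 * Real.pi * Complex.I) * z * τ)

lemma norm_ex (z τ : ℂ) : ‖Complex.exp (-(2 * Real.pi * Complex.I) * z * τ)‖ =
    Real.exp (2 * Real.pi * (z.re * τ.im + z.im * τ.re)) := by
  rw [Complex.norm_exp]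
  congr 1
  simp
  ring

lemma fe_norm (φ : ℂ → ℂ) (t : ℝ) (z : ℂ) :
    ‖fe φ t z‖ = ‖φ z‖ * Real.exp (2 * Real.pi * (z.im * t)) := by
  rw [fe, norm_mul, norm_ex]; simp

lemma slit_im (x y : ℝ) (hy : y ≠ 0) : (x + y * Complex.I : ℂ) ∈ Complex.slitPlane := by
  rw [Complex.mem_slitPlane_iff]; right; simpa using hy

lemma slit_re (x y : ℝ) (hy : 0 < x) : (x + y * Complex.I : ℂ) ∈ Complex.slitPlane := by
  rw [Complex.mem_slitPlane_iff]; left; simpa using hy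

lemma fe_cont {φ : ℂ → ℂ} {C : ℝ} (H : CoreHyp φ C) (τ : ℂ) :
    ContinuousOn (fe φ τ) Complex.slitPlane := by
  unfold fe
  exact H.hc.mul (by fun_prop)

lemma fe_rect {φ : ℂ → ℂ} {C : ℝ} (H : CoreHyp φ C) (τ : ℂ) (a b c d : ℝ) (hab : a ≤ b)
    (hcd : c ≤ d) (hs : 0 < a ∨ 0 < c ∨ d < 0) :
    (∫ x : ℝ in a..b, fe φ τ (x + c * Complex.I)) - (∫ x : ℝ in a..b, fe φ τ (x + d * Complex.I)) +
      Complex.I * (∫ y : ℝ in c..d, fe φ τ (b + y * Complex.I)) -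
      Complex.I * (∫ y : ℝ in c..d, fe φ τ (a + y * Complex.I)) = 0 := by
  have key : ∀ z : ℂ, a ≤ z.re → c ≤ z.im → z.im ≤ d → z ∈ Complex.slitPlane := by
    intro z h1 h2 h3
    rw [Complex.mem_slitPlane_iff]
    rcases hs with h | h | h
    · left; linarith
    · right; linarith
    · right; linarith
  have := Complex.integral_boundary_rect_eq_zero_of_differentiable_on_off_countable (fe φ τ)
    (⟨a, c⟩ : ℂ) ⟨b, d⟩ (Set.range (fun n : ℤ => (n : ℂ))) (Set.countable_range _) ?_ ?_
  · simpa using this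
  · refine (fe_cont H τ).mono ?_
    intro z hz
    simp only [Complex.mem_reProdIm, Set.uIcc_of_le hab, Set.uIcc_of_le hcd] at hz
    exact key z hz.1.1 hz.2.1 hz.2.2
  · intro z hz
    obtain ⟨hz, hz2⟩ := hz
    simp only [Complex.mem_reProdIm, min_eq_left hab, max_eq_right hab, min_eq_left hcd,
      max_eq_right hcd] at hz
    have := H.hd z (key z hz.1.1.le hz.2.1.le hz.2.2.le) hz2
    unfold fe
    fun_prop

lemma norm_sq' (x y : ℝ) : ‖(x + y * Complex.I : ℂ)‖ ^ 2 = x ^ 2 + y ^ 2 := by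
  rw [Complex.sq_norm, Complex.normSq_add_mul_I]

lemma norm_sq'' (z : ℂ) : ‖z‖ ^ 2 = z.re ^ 2 + z.im ^ 2 := by
  rw [Complex.sq_norm, Complex.normSq_apply]; ring

lemma phi_bd {φ : ℂ → ℂ} {C : ℝ} (H : CoreHyp φ C) (z : ℂ) (hz : 1 ≤ |z.im|) :
    ‖φ z‖ ≤ C * (1 + z.re ^ 2)⁻¹ ∧ ‖φ z‖ * ‖z‖ ≤ C * (1 + z.re ^ 2)⁻¹ := by
  have h0 := H.hb1 z hz
  have h1 : 1 + z.re ^ 2 ≤ ‖z‖ ^ 2 := by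
    rw [norm_sq'']
    nlinarith [sq_abs z.im]
  have h2 : 1 ≤ ‖z‖ := by
    by_contra h
    push Not at h
    nlinarith [sq_nonneg z.re, norm_nonneg z]
  have hp : 0 < 1 + z.re ^ 2 := by positivity
  have hp0 : 0 < ‖z‖ := by linarith
  have h3 : C / ‖z‖ ^ 4 * ‖z‖ ≤ C * (1 + z.re ^ 2)⁻¹ := by
    have : C / ‖z‖ ^ 4 * ‖z‖ = C * (‖z‖ ^ 3)⁻¹ := by field_simp
    rw [this]
    have hC := H.hC
    gcongr
    calc _ ≤ ‖z‖ ^ 2 := h1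
      _ ≤ ‖z‖ ^ 3 := pow_le_pow_right₀ h2 (by norm_num)
  have h4 : ‖φ z‖ * ‖z‖ ≤ C * (1 + z.re ^ 2)⁻¹ := le_trans (by gcongr) h3
  exact ⟨le_trans (le_mul_of_one_le_right (norm_nonneg _) h2) h4, h4⟩

lemma line_cont {f : ℂ → ℂ} (hf : ContinuousOn f Complex.slitPlane) (y : ℝ) (hy : y ≠ 0) :
    Continuous (fun x : ℝ => f (x + y * Complex.I)) :=
  hf.comp_continuous (by fun_prop) (fun x => slit_im x y hy)

lemma vline_cont {f : ℂ → ℂ} (hf : ContinuousOn f Complex.slitPlane) (x : ℝ) (hx : 0 < x) :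
    Continuous (fun y : ℝ => f (x + y * Complex.I)) :=
  hf.comp_continuous (by fun_prop) (fun y => slit_re x y hx)

lemma phi_int {φ : ℂ → ℂ} {C : ℝ} (H : CoreHyp φ C) (y : ℝ) (hy : 1 ≤ |y|) :
    Integrable (fun x : ℝ => φ (x + y * Complex.I)) ∧
    Integrable (fun x : ℝ => φ (x + y * Complex.I) * (x + y * Complex.I)) := by
  have hy0 : y ≠ 0 := by rintro rfl; norm_num at hy
  have hc := line_cont H.hc y hy0
  have hI : Integrable (fun x : ℝ => C * (1 + x ^ 2)⁻¹) := integrable_inv_one_add_sq.const_mul C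
  have hb := fun x : ℝ => phi_bd H (x + y * Complex.I) (by simpa using hy)
  constructor
  · refine hI.mono' hc.aestronglyMeasurable (Filter.Eventually.of_forall fun x => ?_)
    simpa using (hb x).1
  · refine hI.mono' (hc.mul (by fun_prop)).aestronglyMeasurable (Filter.Eventually.of_forall fun x => ?_)
    rw [norm_mul]
    simpa using (hb x).2

lemma fe_bd {φ : ℂ → ℂ} {C : ℝ} (H : CoreHyp φ C) (t x y : ℝ) (hy : 1 ≤ |y|) :
    ‖fe φ t (x + y * Complex.I)‖ ≤ C * Real.exp (2 * Real.pi * (y * t)) * (1 + x ^ 2)⁻¹ := by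
  rw [fe_norm]
  have := (phi_bd H (x + y * Complex.I) (by simpa using hy)).1
  simp only [Complex.add_re, Complex.ofReal_re, Complex.mul_re, Complex.I_re, mul_zero,
    Complex.ofReal_im, Complex.I_im, mul_one, sub_self, add_zero, Complex.add_im, Complex.mul_im,
    zero_add] at this ⊢
  nlinarith [Real.exp_pos (2 * Real.pi * (y * t))]

lemma fe_int {φ : ℂ → ℂ} {C : ℝ} (H : CoreHyp φ C) (t : ℝ) (y : ℝ) (hy : 1 ≤ |y|) :
    Integrable (fun x : ℝ => fe φ t (x + y * Complex.I)) := by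
  have hy0 : y ≠ 0 := by rintro rfl; norm_num at hy
  refine (integrable_inv_one_add_sq.const_mul (C * Real.exp (2 * Real.pi * (y * t)))).mono'
    (line_cont (fe_cont H _) y hy0).aestronglyMeasurable (Filter.Eventually.of_forall fun x => ?_)
  exact fe_bd H t x y hy

lemma lim_aux (u : ℕ → ℂ) (a b : ℂ) (K : ℝ) (h : Filter.Tendsto u Filter.atTop (nhds a))
    (hb : ∀ N : ℕ, 1 ≤ N → ‖u N - b‖ ≤ K / N) : a = b := by
  refine tendsto_nhds_unique h ?_
  rw [tendsto_iff_norm_sub_tendsto_zero]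
  refine squeeze_zero' (Filter.Eventually.of_forall fun _ => norm_nonneg _)
    (Filter.eventually_atTop.2 ⟨1, fun N hN => hb N hN⟩) ?_
  exact tendsto_const_div_atTop_nhds_zero_nat K
lemma edge_bd {φ : ℂ → ℂ} {C : ℝ} (hC : 0 ≤ C) (t : ℝ) (z : ℂ) (N : ℕ) (hN : 1 ≤ N) (E : ℝ)
    (hz : ‖φ z‖ ≤ C / ‖z‖ ^ 4) (hzN : (N : ℝ) ≤ ‖z‖) (hE : z.im * t ≤ E) :
    ‖fe φ t z‖ ≤ C / (N : ℝ) ^ 4 * Real.exp (2 * Real.pi * E) := by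
  rw [fe_norm]
  have hN' : (0:ℝ) < N := by exact_mod_cast hN
  have hp := Real.pi_pos
  gcongr
  exact hz.trans (by gcongr)

lemma edge_int {f : ℝ → ℂ} {a b K D : ℝ} (N : ℕ) (hN : 1 ≤ N) (hab : a ≤ b) (hK : 0 ≤ K)
    (hD : 0 ≤ D)
    (hl : b - a ≤ D * N) (h : ∀ x, a ≤ x → x ≤ b → ‖f x‖ ≤ K / (N : ℝ) ^ 4) :
    ‖∫ x in a..b, f x‖ ≤ K * D / N := by
  have hN' : (1:ℝ) ≤ N := by exact_mod_cast hN
  have h1 := intervalIntegral.norm_integral_le_of_norm_le_const (a := a) (b := b) (f := f)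
    (C := K / (N:ℝ)^4) (fun x hx => by
      rw [Set.uIoc_of_le hab] at hx
      exact h x hx.1.le hx.2)
  refine h1.trans ?_
  rw [abs_of_nonneg (by linarith)]
  calc K / (N:ℝ)^4 * (b - a) ≤ K / (N:ℝ)^4 * (D * N) := by gcongr
    _ = K * D / (N:ℝ)^3 := by field_simp
    _ ≤ K * D / N := by
      apply div_le_div_of_nonneg_left (by positivity) (by linarith)
      exact le_self_pow₀ hN' (by norm_num)

lemma re_le (x y : ℝ) : |x| ≤ ‖(x + y * Complex.I : ℂ)‖ := by
  simpa using Complex.abs_re_le_norm (x + y * Complex.I : ℂ)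
lemma im_le (x y : ℝ) : |y| ≤ ‖(x + y * Complex.I : ℂ)‖ := by
  simpa using Complex.abs_im_le_norm (x + y * Complex.I : ℂ)

lemma shift_up {φ : ℂ → ℂ} {C : ℝ} (H : CoreHyp φ C) (t y : ℝ) (hy : 1 ≤ y) :
    ∫ x : ℝ, fe φ t (x + (1:ℝ) * Complex.I) = ∫ x : ℝ, fe φ t (x + y * Complex.I) := by
  have hN : Filter.Tendsto (fun N : ℕ => (N : ℝ)) Filter.atTop Filter.atTop :=
    tendsto_natCast_atTop_atTop
  have hN' : Filter.Tendsto (fun N : ℕ => -(N : ℝ)) Filter.atTop Filter.atBot :=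
    Filter.tendsto_neg_atTop_atBot.comp hN
  have h1 := intervalIntegral_tendsto_integral (fe_int H t 1 (by simp)) hN' hN
  have h2 := intervalIntegral_tendsto_integral
    (fe_int H t y (by rw [abs_of_nonneg] <;> linarith)) hN' hN
  set K := C * Real.exp (2 * Real.pi * (y * |t|)) with hK
  have hC := H.hC
  have hK0 : 0 ≤ K := by positivity
  have h3 := lim_aux _ _ 0 (2 * (K * y)) (h1.sub h2) ?_
  · exact sub_eq_zero.1 h3
  · intro N hN1
    have hNp : (1:ℝ) ≤ N := by exact_mod_cast hN1
    have hr := fe_rect H t (-N) N 1 y (by linarith) hy (by right; left; norm_num)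
    have hed : ∀ x : ℝ, |x| = N → ‖∫ s : ℝ in (1:ℝ)..y, fe φ t (x + s * Complex.I)‖ ≤ K * y / N := by
      intro x hx
      refine edge_int N hN1 hy hK0 (by linarith) (by nlinarith) ?_
      intro s hs1 hs2
      refine (edge_bd H.hC t _ N hN1 (y * |t|) (H.hb1 _ ?_) ?_ ?_).trans (le_of_eq ?_)
      · simp [le_abs, hs1]
      · rw [← hx]; exact re_le _ _
      · simp
        exact (le_abs_self _).trans (by rw [abs_mul, abs_of_nonneg (by linarith : 0 ≤ s)]; gcongr)
      · rw [hK]; ring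
    have e1 := hed N (by simp)
    have e2 := hed (-N) (by simp)
    have : (∫ x : ℝ in -(N:ℝ)..N, fe φ t (x + (1:ℝ) * Complex.I)) -
        (∫ x : ℝ in -(N:ℝ)..N, fe φ t (x + y * Complex.I)) - 0 =
        Complex.I * (∫ s : ℝ in (1:ℝ)..y, fe φ t ((-(N:ℝ) : ℝ) + s * Complex.I)) -
        Complex.I * (∫ s : ℝ in (1:ℝ)..y, fe φ t ((N:ℝ) + s * Complex.I)) := by
      linear_combination hr
    rw [this]
    refine (norm_sub_le _ _).trans ?_
    rw [norm_mul, norm_mul, Complex.norm_I, one_mul, one_mul]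
    calc _ ≤ _ := add_le_add e2 e1
      _ = _ := by ring

def GG (φ : ℂ → ℂ) (τ : ℂ) : ℂ :=
  (∫ x : ℝ in Set.Iic (1/2), fe φ τ (x + (1:ℝ) * Complex.I)) -
  (∫ x : ℝ in Set.Iic (1/2), fe φ τ (x + (-1:ℝ) * Complex.I)) -
  Complex.I * ∫ y : ℝ in (-1:ℝ)..1, fe φ τ ((1/2 : ℝ) + y * Complex.I)

lemma shift_down {φ : ℂ → ℂ} {C : ℝ} (H : CoreHyp φ C) (t : ℝ) (ht : 0 ≤ t) :
    ∫ x : ℝ, fe φ t (x + (1:ℝ) * Complex.I) = GG φ t := by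
  have hN : Filter.Tendsto (fun N : ℕ => (N : ℝ) + 1/2) Filter.atTop Filter.atTop :=
    Filter.tendsto_atTop_add_const_right _ _ tendsto_natCast_atTop_atTop
  have hN' : Filter.Tendsto (fun N : ℕ => -(N : ℝ)) Filter.atTop Filter.atBot :=
    Filter.tendsto_neg_atTop_atBot.comp tendsto_natCast_atTop_atTop
  have i1 := fe_int H t 1 (by simp)
  have i2 := fe_int H t (-1) (by simp)
  have h1 := intervalIntegral_tendsto_integral i1 hN' hN
  have h2 := intervalIntegral_tendsto_integral_Iic (1/2) i1.integrableOn hN'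
  have h3 := intervalIntegral_tendsto_integral_Iic (1/2) i2.integrableOn hN'
  set K := C * Real.exp (2 * Real.pi * t) with hK
  have hC := H.hC
  have hK0 : 0 ≤ K := by positivity
  have h4 := lim_aux _ _ (-(Complex.I * ∫ y : ℝ in (-1:ℝ)..1, fe φ t ((1/2 : ℝ) + y * Complex.I)))
    (4 * (K * 3)) ((h1.sub h2).add h3) ?_
  · rw [GG]
    linear_combination h4
  · intro N hN1
    have hNp : (1:ℝ) ≤ N := by exact_mod_cast hN1
    have hA := fe_rect H t (1/2) (N+1/2) (-N) 1 (by linarith) (by linarith) (by left; norm_num)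
    have hB := fe_rect H t (-N) (1/2) (-N) (-1) (by linarith) (by linarith)
      (by right; right; norm_num)
    have vc := (vline_cont (fe_cont H t) (1/2) (by norm_num))
    have hadd := intervalIntegral.integral_add_adjacent_intervals
      (vc.intervalIntegrable (μ := volume) (-N) (-1)) (vc.intervalIntegrable (-1) 1)
    have hadd2 := intervalIntegral.integral_add_adjacent_intervals
      (i1.intervalIntegrable (a := -(N:ℝ)) (b := 1/2)) (i1.intervalIntegrable (a := 1/2) (b := N+1/2))
    have e1 : ∀ a b : ℝ, a ≤ b → b - a ≤ 3 * N →
        ‖∫ x : ℝ in a..b, fe φ t (x + (-N:ℝ) * Complex.I)‖ ≤ K * 3 / N := by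
      intro a b hab hl
      refine edge_int N hN1 hab hK0 (by norm_num) hl ?_
      intro s hs1 hs2
      refine (edge_bd H.hC t _ N hN1 t (H.hb1 _ ?_) ?_ ?_).trans (le_of_eq ?_)
      · simpa using hNp
      · have := im_le s (-N)
        simpa using this
      · simp; nlinarith
      · rw [hK]; ring
    have e2 : ‖∫ y : ℝ in -(N:ℝ)..1, fe φ t ((N+1/2:ℝ) + y * Complex.I)‖ ≤ K * 3 / N := by
      refine edge_int N hN1 (by linarith) hK0 (by norm_num) (by linarith) ?_
      intro s hs1 hs2
      refine (edge_bd H.hC t _ N hN1 t (H.hb2 N _ ?_) ?_ ?_).trans (le_of_eq ?_)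
      · simp
      · have := re_le (N+1/2) s
        rw [abs_of_nonneg (by linarith)] at this
        linarith
      · simp; nlinarith
      · rw [hK]; ring
    have e3 : ‖∫ y : ℝ in -(N:ℝ)..(-1), fe φ t ((-N:ℝ) + y * Complex.I)‖ ≤ K * 3 / N := by
      refine edge_int N hN1 (by linarith) hK0 (by norm_num) (by linarith) ?_
      intro s hs1 hs2
      refine (edge_bd H.hC t _ N hN1 t (H.hb1 _ ?_) ?_ ?_).trans (le_of_eq ?_)
      · simp [le_abs]; right; linarith
      · have := re_le (-N) s
        simpa using this
      · simp; nlinarith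
      · rw [hK]; ring
    have e4 := e1 (-N) (1/2) (by linarith) (by linarith)
    have e5 := e1 (1/2) (N+1/2) (by linarith) (by linarith)
    rw [← hadd2]
    rw [← hadd] at hA
    have : ∀ A B C' D E F : ℂ, A = B + C' + Complex.I * D - Complex.I * E →
       ‖B‖ ≤ K*3/N → ‖C'‖ ≤ K*3/N → ‖D‖ ≤ K*3/N → ‖E‖ ≤ K*3/N → ‖A‖ ≤ 4 * (K*3) / N := by
      intro A B C' D E F hA hB hC hD hE
      rw [hA]
      have := norm_sub_le (B + C' + Complex.I * D) (Complex.I * E)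
      have h5 := norm_add₃_le (a := B) (b := C') (c := Complex.I * D)
      rw [norm_mul, Complex.norm_I, one_mul] at this h5
      have : 4 * (K*3) / N = K*3/N + K*3/N + K*3/N + K*3/N := by ring
      linarith
    refine this _ _ _ _ _ 0 ?_ e4 e5 e2 e3
    linear_combination -hA - hB
lemma closure_strip : closure (Complex.im ⁻¹' Set.Ioo 0 Real.pi) = Complex.im ⁻¹' Set.Icc 0 Real.pi := by
  rw [Complex.closure_preimage_im, closure_Ioo Real.pi_pos.ne]

lemma piece (μ : Measure ℝ) (φ : ℂ → ℂ) (γ : ℝ → ℂ) (hγ : Continuous γ)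
    (h1 : Integrable (fun x => φ (γ x)) μ) (h2 : Integrable (fun x => φ (γ x) * γ x) μ)
    (hb : ∀ᵐ x ∂μ, (γ x).re ≤ 1/2 ∧ |(γ x).im| ≤ 1) :
    DiffContOnCl ℂ (fun τ => ∫ x, fe φ τ (γ x) ∂μ) (Complex.im ⁻¹' Set.Ioo 0 Real.pi) ∧
    ∃ D : ℝ, 0 ≤ D ∧ ∀ τ : ℂ, 0 ≤ τ.im → τ.im ≤ Real.pi →
      ‖∫ x, fe φ τ (γ x) ∂μ‖ ≤ D * Real.exp (2 * Real.pi * |τ.re|) := by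
  have hp := Real.pi_pos
  have := param_int μ (fun x => φ (γ x)) (fun x => -(2 * Real.pi * Complex.I) * γ x) h1
    (by
      have := h2.const_mul (-(2 * Real.pi * Complex.I))
      refine this.congr (Filter.Eventually.of_forall fun x => ?_)
      simp only
      ring) (by fun_prop) (Complex.im ⁻¹' Set.Ioo 0 Real.pi)
    (isOpen_Ioo.preimage Complex.continuous_im)
    (fun τ => Real.exp (Real.pi ^ 2) * Real.exp (2 * Real.pi * |τ.re|)) (by fun_prop)
    (by
      filter_upwards [hb] with x hx τ hτ
      rw [closure_strip] at hτ
      rw [norm_ex, ← Real.exp_add]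
      apply Real.exp_le_exp.2
      have h3 : (γ x).re * τ.im ≤ 1/2 * Real.pi := by
        have h0 : 0 ≤ τ.im := hτ.1
        have h0' : τ.im ≤ Real.pi := hτ.2
        nlinarith [hx.1]
      have h4 : (γ x).im * τ.re ≤ |τ.re| := by
        refine (le_abs_self _).trans ?_
        rw [abs_mul]
        nlinarith [hx.2, abs_nonneg τ.re]
      nlinarith)
  refine ⟨this.1, (∫ x, ‖φ (γ x)‖ ∂μ) * Real.exp (Real.pi ^ 2), by positivity, ?_⟩
  intro τ h0 h1
  refine (this.2 τ ?_).trans (le_of_eq (by ring))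
  rw [closure_strip]
  exact ⟨h0, h1⟩

lemma GG_prop {φ : ℂ → ℂ} {C : ℝ} (H : CoreHyp φ C) :
    DiffContOnCl ℂ (GG φ) (Complex.im ⁻¹' Set.Ioo 0 Real.pi) ∧
    ∃ D : ℝ, 0 ≤ D ∧ ∀ τ : ℂ, 0 ≤ τ.im → τ.im ≤ Real.pi →
      ‖GG φ τ‖ ≤ D * Real.exp (2 * Real.pi * |τ.re|) := by
  obtain ⟨a1, D1, hD1, b1⟩ := piece (volume.restrict (Set.Iic (1/2))) φ
    (fun x : ℝ => x + (1:ℝ) * Complex.I) (by fun_prop)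
    (phi_int H 1 (by simp)).1.restrict (phi_int H 1 (by simp)).2.restrict
    (by
      filter_upwards [ae_restrict_mem measurableSet_Iic] with x hx
      simpa using hx)
  obtain ⟨a2, D2, hD2, b2⟩ := piece (volume.restrict (Set.Iic (1/2))) φ
    (fun x : ℝ => x + (-1:ℝ) * Complex.I) (by fun_prop)
    (phi_int H (-1) (by simp)).1.restrict (phi_int H (-1) (by simp)).2.restrict
    (by
      filter_upwards [ae_restrict_mem measurableSet_Iic] with x hx
      simpa using hx)
  have vc := vline_cont H.hc (1/2) (by norm_num)
  obtain ⟨a3, D3, hD3, b3⟩ := piece (volume.restrict (Set.Ioc (-1) 1)) φ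
    (fun x : ℝ => (1/2:ℝ) + x * Complex.I) (by fun_prop)
    ((vc.integrableOn_Icc (a := -1) (b := 1)).mono_set Set.Ioc_subset_Icc_self)
    (((vc.mul (by fun_prop : Continuous fun x : ℝ => ((1/2:ℝ) + x * Complex.I : ℂ))).integrableOn_Icc
      (a := -1) (b := 1)).mono_set Set.Ioc_subset_Icc_self)
    (by
      filter_upwards [ae_restrict_mem measurableSet_Ioc] with x hx
      have : |x| ≤ 1 := abs_le.2 ⟨hx.1.le, hx.2⟩
      simpa using this)
  have hGG : ∀ τ, GG φ τ = (∫ x : ℝ in Set.Iic (1/2), fe φ τ (x + (1:ℝ) * Complex.I)) -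
     (∫ x : ℝ in Set.Iic (1/2), fe φ τ (x + (-1:ℝ) * Complex.I)) -
    Complex.I * ∫ y : ℝ in Set.Ioc (-1:ℝ) 1, fe φ τ ((1/2 : ℝ) + y * Complex.I) := by
    intro τ
    rw [GG, intervalIntegral.integral_of_le (by norm_num)]
  constructor
  · have := (a1.sub a2).sub (a3.const_smul Complex.I)
    convert this using 1
    ext τ
    rw [hGG]
    simp
  · refine ⟨D1 + D2 + D3, by positivity, fun τ h0 h1 => ?_⟩
    rw [hGG]
    have c1 := b1 τ h0 h1
    have c2 := b2 τ h0 h1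
    have c3 := b3 τ h0 h1
    refine (norm_sub_le _ _).trans ?_
    rw [norm_mul, Complex.norm_I, one_mul]
    have := norm_sub_le (∫ x : ℝ in Set.Iic (1/2), fe φ τ (x + (1:ℝ) * Complex.I))
      (∫ x : ℝ in Set.Iic (1/2), fe φ τ (x + (-1:ℝ) * Complex.I))
    linarith

lemma core {φ : ℂ → ℂ} {C : ℝ} (H : CoreHyp φ C)
    (b p : ℕ → ℝ) (hb : ∀ k, 0 ≤ b k) (hp : ∀ k, 0 < p k)
    (hp2 : ∀ k, p k ≤ 1/2) (hbp : ¬ Summable fun k => b k * p k)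
    (hb3 : ∀ (A : Finset ℕ) (z : ℂ), z.im = 1 + (∑ k ∈ A, b k / p k) / (4 * Real.pi) →
      ‖φ z‖ ≤ C / ‖z‖ ^ 4 * Real.exp (-(∑ k ∈ A, b k) / 2)) (x : ℝ) :
    φ (x + (1:ℝ) * Complex.I) = 0 := by
  have hpi := Real.pi_pos
  obtain ⟨g1, D, hD, g2⟩ := GG_prop H
  have hC := H.hC
  set D' := D + C * Real.pi with hD'
  have hL : ∀ (y : ℝ), 1 ≤ y → ∀ (E : ℝ), 0 ≤ E → (∀ z : ℂ, z.im = y → ‖φ z‖ ≤ C / ‖z‖^4 * E) →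
     ∀ t : ℝ, ‖∫ x : ℝ, fe φ t (x + y * Complex.I)‖ ≤
       C * Real.pi * E * Real.exp (2 * Real.pi * (y * t)) := by
    intro y hy E hE hz t
    have hI := integrable_inv_one_add_sq.const_mul (C * E * Real.exp (2 * Real.pi * (y * t)))
    have := norm_integral_le_of_norm_le (f := fun x : ℝ => fe φ t (x + y * Complex.I)) hI
      (Filter.Eventually.of_forall fun x => ?_)
    · rw [integral_const_mul, integral_univ_inv_one_add_sq] at this
      refine this.trans (le_of_eq (by ring))
    · rw [fe_norm]
      have h1 := hz (x + y * Complex.I) (by simp)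
      have h2 : 1 + x ^ 2 ≤ ‖(x + y * Complex.I : ℂ)‖ ^ 4 := by
        have : ‖(x + y * Complex.I : ℂ)‖ ^ 4 = (‖(x + y * Complex.I : ℂ)‖ ^ 2)^2 := by ring
        rw [this, norm_sq']
        have hq : 1 ≤ y ^ 2 := by nlinarith
        nlinarith [sq_nonneg x]
      have h3 : C / ‖(x + y * Complex.I : ℂ)‖ ^ 4 * E ≤ C * (1 + x^2)⁻¹ * E := by
        rw [div_eq_mul_inv]
        gcongr
      have h4 : (x + y * Complex.I : ℂ).im = y := by simp
      rw [h4]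
      calc _ ≤ C * (1 + x^2)⁻¹ * E * Real.exp (2 * Real.pi * (y * t)) := by
            gcongr; exact h1.trans h3
        _ = _ := by ring
  have hG0 : ∀ t : ℝ, GG φ t = 0 := by
    refine strip_zero (GG φ) b p hb hp hp2 hbp g1 D' (2 * Real.pi) (by positivity) (by positivity)
      ?_ ?_
    · intro τ h0 h1
      refine (g2 τ h0 h1).trans ?_
      have : D ≤ D' := by rw [hD']; nlinarith
      gcongr
    · intro t ht A
      rw [← shift_down H t ht.le]
      set S := ∑ k ∈ A, b k / p k with hS
      have hS0 : 0 ≤ S := Finset.sum_nonneg fun k _ => div_nonneg (hb k) (hp k).le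
      have hy : 1 ≤ 1 + S / (4 * Real.pi) := by
        have : 0 ≤ S / (4 * Real.pi) := by positivity
        linarith
      rw [shift_up H t _ hy]
      refine (hL _ hy _ (Real.exp_nonneg _) (hb3 A) t).trans ?_
      have e : ∑ k ∈ A, b k * (1 - t / p k) = ∑ k ∈ A, b k - S * t := by
        rw [hS, Finset.sum_mul, ← Finset.sum_sub_distrib]
        refine Finset.sum_congr rfl fun k _ => ?_
        ring
      rw [e, mul_assoc, ← Real.exp_add]
      have e2 : -(∑ k ∈ A, b k) / 2 + 2 * Real.pi * ((1 + S / (4 * Real.pi)) * t) =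
          2 * Real.pi * t - (∑ k ∈ A, b k - S * t) / 2 := by
        field_simp
        ring
      rw [e2]
      have : C * Real.pi ≤ D' := by rw [hD']; linarith
      gcongr
  have hL0 : ∀ t : ℝ, ∫ x : ℝ, fe φ t (x + (1:ℝ) * Complex.I) = 0 := by
    intro t
    rcases le_or_gt 0 t with ht | ht
    · rw [shift_down H t ht, hG0]
    · have hlim : Filter.Tendsto (fun y : ℝ => C * Real.pi * 1 * Real.exp (2 * Real.pi * (y * t)))
          Filter.atTop (nhds (C * Real.pi * 1 * 0)) := by
        apply Filter.Tendsto.const_mul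
        apply Real.tendsto_exp_atBot.comp
        apply Filter.Tendsto.const_mul_atBot (by positivity)
        exact Filter.Tendsto.atTop_mul_const_of_neg ht Filter.tendsto_id
      rw [mul_zero] at hlim
      have : ‖∫ x : ℝ, fe φ t (x + (1:ℝ) * Complex.I)‖ ≤ 0 := by
        refine ge_of_tendsto hlim ?_
        filter_upwards [Filter.eventually_ge_atTop 1] with y hy
        rw [shift_up H t y hy]
        refine hL y hy 1 (by norm_num) (fun z hz => ?_) t
        rw [mul_one]
        exact H.hb1 z (by rw [hz]; exact le_abs.2 (Or.inl hy))
      exact norm_le_zero_iff.1 this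
  set u : ℝ → ℂ := fun x => φ (x + (1:ℝ) * Complex.I) with hu
  have hF : FourierTransform.fourier u = 0 := by
    ext t
    rw [Real.fourier_real_eq_integral_exp_smul]
    have h1 := hL0 t
    have h2 : ∀ v : ℝ, Complex.exp (↑(-2 * Real.pi * v * t) * Complex.I) • u v =
        Complex.exp (-2 * Real.pi * t) * fe φ t (v + (1:ℝ) * Complex.I) := by
      intro v
      rw [fe, hu, smul_eq_mul, mul_comm, mul_left_comm, ← Complex.exp_add]
      congr 2
      push_cast
      linear_combination (2 * Real.pi * t : ℂ) * Complex.I_sq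
    simp only [h2]
    rw [integral_const_mul, h1]
    simp
  have hinv := Continuous.fourierInv_fourier_eq (line_cont H.hc 1 (by norm_num) : Continuous u)
    (phi_int H 1 (by simp)).1 (by rw [hF]; exact integrable_zero _ _ _)
  rw [hF] at hinv
  have := congrFun hinv x
  refine Eq.trans this.symm ?_
  rw [Real.fourierInv_eq_fourier_neg, Real.fourier_real_eq_integral_exp_smul]
  simp
def hs (z : ℂ) : ℂ := Complex.exp (Complex.log z / 2)

lemma hs_sq {z : ℂ} (hz : z ∈ Complex.slitPlane) : hs z ^ 2 = z := by
  rw [hs, ← Complex.exp_nat_mul]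
  push_cast
  rw [mul_div_cancel₀ _ two_ne_zero, Complex.exp_log (Complex.slitPlane_ne_zero hz)]

lemma hs_re {z : ℂ} (hz : z ∈ Complex.slitPlane) : 0 < (hs z).re := by
  rw [hs, Complex.exp_re]
  refine mul_pos (Real.exp_pos _) (Real.cos_pos_of_mem_Ioo ?_)
  have h1 := Complex.neg_pi_lt_arg z
  have h2 := Complex.arg_le_pi z
  have h3 := Complex.slitPlane_arg_ne_pi hz
  have h4 := lt_of_le_of_ne h2 h3
  have h5 : (Complex.log z / 2).im = z.arg / 2 := by
    rw [show (2:ℂ) = ((2:ℝ):ℂ) by norm_num, Complex.div_ofReal_im, Complex.log_im]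
  rw [h5]
  constructor <;> linarith

lemma hs_diff : DifferentiableOn ℂ hs Complex.slitPlane := by
  intro z hz
  refine DifferentiableAt.differentiableWithinAt ?_
  unfold hs
  have := Complex.differentiableAt_log hz
  fun_prop

lemma hs_real {x : ℝ} (hx : 0 < x) : hs x = (Real.sqrt x : ℂ) := by
  rw [hs, ← Complex.ofReal_log hx.le]
  have : Real.sqrt x = Real.exp (Real.log x / 2) := by
    rw [Real.exp_half, Real.exp_log hx]
  rw [this]
  push_cast
  rfl

def fg (γ : ℝ) (z : ℂ) : ℂ := -(2 * hs z) / (Real.sqrt γ + hs z)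

lemma den_bd {γ : ℝ} {z : ℂ} (hz : z ∈ Complex.slitPlane) :
    Real.sqrt γ < ‖(Real.sqrt γ + hs z : ℂ)‖ := by
  have := Complex.re_le_norm (Real.sqrt γ + hs z : ℂ)
  simp only [Complex.add_re, Complex.ofReal_re] at this
  linarith [hs_re hz]

lemma den_ne {γ : ℝ} {z : ℂ} (hz : z ∈ Complex.slitPlane) :
    (Real.sqrt γ + hs z : ℂ) ≠ 0 := by
  rw [← norm_pos_iff]
  exact (Real.sqrt_nonneg γ).trans_lt (den_bd hz)

lemma fg_eq {γ : ℝ} {z : ℂ} (hz : z ∈ Complex.slitPlane) :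
    1 + fg γ z = (Real.sqrt γ - hs z) / (Real.sqrt γ + hs z) := by
  have := den_ne (γ := γ) hz
  rw [fg]
  field_simp
  ring

lemma fg_norm {γ : ℝ} {z : ℂ} (hz : z ∈ Complex.slitPlane) (hγ : 0 < γ) :
    ‖fg γ z‖ ≤ 2 * ‖hs z‖ * (1 / Real.sqrt γ) := by
  have h1 := den_bd (γ := γ) hz
  have h2 := Real.sqrt_pos.2 hγ
  rw [fg, norm_div, norm_neg, norm_mul, Complex.norm_ofNat, div_eq_mul_one_div]
  gcongr

lemma one_fg_norm {γ : ℝ} {z : ℂ} (hz : z ∈ Complex.slitPlane) : ‖1 + fg γ z‖ ≤ 1 := by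
  rw [fg_eq hz, norm_div]
  refine div_le_one_of_le₀ ?_ (norm_nonneg _)
  refine le_of_sq_le_sq ?_ (norm_nonneg _)
  rw [norm_sq'', norm_sq'']
  simp
  nlinarith [hs_re hz, Real.sqrt_nonneg γ]

lemma M_exists (Γ : Set ℕ) (hΓ0 : 0 ∉ Γ)
    (hsum : Summable fun γ : Γ => 1 / Real.sqrt (γ : ℝ)) :
    ∃ M : ℂ → ℂ, DifferentiableOn ℂ M Complex.slitPlane ∧
      (∀ z ∈ Complex.slitPlane, ‖M z‖ ≤ 1) ∧ (∀ γ ∈ Γ, M (γ : ℂ) = 0) ∧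
      (∀ z : ℂ, z.im ≠ 0 → M z ≠ 0) := by
  have hpos : ∀ γ : Γ, (0:ℝ) < (γ : ℕ) := fun γ => by
    have : (γ : ℕ) ≠ 0 := fun h => hΓ0 (h ▸ γ.2)
    exact_mod_cast Nat.pos_of_ne_zero this
  have hsm : ∀ z ∈ Complex.slitPlane, Summable fun γ : Γ => ‖fg (γ : ℕ) z‖ := fun z hz =>
    Summable.of_nonneg_of_le (fun _ => norm_nonneg _) (fun γ => fg_norm hz (hpos γ))
      (hsum.mul_left _)
  have hfd : ∀ γ : ℝ, DifferentiableOn ℂ (fg γ) Complex.slitPlane := by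
    intro γ
    unfold fg
    exact ((hs_diff.const_mul 2).neg).div (hs_diff.const_add _) fun z hz => den_ne hz
  refine ⟨fun z => ∏' γ : Γ, (1 + fg (γ : ℕ) z), ?_, ?_, ?_, ?_⟩
  · intro z hz
    set K := Complex.slitPlane ∩ Metric.ball (0:ℂ) (‖z‖ + 1) with hK
    have hKo : IsOpen K := Complex.isOpen_slitPlane.inter Metric.isOpen_ball
    have h1 := Summable.hasProdLocallyUniformlyOn_one_add (K := K) hKo
      (f := fun (γ : Γ) z => fg (γ : ℕ) z)
      (u := fun γ : Γ => 2 * (‖z‖ + 2) * (1 / Real.sqrt (γ : ℝ)))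
      (hsum.mul_left _) (Filter.Eventually.of_forall fun γ x hx => ?_)
      (fun γ => (hfd _).continuousOn.mono Set.inter_subset_left)
    · have h2 := h1.differentiableOn (Filter.Eventually.of_forall fun s => ?_) hKo
      · refine (h2.differentiableAt (hKo.mem_nhds ⟨hz, by simp⟩)).differentiableWithinAt
      · simpa [Finset.prod_fn] using DifferentiableOn.finsetProd
          (fun (i : Γ) _ => ((hfd (i:ℕ)).mono Set.inter_subset_left).const_add 1)
    · refine (fg_norm hx.1 (hpos γ)).trans ?_
      have h3 : ‖hs x‖ ^ 2 = ‖x‖ := by rw [← norm_pow, hs_sq hx.1]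
      have h4 : ‖x‖ < ‖z‖ + 1 := by simpa using hx.2
      have h5 : ‖hs x‖ ≤ ‖z‖ + 2 := by nlinarith [norm_nonneg z, norm_nonneg (hs x)]
      gcongr
  · intro z hz
    have h1 := multipliable_one_add_of_summable (hsm z hz)
    have h2 := h1.hasProd
    refine le_of_tendsto h2.norm (Filter.Eventually.of_forall fun s => ?_)
    exact Finset.prod_le_one (fun _ _ => norm_nonneg _) fun _ _ => one_fg_norm hz
  · intro γ hγ
    refine tprod_of_exists_eq_zero ⟨⟨γ, hγ⟩, ?_⟩
    have h0 := hpos ⟨γ, hγ⟩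
    have : (γ : ℂ) ∈ Complex.slitPlane := by
      rw [Complex.mem_slitPlane_iff]; left; simpa using h0
    rw [fg_eq this]
    have h3 := hs_real h0
    simp only [Complex.ofReal_natCast] at h3
    rw [h3]
    simp
  · intro z hz
    have hz' : z ∈ Complex.slitPlane := by rw [Complex.mem_slitPlane_iff]; right; exact hz
    refine tprod_one_add_ne_zero_of_summable (fun γ => ?_) (hsm z hz')
    rw [fg_eq hz']
    refine div_ne_zero (fun h => hz ?_) (den_ne hz')
    have h1 : hs z = (Real.sqrt (γ:ℕ) : ℂ) := (sub_eq_zero.1 h).symm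
    rw [← hs_sq hz', h1, ← Complex.ofReal_pow, Complex.ofReal_im]
def EE (z : ℂ) : ℂ := Complex.exp (2 * Real.pi * Complex.I * z) - 1

lemma EE_deriv (z : ℂ) :
    HasDerivAt EE (Complex.exp (2 * Real.pi * Complex.I * z) * (2 * Real.pi * Complex.I)) z := by
  have h1 : HasDerivAt (fun z : ℂ => 2 * Real.pi * Complex.I * z) (2 * Real.pi * Complex.I) z := by
    simpa using (hasDerivAt_id z).const_mul (2 * Real.pi * Complex.I : ℂ)
  exact h1.cexp.sub_const 1

lemma EE_deriv_ne (z : ℂ) :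
    Complex.exp (2 * Real.pi * Complex.I * z) * (2 * Real.pi * Complex.I) ≠ 0 :=
  mul_ne_zero (Complex.exp_ne_zero _) Complex.two_pi_I_ne_zero

lemma EE_zero (z : ℂ) : EE z = 0 ↔ ∃ n : ℤ, z = n := by
  rw [EE, sub_eq_zero, Complex.exp_eq_one_iff]
  refine exists_congr fun n => ?_
  rw [mul_comm (n : ℂ), mul_right_inj' Complex.two_pi_I_ne_zero]

lemma EE_exp_norm (z : ℂ) : ‖Complex.exp (2 * Real.pi * Complex.I * z)‖ =
    Real.exp (-(2 * Real.pi * z.im)) := by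
  rw [Complex.norm_exp]
  congr 1
  simp

lemma EE_bd1 (z : ℂ) (hz : 1 ≤ |z.im|) :
    max 1 (Real.exp (-(2 * Real.pi * z.im))) / 2 ≤ ‖EE z‖ := by
  have hp := Real.pi_gt_three
  rcases le_abs.1 hz with h | h
  · have h1 : Real.exp (-(2 * Real.pi * z.im)) ≤ 1/2 := by
      have h2 : 2 ≤ Real.exp (2 * Real.pi * z.im) := by
        have := Real.add_one_le_exp (2 * Real.pi * z.im)
        nlinarith
      rw [Real.exp_neg, one_div]
      exact inv_anti₀ (by norm_num) h2
    rw [max_eq_left (by linarith), EE]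
    have := norm_sub_norm_le (1:ℂ) (Complex.exp (2 * Real.pi * Complex.I * z))
    rw [EE_exp_norm, norm_one, norm_sub_rev] at this
    linarith
  · have h1 : 2 ≤ Real.exp (-(2 * Real.pi * z.im)) := by
      have := Real.add_one_le_exp (-(2 * Real.pi * z.im))
      nlinarith
    rw [max_eq_right (by linarith), EE]
    have := norm_sub_norm_le (Complex.exp (2 * Real.pi * Complex.I * z)) (1:ℂ)
    rw [EE_exp_norm, norm_one] at this
    linarith

lemma EE_bd2 (N : ℕ) (z : ℂ) (hz : z.re = N + 1/2) :
    max 1 (Real.exp (-(2 * Real.pi * z.im))) / 2 ≤ ‖EE z‖ := by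
  have h1 : Complex.exp (2 * Real.pi * Complex.I * z) =
      -((Real.exp (-(2 * Real.pi * z.im)) : ℝ) : ℂ) := by
    have h0 : z = (N + 1/2 : ℂ) + z.im * Complex.I := by
      conv_lhs => rw [← Complex.re_add_im z, hz]
      push_cast; rfl
    have h2 : 2 * Real.pi * Complex.I * z = ((-(2 * Real.pi * z.im) : ℝ) : ℂ) +
        (N * (2 * Real.pi * Complex.I) + Real.pi * Complex.I) := by
      conv_lhs => rw [h0]
      push_cast
      linear_combination (2 * Real.pi * z.im : ℂ) * Complex.I_sq
    rw [h2, Complex.exp_add, Complex.exp_add, Complex.exp_nat_mul_two_pi_mul_I,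
      Complex.exp_pi_mul_I, Complex.ofReal_exp]
    ring
  rw [EE, h1]
  have h3 : (-((Real.exp (-(2 * Real.pi * z.im)) : ℝ) : ℂ) - 1) =
      ((-(Real.exp (-(2 * Real.pi * z.im)) + 1) : ℝ) : ℂ) := by push_cast; ring
  rw [h3, Complex.norm_real, norm_neg, Real.norm_eq_abs]
  have := Real.exp_pos (-(2 * Real.pi * z.im))
  rw [abs_of_pos (by linarith)]
  have : max 1 (Real.exp (-(2 * Real.pi * z.im))) ≤ Real.exp (-(2 * Real.pi * z.im)) + 1 :=
    max_le (by linarith) (by linarith)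
  linarith

open Classical in
def qphi (P : ℂ → ℂ) (z : ℂ) : ℂ :=
  (if EE z = 0 then deriv P z / deriv EE z else P z / EE z) / z ^ 4

lemma EE_cont : Continuous EE := by unfold EE; fun_prop

lemma qphi_diff {P : ℂ → ℂ} {z : ℂ} (hP : DifferentiableAt ℂ P z) (hz : EE z ≠ 0) (hz0 : z ≠ 0) :
    DifferentiableAt ℂ (qphi P) z := by
  have h1 : DifferentiableAt ℂ (fun z => P z / EE z / z ^ 4) z :=
    (hP.div (EE_deriv z).differentiableAt hz).div (by fun_prop) (pow_ne_zero _ hz0)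
  refine h1.congr_of_eventuallyEq ?_
  filter_upwards [EE_cont.continuousAt.eventually_ne hz] with x hx
  simp [qphi, hx]

lemma qphi_cont {P : ℂ → ℂ} {z : ℂ} (hP : DifferentiableAt ℂ P z) (hz : EE z = 0) (hz0 : z ≠ 0)
    (hPz : P z = 0) : ContinuousAt (qphi P) z := by
  have hne : deriv EE z ≠ 0 := by rw [(EE_deriv z).deriv]; exact EE_deriv_ne z
  have h1 : ContinuousAt (fun x => dslope P z x / dslope EE z x / x ^ 4) z := by
    refine ContinuousAt.div (ContinuousAt.div ?_ ?_ ?_) (by fun_prop) (pow_ne_zero _ hz0)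
    · exact continuousAt_dslope_same.2 hP
    · exact continuousAt_dslope_same.2 (EE_deriv z).differentiableAt
    · rw [dslope_same]; exact hne
  refine h1.congr ?_
  have h2 : ∀ᶠ x in nhdsWithin z {z}ᶜ, EE x ≠ 0 :=
    (EE_deriv z).eventually_ne (EE_deriv_ne z)
  rw [eventually_nhdsWithin_iff] at h2
  filter_upwards [h2] with x hx
  by_cases hxz : x = z
  · subst hxz
    simp [qphi, hz, dslope_same]
  · have h3 := hx hxz
    have h4 : x - z ≠ 0 := sub_ne_zero.2 hxz
    simp only [qphi, h3, if_false]
    rw [dslope_of_ne _ hxz, dslope_of_ne _ hxz, slope_def_field, slope_def_field, hPz, hz,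
      sub_zero, sub_zero]
    field_simp

lemma phi_core (Γ : Set ℕ) (hΓ0 : 0 ∉ Γ)
    (hsum : Summable fun γ : Γ => 1 / Real.sqrt (γ : ℝ)) (F : ℂ → ℂ) (hFd : Differentiable ℂ F)
    (J : ℝ) (hJ : 0 ≤ J) (hFb : ∀ z : ℂ, ‖F z‖ ≤ J * max 1 (Real.exp (-(2 * Real.pi * z.im))))
    (hF0 : ∀ n : ℕ, 1 ≤ n → n ∉ Γ → F n = 0)
    (b p : ℕ → ℝ) (hb : ∀ k, 0 ≤ b k) (hp : ∀ k, 0 < p k)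
    (hp2 : ∀ k, p k ≤ 1/2) (hbp : ¬ Summable fun k => b k * p k)
    (hb3 : ∀ (A : Finset ℕ) (z : ℂ), z.im = 1 + (∑ k ∈ A, b k / p k) / (4 * Real.pi) →
      ‖F z‖ ≤ J * Real.exp (-(∑ k ∈ A, b k) / 2)) (x : ℝ) :
    F (x + (1:ℝ) * Complex.I) = 0 := by
  obtain ⟨M, hMd, hM1, hM0, hMne⟩ := M_exists Γ hΓ0 hsum
  set P : ℂ → ℂ := fun z => M z * F z with hPdef
  have hPd : ∀ z ∈ Complex.slitPlane, DifferentiableAt ℂ P z := fun z hz =>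
    (hMd.differentiableAt (Complex.isOpen_slitPlane.mem_nhds hz)).mul (hFd z)
  have hP0 : ∀ z ∈ Complex.slitPlane, EE z = 0 → P z = 0 := by
    intro z hz h0
    obtain ⟨n, rfl⟩ := (EE_zero z).1 h0
    have hn : 0 < n := by
      rw [Complex.mem_slitPlane_iff] at hz
      simpa using hz
    lift n to ℕ using hn.le
    simp only [hPdef, Int.cast_natCast]
    by_cases hΓ : n ∈ Γ
    · rw [hM0 n hΓ, zero_mul]
    · rw [hF0 n (by omega) hΓ, mul_zero]
  have hfin : ∀ (z : ℂ) (R : ℝ), z ∈ Complex.slitPlane →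
      max 1 (Real.exp (-(2 * Real.pi * z.im))) / 2 ≤ ‖EE z‖ →
      ‖F z‖ ≤ J * R * max 1 (Real.exp (-(2 * Real.pi * z.im))) → 
      ‖qphi P z‖ ≤ 2 * J / ‖z‖ ^ 4 * R := by
    intro z R hz hE hF
    have hm : 1 ≤ max 1 (Real.exp (-(2 * Real.pi * z.im))) := le_max_left _ _
    have hE0 : 0 < ‖EE z‖ := by linarith
    have hEn : EE z ≠ 0 := norm_pos_iff.1 hE0
    have hz0 : 0 < ‖z‖ := norm_pos_iff.2 (Complex.slitPlane_ne_zero hz)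
    rw [qphi, if_neg hEn, norm_div, norm_div, norm_pow]
    have h1 : ‖P z‖ ≤ ‖F z‖ := by
      simp only [hPdef, norm_mul]
      nlinarith [hM1 z hz, norm_nonneg (F z)]
    have hJR : 0 ≤ J * R := by
      by_contra h
      push Not at h
      nlinarith [norm_nonneg (F z)]
    have h2 : ‖P z‖ / ‖EE z‖ ≤ 2 * (J * R) := by
      rw [div_le_iff₀ hE0]
      nlinarith
    calc _ ≤ 2 * (J * R) / ‖z‖ ^ 4 := by gcongr
      _ = _ := by ring
  have hslit : ∀ z : ℂ, 1 ≤ |z.im| → z ∈ Complex.slitPlane := by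
    intro z hz
    rw [Complex.mem_slitPlane_iff]
    right
    intro h
    rw [h] at hz
    norm_num at hz
  have H : CoreHyp (qphi P) (2 * J) := by
    refine ⟨by positivity, ?_, ?_, ?_, ?_⟩
    · intro z hz
      refine ContinuousAt.continuousWithinAt ?_
      by_cases h : EE z = 0
      · exact qphi_cont (hPd z hz) h (Complex.slitPlane_ne_zero hz) (hP0 z hz h)
      · exact (qphi_diff (hPd z hz) h (Complex.slitPlane_ne_zero hz)).continuousAt
    · intro z hz hzn
      refine qphi_diff (hPd z hz) (fun h => hzn ?_) (Complex.slitPlane_ne_zero hz)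
      obtain ⟨n, hn⟩ := (EE_zero z).1 h
      exact ⟨n, hn.symm⟩
    · intro z hz
      have := hfin z 1 (hslit z hz) (EE_bd1 z hz) (by simpa using hFb z)
      simpa using this
    · intro N z hz
      have := hfin z 1 ?_ (EE_bd2 N z hz) (by simpa using hFb z)
      · simpa using this
      · rw [Complex.mem_slitPlane_iff]
        left
        rw [hz]; positivity
  have hc := core H b p hb hp hp2 hbp ?_ x
  · have hz : (1:ℝ) ≤ |((x : ℂ) + (1:ℝ) * Complex.I).im| := by simp
    have hE := EE_bd1 _ hz
    have hm : 1 ≤ max 1 (Real.exp (-(2 * Real.pi * ((x : ℂ) + (1:ℝ) * Complex.I).im))) :=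
      le_max_left _ _
    have hEn : EE ((x : ℂ) + (1:ℝ) * Complex.I) ≠ 0 := norm_pos_iff.1 (by linarith)
    rw [qphi, if_neg hEn] at hc
    have hz0 := Complex.slitPlane_ne_zero (hslit _ hz)
    have h1 : P ((x : ℂ) + (1:ℝ) * Complex.I) = 0 := by
      rcases div_eq_zero_iff.1 hc with h | h
      · rcases div_eq_zero_iff.1 h with h | h
        · exact h
        · exact absurd h hEn
      · exact absurd h (pow_ne_zero _ hz0)
    exact (mul_eq_zero.1 h1).resolve_left (hMne _ (by simp))
  · intro A z hz
    have hS : 0 ≤ (∑ k ∈ A, b k / p k) / (4 * Real.pi) :=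
      div_nonneg (Finset.sum_nonneg fun k _ => div_nonneg (hb k) (hp k).le)
        (by have := Real.pi_pos; positivity)
    have hz1 : 1 ≤ |z.im| := le_abs.2 (Or.inl (by linarith))
    refine hfin z _ (hslit z hz1) (EE_bd1 z hz1) ((hb3 A z hz).trans ?_)
    exact le_mul_of_one_le_right (by positivity) (le_max_left _ _)

lemma weight_data (w : ℝ → ℝ) (hw : ConditionA w) : ∃ (W : ℝ) (b p : ℕ → ℝ), 0 < W ∧
    (∀ t ∈ Set.Ioo (0:ℝ) 1, w t ≤ W) ∧
    (∀ k, 0 ≤ b k) ∧ (∀ k, 0 < p k) ∧ (∀ k, p k ≤ 1/2) ∧ (¬ Summable fun k => b k * p k) ∧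
    ∀ u ∈ Set.Ioo (0:ℝ) 1, ∀ A : Finset ℕ,
      w u ≤ W * Real.exp (-(∑ k ∈ A, b k * (1 - u / p k))) := by
  obtain ⟨hpos, hmono, ⟨W0, hW0⟩, hlog⟩ := hw
  set W := max 1 W0 with hW
  have hW1 : 1 ≤ W := le_max_left _ _
  have hwW : ∀ t ∈ Set.Ioo (0:ℝ) 1, w t ≤ W := fun t ht =>
    (hW0 (Set.mem_image_of_mem w ht)).trans (le_max_right _ _)
  set ψ : ℝ → ℝ := fun u => Real.log W - Real.log (w u) with hψ
  have hψ0 : ∀ t ∈ Set.Ioo (0:ℝ) 1, 0 ≤ ψ t := fun t ht =>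
    sub_nonneg.2 (Real.log_le_log (hpos t ht) (hwW t ht))
  have hψa : ∀ s ∈ Set.Ioo (0:ℝ) 1, ∀ t ∈ Set.Ioo (0:ℝ) 1, s ≤ t → ψ t ≤ ψ s :=
    fun s hs t ht hst => sub_le_sub_left (Real.log_le_log (hpos s hs) (hmono hs ht hst)) _
  set p : ℕ → ℝ := fun k => (1/2)^(k+1) with hp
  have hp0 : ∀ k, 0 < p k := fun k => by positivity
  have hps : ∀ k, p (k+1) = p k / 2 := fun k => by simp only [hp]; ring
  have hpan : ∀ j k, j ≤ k → p k ≤ p j := fun j k hjk =>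
    pow_le_pow_of_le_one (by norm_num) (by norm_num) (by omega)
  have hp2 : ∀ k, p k ≤ 1/2 := fun k => (hpan 0 k (Nat.zero_le _)).trans (by simp [hp])
  have hpm : ∀ k, p k ∈ Set.Ioo (0:ℝ) 1 := fun k => ⟨hp0 k, by linarith [hp2 k]⟩
  set b : ℕ → ℝ := fun k => ψ (p k) - (if k = 0 then 0 else ψ (p (k-1))) with hb
  have hb0 : ∀ k, 0 ≤ b k := by
    intro k
    simp only [hb]
    split_ifs with h
    · simpa using hψ0 _ (hpm k)
    · exact sub_nonneg.2 (hψa _ (hpm k) _ (hpm _) (hpan _ _ (Nat.sub_le _ _)))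
  have hbs : ∀ n, ∑ k ∈ Finset.range (n+1), b k = ψ (p n) := by
    intro n
    induction n with
    | zero => simp [hb]
    | succ n ih => rw [Finset.sum_range_succ, ih]; simp [hb]
  have hS : ∀ u ∈ Set.Ioo (0:ℝ) 1, ∀ n, ∑ k ∈ Finset.range n, (if u < p k then b k else 0) ≤ ψ u := by
    intro u hu n
    induction n with
    | zero => simpa using hψ0 u hu
    | succ n ih =>
      by_cases h : u < p n
      · calc _ ≤ ∑ k ∈ Finset.range (n+1), b k := by
              refine Finset.sum_le_sum fun k _ => ?_
              split_ifs
              · exact le_rfl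
              · exact hb0 k
          _ = ψ (p n) := hbs n
          _ ≤ ψ u := hψa u hu _ (hpm n) h.le
      · rw [Finset.sum_range_succ, if_neg h, add_zero]; exact ih
  refine ⟨W, b, p, by linarith, hwW, hb0, hp0, hp2, ?_, ?_⟩
  · intro hsum
    have hle : ∀ t ∈ Set.Ioo (0:ℝ) 1, ENNReal.ofReal (-(Real.log (w t))) ≤
        ∑' k, ENNReal.ofReal (b k) * (Set.Iio (2 * p k)).indicator 1 t := by
      intro t ht
      have hex : ∃ n, p n ≤ t := by
        obtain ⟨n, hn⟩ := exists_pow_lt_of_lt_one ht.1 (by norm_num : (1/2:ℝ) < 1)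
        refine ⟨n, le_trans ?_ hn.le⟩
        exact pow_le_pow_of_le_one (by norm_num) (by norm_num) (by omega)
      classical
      set n := Nat.find hex with hn
      have h1 : p n ≤ t := Nat.find_spec hex
      have h2 : t < 2 * p n := by
        rcases Nat.eq_zero_or_pos n with h0 | h0
        · rw [h0]; simp [hp]; exact ht.2
        · have := Nat.find_min hex (m := n - 1) (by omega)
          have h3 := hps (n-1)
          rw [show n - 1 + 1 = n by omega] at h3
          rw [h3]; linarith [not_le.1 this]
      have h3 : -(Real.log (w t)) ≤ ∑ k ∈ Finset.range (n+1), b k := by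
        rw [hbs]
        refine le_trans ?_ (hψa _ (hpm n) _ ht h1)
        simp only [hψ]
        linarith [Real.log_nonneg hW1]
      calc _ ≤ ENNReal.ofReal (∑ k ∈ Finset.range (n+1), b k) := ENNReal.ofReal_le_ofReal h3
        _ = ∑ k ∈ Finset.range (n+1), ENNReal.ofReal (b k) :=
          ENNReal.ofReal_sum_of_nonneg fun k _ => hb0 k
        _ = ∑ k ∈ Finset.range (n+1), ENNReal.ofReal (b k) * (Set.Iio (2 * p k)).indicator 1 t := by
          refine Finset.sum_congr rfl fun k hk => ?_
          have : t ∈ Set.Iio (2 * p k) := by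
            have := hpan k n (by simpa [Nat.lt_succ_iff] using hk)
            simp only [Set.mem_Iio]; linarith
          rw [Set.indicator_of_mem this]; simp
        _ ≤ _ := ENNReal.sum_le_tsum _
    have h5 : (∫⁻ t in Set.Ioo (0:ℝ) 1, ENNReal.ofReal (-(Real.log (w t)))) ≤
        ∑' k, ENNReal.ofReal (b k) * ENNReal.ofReal (2 * p k) := by
      calc _ ≤ ∫⁻ t in Set.Ioo (0:ℝ) 1, ∑' k, ENNReal.ofReal (b k) * (Set.Iio (2 * p k)).indicator 1 t :=
            setLIntegral_mono' measurableSet_Ioo hle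
        _ = ∑' k, ∫⁻ t in Set.Ioo (0:ℝ) 1, ENNReal.ofReal (b k) * (Set.Iio (2 * p k)).indicator 1 t :=
            lintegral_tsum fun k => ((measurable_one.indicator measurableSet_Iio).const_mul _).aemeasurable
        _ ≤ _ := by
            refine ENNReal.tsum_le_tsum fun k => ?_
            rw [lintegral_const_mul _ (measurable_one.indicator measurableSet_Iio),
              lintegral_indicator_one measurableSet_Iio, Measure.restrict_apply measurableSet_Iio]
            gcongr
            calc _ ≤ volume (Set.Ioo (0:ℝ) (2 * p k)) := measure_mono fun x hx => ⟨hx.2.1, hx.1⟩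
              _ = _ := by rw [Real.volume_Ioo, sub_zero]
    rw [hlog.2] at h5
    have h6 : ∑' k, ENNReal.ofReal (b k) * ENNReal.ofReal (2 * p k) =
        ENNReal.ofReal (∑' k, 2 * (b k * p k)) := by
      rw [ENNReal.ofReal_tsum_of_nonneg (fun k => by have := hb0 k; have := hp0 k; positivity)
        (hsum.mul_left 2)]
      refine tsum_congr fun k => ?_
      rw [← ENNReal.ofReal_mul (hb0 k)]
      congr 1; ring
    rw [h6] at h5
    exact ENNReal.ofReal_ne_top (top_le_iff.1 h5)
  · intro u hu A
    have h1 : ∑ k ∈ A, b k * (1 - u / p k) ≤ ψ u := by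
      obtain ⟨n, hn⟩ := A.exists_nat_subset_range
      calc _ ≤ ∑ k ∈ A, (if u < p k then b k else 0) := by
            refine Finset.sum_le_sum fun k _ => ?_
            split_ifs with h
            · have : 0 ≤ u / p k := div_nonneg hu.1.le (hp0 k).le
              nlinarith [hb0 k]
            · have : 1 ≤ u / p k := (one_le_div (hp0 k)).2 (not_lt.1 h)
              nlinarith [hb0 k]
        _ ≤ ∑ k ∈ Finset.range n, (if u < p k then b k else 0) :=
            Finset.sum_le_sum_of_subset_of_nonneg hn fun k _ _ => by
              split_ifs
              · exact hb0 k
              · exact le_rfl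
        _ ≤ _ := hS u hu n
    have h2 : w u = W * Real.exp (-(ψ u)) := by
      simp only [hψ]
      rw [neg_sub, Real.exp_sub, Real.exp_log (hpos u hu), Real.exp_log (by linarith)]
      field_simp
    rw [h2]
    gcongr

lemma fourier_unique (v : ℝ → ℂ) (hv : Integrable v)
    (h0 : ∀ ξ : ℝ, FourierTransform.fourier v ξ = 0) : ∀ᵐ x, v x = 0 := by
  refine ae_eq_zero_of_integral_contDiff_smul_eq_zero hv.locallyIntegrable ?_
  intro u hu hcu
  have hcu' : HasCompactSupport (fun x => (u x : ℂ)) := by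
    have := hcu.comp_left (g := fun x : ℝ => (x : ℂ)) (by simp)
    exact this
  set s : SchwartzMap ℝ ℂ := hcu'.toSchwartzMap (Complex.ofRealCLM.contDiff.comp hu) with hs
  set h : SchwartzMap ℝ ℂ := FourierTransformInv.fourierInv s with hh
  have h1 : ∫ ξ, (FourierTransform.fourier v ξ) • (h ξ) =
      ∫ x, v x • (FourierTransform.fourier (h : ℝ → ℂ) x) := by
    simpa using! (VectorFourier.integral_fourierIntegral_smul_eq_flip (L := innerₗ ℝ)
      Real.continuous_fourierChar continuous_inner hv h.integrable)
  have h2 : FourierTransform.fourier (h : ℝ → ℂ) = s := by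
    rw [← SchwartzMap.fourier_coe, hh, FourierTransform.fourier_fourierInv_eq]
  rw [h2] at h1
  simp only [h0, zero_smul, integral_zero] at h1
  rw [h1]
  refine integral_congr_ae (Filter.Eventually.of_forall fun x => ?_)
  have h3 : s x = (u x : ℂ) := rfl
  simp only [h3, smul_eq_mul, Complex.real_smul]
  exact mul_comm _ _

theorem szego_kolmogorov_removal (Γ : Set ℕ) (hΓ0 : 0 ∉ Γ)
    (hsum : Summable fun γ : Γ => 1 / Real.sqrt (γ : ℝ)) :
    ∀ w : ℝ → ℝ, ConditionA w →
      ExpSpans w {x : ℝ | ∃ n : ℕ, 1 ≤ n ∧ n ∉ Γ ∧ x = n} := by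
  intro w hw
  obtain ⟨W, b, p, hW, hwW, hb, hp, hp2, hbp, hwb⟩ := weight_data w hw
  obtain ⟨hpos, hmono, -, -⟩ := hw
  have hpi := Real.pi_pos
  set μ : Measure ℝ := volume.restrict (Set.Ioo (0:ℝ) 1) with hμ
  have hmem : ∀ᵐ t ∂μ, t ∈ Set.Ioo (0:ℝ) 1 := ae_restrict_mem measurableSet_Ioo
  have hwm : AEMeasurable w μ := aemeasurable_restrict_of_monotoneOn measurableSet_Ioo hmono
  have hwm' : AEMeasurable (fun t => ENNReal.ofReal (w t)) μ := hwm.ennreal_ofReal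
  have hfin : ∀ᵐ t ∂μ, ENNReal.ofReal (w t) < ⊤ := Filter.Eventually.of_forall fun t =>
    ENNReal.ofReal_lt_top
  have hwMdef : wMeasure w = μ.withDensity (fun t => ENNReal.ofReal (w t)) := rfl
  have hwint : Integrable w μ := by
    refine (integrable_const W).mono' hwm.aestronglyMeasurable ?_
    filter_upwards [hmem] with t ht
    rw [Real.norm_eq_abs, abs_of_pos (hpos t ht)]
    exact hwW t ht
  haveI : IsFiniteMeasure (wMeasure w) := by
    rw [hwMdef]; exact isFiniteMeasure_withDensity_ofReal hwint.2
  rw [ExpSpans, ← Submodule.topologicalClosure_coe, ← Submodule.top_coe (R := ℂ)]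
  congr 1
  rw [Submodule.topologicalClosure_eq_top_iff, Submodule.eq_bot_iff]
  intro f hf
  rw [Submodule.mem_orthogonal'] at hf
  have hfm : StronglyMeasurable f := Lp.stronglyMeasurable f
  set g : ℝ → ℂ := fun t => (starRingEnd ℂ) (f t) * w t with hg
  set ρ : ℝ → ℝ := fun t => ‖f t‖ * Real.sqrt (w t) with hρ
  have hconj : AEStronglyMeasurable (fun t => (starRingEnd ℂ) (f t)) μ :=
    (Complex.continuous_conj.comp_stronglyMeasurable hfm).aestronglyMeasurable
  have hgm : AEStronglyMeasurable g μ :=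
    hconj.mul (Complex.continuous_ofReal.comp_aestronglyMeasurable hwm.aestronglyMeasurable)
  have hρm : AEStronglyMeasurable ρ μ :=
    hfm.norm.aestronglyMeasurable.mul
      (Real.continuous_sqrt.comp_aestronglyMeasurable hwm.aestronglyMeasurable)
  have hρ2 : Integrable (fun t => w t * ‖f t‖ ^ 2) μ := by
    have h1 := (memLp_two_iff_integrable_sq_norm (Lp.aestronglyMeasurable f)).1 (Lp.memLp f)
    have h1' := (integrable_withDensity_iff_integrable_smul₀' hwm' hfin
      (g := fun t => ‖f t‖ ^ 2)).1 h1
    refine h1'.congr ?_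
    filter_upwards [hmem] with t ht
    rw [ENNReal.toReal_ofReal (hpos t ht).le, smul_eq_mul]
  have hρi : Integrable ρ μ := by
    refine ((integrable_const (1:ℝ)).add hρ2).mono' hρm ?_
    filter_upwards [hmem] with t ht
    have h1 := Real.sq_sqrt (hpos t ht).le
    have h2 : 0 ≤ ρ t := by positivity
    rw [Real.norm_eq_abs, abs_of_nonneg h2]
    have h3 : w t * ‖f t‖ ^ 2 = ρ t ^ 2 := by
      simp only [hρ]; rw [mul_pow, h1]; ring
    simp only [Pi.add_apply]
    rw [h3]
    nlinarith [sq_nonneg (ρ t - 1)]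
  have hgρ : ∀ t ∈ Set.Ioo (0:ℝ) 1, ‖g t‖ = ρ t * Real.sqrt (w t) := by
    intro t ht
    simp only [hg, hρ, norm_mul, RCLike.norm_conj, Complex.norm_real, Real.norm_eq_abs]
    rw [abs_of_pos (hpos t ht), mul_assoc, Real.mul_self_sqrt (hpos t ht).le]
  have hgb : ∀ᵐ t ∂μ, ‖g t‖ ≤ Real.sqrt W * ρ t := by
    filter_upwards [hmem] with t ht
    rw [hgρ t ht, mul_comm]
    have : 0 ≤ ρ t := by positivity
    gcongr
    exact hwW t ht
  have hgi : Integrable g μ := (hρi.const_mul _).mono' hgm hgb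
  set F : ℂ → ℂ := fun z => ∫ t, g t * Complex.exp (2 * Real.pi * Complex.I * t * z) ∂μ with hF
  have hexp : ∀ (t : ℝ) (z : ℂ), ‖Complex.exp (2 * Real.pi * Complex.I * t * z)‖ =
      Real.exp (-(2 * Real.pi * z.im) * t) := by
    intro t z
    rw [Complex.norm_exp]
    congr 1
    simp
    ring
  have hpar := param_int μ g (fun t => 2 * Real.pi * Complex.I * t) hgi
    (by
      refine (hgi.norm.mul_const (2 * Real.pi)).mono' (hgm.mul (by fun_prop)) ?_
      filter_upwards [hmem] with t ht
      rw [norm_mul]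
      gcongr
      simp only [norm_mul, Complex.norm_ofNat, Complex.norm_real, Complex.norm_I, mul_one,
        Real.norm_eq_abs]
      rw [abs_of_pos hpi, abs_of_pos ht.1]
      nlinarith [ht.2])
    (by fun_prop) Set.univ isOpen_univ
    (fun z => max 1 (Real.exp (-(2 * Real.pi * z.im)))) (by fun_prop)
    (by
      filter_upwards [hmem] with t ht z _
      rw [hexp]
      rcases le_total 0 (-(2 * Real.pi * z.im)) with h | h
      · refine le_max_of_le_right (Real.exp_le_exp.2 ?_)
        nlinarith [ht.2]
      · refine le_max_of_le_left (Real.exp_le_one_iff.2 ?_)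
        nlinarith [ht.1])
  have hFd : Differentiable ℂ F := differentiableOn_univ.1 hpar.1.1
  set J := Real.sqrt W * ∫ t, ρ t ∂μ with hJ
  have hJ0 : 0 ≤ J := by
    refine mul_nonneg (Real.sqrt_nonneg _) (integral_nonneg fun t => ?_)
    positivity
  have hgJ : ∫ t, ‖g t‖ ∂μ ≤ J := by
    rw [hJ, ← integral_const_mul]
    exact integral_mono_ae hgi.norm (hρi.const_mul _) hgb
  have hFb : ∀ z : ℂ, ‖F z‖ ≤ J * max 1 (Real.exp (-(2 * Real.pi * z.im))) := by
    intro z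
    refine (hpar.2 z (subset_closure (Set.mem_univ z))).trans ?_
    gcongr
  have hF0 : ∀ n : ℕ, 1 ≤ n → n ∉ Γ → F n = 0 := by
    intro n hn hnΓ
    have hem : MemLp (expf n) 2 (wMeasure w) := by
      refine MemLp.of_bound (C := 1) ?_ ?_
      · refine Continuous.aestronglyMeasurable ?_
        unfold expf
        fun_prop
      · refine Filter.Eventually.of_forall fun t => ?_
        unfold expf
        rw [Complex.norm_exp]
        simp
    have h1 := hf (hem.toLp _) (Submodule.subset_span ⟨n, ⟨n, hn, hnΓ, rfl⟩, hem.coeFn_toLp⟩)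
    rw [L2.inner_def] at h1
    have h2 : ∫ t, (inner ℂ (f t) ((hem.toLp _ : Lp ℂ 2 (wMeasure w)) t)) ∂(wMeasure w) =
        ∫ t, (starRingEnd ℂ) (f t) * expf n t ∂(wMeasure w) := by
      refine integral_congr_ae ?_
      filter_upwards [hem.coeFn_toLp] with t ht
      rw [ht, RCLike.inner_apply, mul_comm]
    have h3 : ∫ t, (starRingEnd ℂ) (f t) * expf n t ∂(wMeasure w) =
        ∫ t, (ENNReal.ofReal (w t)).toReal • ((starRingEnd ℂ) (f t) * expf n t) ∂μ :=
      integral_withDensity_eq_integral_toReal_smul₀ hwm' hfin _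
    rw [h2, h3] at h1
    rw [← h1]
    simp only [hF]
    refine integral_congr_ae ?_
    filter_upwards [hmem] with t ht
    rw [ENNReal.toReal_ofReal (hpos t ht).le, Complex.real_smul]
    simp only [hg, expf]
    rw [show (2 * Real.pi * Complex.I * t * n : ℂ) = 2 * Real.pi * Complex.I * ((n:ℝ):ℂ) * t by
      push_cast; ring]
    ring
  have hF3 : ∀ (A : Finset ℕ) (z : ℂ), z.im = 1 + (∑ k ∈ A, b k / p k) / (4 * Real.pi) →
      ‖F z‖ ≤ J * Real.exp (-(∑ k ∈ A, b k) / 2) := by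
    intro A z hz
    set S := ∑ k ∈ A, b k / p k with hS
    have h1 : ‖F z‖ ≤ ∫ t, Real.sqrt W * Real.exp (-(∑ k ∈ A, b k) / 2) * ρ t ∂μ := by
      refine norm_integral_le_of_norm_le (hρi.const_mul _) ?_
      filter_upwards [hmem] with t ht
      rw [norm_mul, hgρ t ht, hexp, hz]
      have h2 := hwb t ht A
      have e : ∑ k ∈ A, b k * (1 - t / p k) = ∑ k ∈ A, b k - S * t := by
        rw [hS, Finset.sum_mul, ← Finset.sum_sub_distrib]
        refine Finset.sum_congr rfl fun k _ => ?_
        ring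
      rw [e] at h2
      have h3 : Real.sqrt (w t) ≤ Real.sqrt W * Real.exp (-(∑ k ∈ A, b k - S * t) / 2) := by
        refine (Real.sqrt_le_sqrt h2).trans (le_of_eq ?_)
        rw [Real.sqrt_mul hW.le, Real.exp_half]
      have h4 : Real.exp (-(∑ k ∈ A, b k - S * t) / 2) *
          Real.exp (-(2 * Real.pi * (1 + S / (4 * Real.pi))) * t) ≤
          Real.exp (-(∑ k ∈ A, b k) / 2) := by
        rw [← Real.exp_add]
        apply Real.exp_le_exp.2
        have : -(∑ k ∈ A, b k - S * t) / 2 + -(2 * Real.pi * (1 + S / (4 * Real.pi))) * t =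
          -(∑ k ∈ A, b k) / 2 - 2 * Real.pi * t := by
          field_simp
          ring
        rw [this]
        nlinarith [ht.1]
      have h5 : 0 ≤ ρ t := by positivity
      calc _ ≤ ρ t * (Real.sqrt W * Real.exp (-(∑ k ∈ A, b k - S * t) / 2)) *
            Real.exp (-(2 * Real.pi * (1 + S / (4 * Real.pi))) * t) := by gcongr
        _ = ρ t * Real.sqrt W * (Real.exp (-(∑ k ∈ A, b k - S * t) / 2) *
            Real.exp (-(2 * Real.pi * (1 + S / (4 * Real.pi))) * t)) := by ring
        _ ≤ ρ t * Real.sqrt W * Real.exp (-(∑ k ∈ A, b k) / 2) := by gcongr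
        _ = _ := by ring
    refine h1.trans (le_of_eq ?_)
    rw [integral_const_mul, hJ]
    ring
  have hFz := phi_core Γ hΓ0 hsum F hFd J hJ0 hFb hF0 b p hb hp hp2 hbp hF3
  set v : ℝ → ℂ := (Set.Ioo (0:ℝ) 1).indicator
    (fun t => g t * Complex.exp (-(2 * Real.pi * t))) with hv
  have hvi : Integrable v := by
    rw [hv, integrable_indicator_iff measurableSet_Ioo, IntegrableOn, ← hμ]
    refine hgi.norm.mono' (hgm.mul (by fun_prop)) ?_
    filter_upwards [hmem] with t ht
    rw [norm_mul]
    refine mul_le_of_le_one_right (norm_nonneg _) ?_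
    rw [Complex.norm_exp]
    refine Real.exp_le_one_iff.2 ?_
    simp
    nlinarith [ht.1]
  have hv0 := fourier_unique v hvi ?_
  · have hf0 : ∀ᵐ t ∂μ, f t = 0 := by
      filter_upwards [hmem, ae_restrict_of_ae hv0] with t ht h0
      rw [hv, Set.indicator_of_mem ht] at h0
      have h1 := (mul_eq_zero.1 h0).resolve_right (Complex.exp_ne_zero _)
      have h2 := (mul_eq_zero.1 h1).resolve_right
        (Complex.ofReal_ne_zero.2 (hpos t ht).ne')
      simpa using h2
    have hf1 : ∀ᵐ t ∂(wMeasure w), f t = 0 :=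
      (withDensity_absolutelyContinuous μ _).ae_le hf0
    rw [Lp.eq_zero_iff_ae_eq_zero]
    exact hf1
  · intro ξ
    rw [Real.fourier_real_eq_integral_exp_smul, ← hFz (-ξ)]
    have h1 : ∀ t : ℝ, Complex.exp (↑(-2 * Real.pi * t * ξ) * Complex.I) • v t =
        (Set.Ioo (0:ℝ) 1).indicator (fun t : ℝ => g t * Complex.exp (2 * Real.pi * Complex.I * t *
          ((-ξ : ℝ) + (1:ℝ) * Complex.I))) t := by
      intro t
      rw [hv]
      by_cases ht : t ∈ Set.Ioo (0:ℝ) 1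
      · rw [Set.indicator_of_mem ht, Set.indicator_of_mem ht, smul_eq_mul, mul_left_comm,
          ← Complex.exp_add]
        congr 2
        push_cast
        linear_combination (-2 * Real.pi * t : ℂ) * Complex.I_sq
      · rw [Set.indicator_of_notMem ht, Set.indicator_of_notMem ht, smul_zero]
    simp only [h1]
    rw [integral_indicator measurableSet_Ioo]
end
end

section
/- Let Γ ⊂ (0,∞) be a uniformly discrete set with Σ_{γ∈Γ} 1/√γ < ∞. Then there exists a function g ∈ C¹(ℝ) such that g(t) = 0 for all t ≥ 0, both g and g′ belong to L¹(ℝ), g is not identically zero, and the Cauchy transform of g vanishes on Γ: ∫_{−∞}^{0} g(u)/(u−γ) du = 0 for every γ ∈ Γ. -/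
open MeasureTheory

noncomputable section

/-- A set `S ⊆ ℝ` is uniformly discrete. -/
def UniformlyDiscrete (S : Set ℝ) : Prop :=
  ∃ δ > (0:ℝ), ∀ x ∈ S, ∀ y ∈ S, x ≠ y → δ ≤ |x - y|

lemma half_plane_cauchy (f : ℂ → ℂ) (C : ℝ) (hd : ∀ z : ℂ, 0 ≤ z.re → DifferentiableAt ℂ f z)
    (hb : ∀ z : ℂ, 0 ≤ z.re → ‖f z‖ ≤ C / (1 + ‖z‖ ^ 2)) :
    Integrable (fun y : ℝ => f (y * Complex.I)) ∧ ∫ y : ℝ, f (y * Complex.I) = 0 := by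
  have hC : 0 ≤ C := by
    have := (norm_nonneg _).trans (hb 0 (by simp))
    simpa using this
  have hcont : Continuous (fun y : ℝ => f (y * Complex.I)) := by
    rw [continuous_iff_continuousAt]
    intro y
    have h1 : ContinuousAt f (y * Complex.I) := (hd _ (by simp)).continuousAt
    have h2 : ContinuousAt (fun y : ℝ => (y : ℂ) * Complex.I) y := by fun_prop
    exact ContinuousAt.comp (f := fun y : ℝ => (y : ℂ) * Complex.I) h1 h2
  have hint : Integrable (fun y : ℝ => f (y * Complex.I)) := by
    refine Integrable.mono' (integrable_inv_one_add_sq.const_mul C) hcont.aestronglyMeasurable ?_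
    filter_upwards with y
    have := hb (y * Complex.I) (by simp)
    simpa [div_eq_mul_inv] using this
  refine ⟨hint, ?_⟩
  have hlim := intervalIntegral_tendsto_integral hint Filter.tendsto_neg_atTop_atBot
    Filter.tendsto_id
  refine tendsto_nhds_unique hlim ?_
  have h4 : Filter.Tendsto (fun R : ℝ => 4 * C * R⁻¹) Filter.atTop (nhds 0) := by
    simpa using tendsto_inv_atTop_zero.const_mul (4 * C)
  refine squeeze_zero_norm' ?_ h4
  filter_upwards [Filter.eventually_gt_atTop 0] with R hR
  have hrect := Complex.integral_boundary_rect_eq_zero_of_differentiableOn f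
    (⟨0, -R⟩ : ℂ) (⟨R, R⟩ : ℂ) (by
      intro z hz
      refine (hd z ?_).differentiableWithinAt
      have := hz.1
      simp only [Set.mem_preimage, Set.uIcc_of_le hR.le] at this
      exact this.1)
  simp only at hrect
  have key : ∀ z : ℂ, 0 ≤ z.re → R ≤ ‖z‖ → ‖f z‖ ≤ C / (1 + R ^ 2) := by
    intro z hz hz'
    refine (hb z hz).trans ?_
    gcongr
  have b1 : ‖∫ x in (0:ℝ)..R, f (x + ((-R : ℝ) : ℂ) * Complex.I)‖ ≤ C / (1 + R ^ 2) * |R - 0| := by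
    apply intervalIntegral.norm_integral_le_of_norm_le_const
    intro x hx
    rw [Set.uIoc_of_le hR.le] at hx
    apply key
    · simpa using hx.1.le
    · refine le_trans ?_ (Complex.abs_im_le_norm _)
      simp [abs_of_pos hR]
  have b2 : ‖∫ x in (0:ℝ)..R, f (x + (R : ℂ) * Complex.I)‖ ≤ C / (1 + R ^ 2) * |R - 0| := by
    apply intervalIntegral.norm_integral_le_of_norm_le_const
    intro x hx
    rw [Set.uIoc_of_le hR.le] at hx
    apply key
    · simpa using hx.1.le
    · refine le_trans ?_ (Complex.abs_im_le_norm _)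
      simp [abs_of_pos hR]
  have b3 : ‖∫ y in (-R)..R, f ((R : ℂ) + y * Complex.I)‖ ≤ C / (1 + R ^ 2) * |R - -R| := by
    apply intervalIntegral.norm_integral_le_of_norm_le_const
    intro x hx
    apply key
    · simpa using hR.le
    · refine le_trans ?_ (Complex.abs_re_le_norm _)
      simp [abs_of_pos hR]
  have e : Complex.I • (∫ y in (-R)..R, f (y * Complex.I)) =
      (∫ x in (0:ℝ)..R, f (x + ((-R : ℝ) : ℂ) * Complex.I))
      - (∫ x in (0:ℝ)..R, f (x + (R : ℂ) * Complex.I))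
      + Complex.I • ∫ y in (-R)..R, f ((R : ℂ) + y * Complex.I) := by
    simp only [Complex.ofReal_zero, zero_add] at hrect
    exact (sub_eq_zero.mp hrect).symm
  have n : ‖∫ y in (-R)..R, f (y * Complex.I)‖ =
      ‖Complex.I • (∫ y in (-R)..R, f (y * Complex.I))‖ := by simp
  change ‖∫ y in (-R)..R, f (y * Complex.I)‖ ≤ _
  rw [n, e]
  refine (norm_add_le _ _).trans ((add_le_add_left (norm_sub_le _ _) _).trans ?_)
  rw [norm_smul, Complex.norm_I, one_mul]
  refine (add_le_add (add_le_add b1 b2) b3).trans ?_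
  rw [show R - -R = 2 * R by ring, sub_zero, abs_of_pos hR, abs_of_pos (by positivity)]
  have : C / (1 + R ^ 2) * R + C / (1 + R ^ 2) * R + C / (1 + R ^ 2) * (2 * R)
    = 4 * C * (R / (1 + R ^ 2)) := by ring
  rw [this]
  gcongr
  rw [div_le_iff₀ (by positivity)]
  field_simp
  nlinarith

lemma blaschke_exp (a y : ℝ) (ha : 0 < a) :
    ((a : ℂ) - y * Complex.I) / (a + y * Complex.I)
      = Complex.exp (-((2 * Real.arctan (y / a) : ℝ) : ℂ) * Complex.I) := by
  set t := y / a with ht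
  set θ := Real.arctan t with hθ
  have hs : 0 < √(1 + t ^ 2) := Real.sqrt_pos.mpr (by positivity)
  have hsC : ((√(1 + t ^ 2) : ℝ) : ℂ) ≠ 0 := by exact_mod_cast hs.ne'
  have haC : (a : ℂ) ≠ 0 := by exact_mod_cast ha.ne'
  have hy : y = a * t := by rw [ht]; field_simp
  have h1 : (a : ℂ) + y * Complex.I = a * √(1 + t ^ 2) * Complex.exp (θ * Complex.I) := by
    rw [Complex.exp_mul_I, ← Complex.ofReal_cos, ← Complex.ofReal_sin, hθ, Real.cos_arctan,
      Real.sin_arctan, hy]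
    push_cast
    field_simp
  have h2 : (a : ℂ) - y * Complex.I = a * √(1 + t ^ 2) * Complex.exp (-θ * Complex.I) := by
    rw [Complex.exp_mul_I, Complex.cos_neg, Complex.sin_neg, ← Complex.ofReal_cos,
      ← Complex.ofReal_sin, hθ, Real.cos_arctan,
      Real.sin_arctan, hy]
    push_cast
    field_simp
    ring
  rw [h1, h2, mul_div_mul_left _ _ (mul_ne_zero haC hsC), ← Complex.exp_sub]
  congr 1
  push_cast
  ring

/-- The phase function of the finite product. -/
def phs {ι : Type*} (a : ι → ℝ) (s : Finset ι) (y : ℝ) : ℝ :=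
  8 * Real.arctan y + ∑ i ∈ s, 2 * Real.arctan (y / a i)

lemma phs_neg {ι : Type*} (a : ι → ℝ) (s : Finset ι) (y : ℝ) : phs a s (-y) = - phs a s y := by
  simp [phs, neg_div, Real.arctan_neg, Finset.sum_neg_distrib]
  ring

lemma phs_exp {ι : Type*} [DecidableEq ι] (a : ι → ℝ) (ha : ∀ i, 0 < a i) (s : Finset ι) (i : ι)
    (hi : i ∈ s) (y : ℝ) :
    ((y * Complex.I) ^ 5 / (1 + y * Complex.I) ^ 8) *
      (∏ k ∈ s.erase i, ((a k : ℂ) - y * Complex.I) / (a k + y * Complex.I)) *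
      (1 / ((a i : ℂ) + y * Complex.I) ^ 2) =
    ((y ^ 5 / ((1 + y ^ 2) ^ 4 * (a i ^ 2 + y ^ 2)) : ℝ) : ℂ) *
      (Complex.I * Complex.exp (-((phs a s y : ℝ) : ℂ) * Complex.I)) := by
  have e1 := blaschke_exp 1 y one_pos
  have hsum : Complex.exp (-((phs a s y : ℝ) : ℂ) * Complex.I) =
      (((1 : ℝ) - y * Complex.I) / ((1 : ℝ) + y * Complex.I)) ^ 4 *
      ((∏ k ∈ s.erase i, ((a k : ℂ) - y * Complex.I) / (a k + y * Complex.I)) *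
      (((a i : ℂ) - y * Complex.I) / (a i + y * Complex.I))) := by
    rw [Finset.prod_erase_mul _ _ hi, e1, Finset.prod_congr rfl (fun k _ => blaschke_exp (a k) y (ha k)),
      ← Complex.exp_sum, ← Complex.exp_nat_mul, ← Complex.exp_add]
    congr 1
    rw [phs]
    push_cast
    rw [← Finset.sum_mul, Finset.sum_neg_distrib]
    simp only [div_one]
    ring
  rw [hsum]
  have hne : ∀ b : ℝ, 0 < b → (b : ℂ) + y * Complex.I ≠ 0 := by
    intro b hb h
    have := congrArg Complex.re h
    simp at this
    exact hb.ne' this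
  have hne' : ∀ b : ℝ, 0 < b → (b : ℂ) - y * Complex.I ≠ 0 := by
    intro b hb h
    have := congrArg Complex.re h
    simp at this
    exact hb.ne' this
  have hm : ∀ b : ℝ, (b : ℂ) ^ 2 + (y : ℂ) ^ 2 = ((b : ℂ) + y * Complex.I) * (b - y * Complex.I) := by
    intro b
    linear_combination ((y : ℂ) ^ 2) * Complex.I_sq
  have h1 := hm 1
  simp only [Complex.ofReal_one, one_pow] at h1
  push_cast
  rw [h1, hm (a i)]
  have n1 := hne 1 one_pos
  have n2 := hne' 1 one_pos
  have n3 := hne (a i) (ha i)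
  have n4 := hne' (a i) (ha i)
  simp only [Complex.ofReal_one] at n1 n2
  have I5 : (y * Complex.I) ^ 5 = (y : ℂ) ^ 5 * Complex.I := by
    rw [mul_pow, show Complex.I ^ 5 = Complex.I by
      rw [show (5 : ℕ) = 4 + 1 by norm_num, pow_succ, Complex.I_pow_four, one_mul]]
  rw [I5]
  generalize (∏ k ∈ s.erase i, ((a k : ℂ) - y * Complex.I) / (a k + y * Complex.I)) = P
  generalize (1 : ℂ) + y * Complex.I = A at *
  generalize (1 : ℂ) - y * Complex.I = B at *
  generalize (a i : ℂ) + y * Complex.I = A' at *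
  generalize (a i : ℂ) - y * Complex.I = B' at *
  field_simp

lemma finite_full (ι : Type*) (a : ι → ℝ) (ha : ∀ i, 0 < a i) (s : Finset ι) (i : ι)
    (hi : i ∈ s) :
    ∫ y : ℝ, y ^ 5 / ((1 + y ^ 2) ^ 4 * (a i ^ 2 + y ^ 2)) * Real.sin (phs a s y) = 0 := by
  classical
  set f : ℂ → ℂ := fun w => (w ^ 5 / (1 + w) ^ 8) *
      (∏ k ∈ s.erase i, ((a k : ℂ) - w) / (a k + w)) * (1 / ((a i : ℂ) + w) ^ 2) with hf
  have hne : ∀ b : ℝ, 0 < b → ∀ w : ℂ, 0 ≤ w.re → (b : ℂ) + w ≠ 0 := by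
    intro b hb w hw h
    have := congrArg Complex.re h
    simp at this
    linarith
  have hne1 : ∀ w : ℂ, 0 ≤ w.re → (1 : ℂ) + w ≠ 0 := by
    intro w hw
    simpa using hne 1 one_pos w hw
  have hd : ∀ z : ℂ, 0 ≤ z.re → DifferentiableAt ℂ f z := by
    intro z hz
    refine DifferentiableAt.mul (DifferentiableAt.mul ?_ ?_) ?_
    · exact DifferentiableAt.div (by fun_prop) (by fun_prop) (pow_ne_zero _ (hne1 z hz))
    · refine DifferentiableAt.fun_finsetProd (fun k _ => ?_)
      exact DifferentiableAt.div (by fun_prop) (by fun_prop) (hne _ (ha k) z hz)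
    · exact DifferentiableAt.div (by fun_prop) (by fun_prop) (pow_ne_zero _ (hne _ (ha i) z hz))
  have nsq : ∀ b : ℝ, ∀ z : ℂ, ‖(b : ℂ) + z‖ ^ 2 = (b + z.re) ^ 2 + z.im ^ 2 := by
    intro b z
    rw [Complex.sq_norm, Complex.normSq_apply]
    simp
    ring
  have nsq' : ∀ b : ℝ, ∀ z : ℂ, ‖(b : ℂ) - z‖ ^ 2 = (b - z.re) ^ 2 + z.im ^ 2 := by
    intro b z
    rw [Complex.sq_norm, Complex.normSq_apply]
    simp
    ring
  have nz : ∀ z : ℂ, ‖z‖ ^ 2 = z.re ^ 2 + z.im ^ 2 := by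
    intro z
    rw [Complex.sq_norm, Complex.normSq_apply]
    ring
  have hb : ∀ z : ℂ, 0 ≤ z.re → ‖f z‖ ≤ (1 / a i ^ 2) / (1 + ‖z‖ ^ 2) := by
    intro z hz
    have p1 : 1 + ‖z‖ ^ 2 ≤ ‖1 + z‖ ^ 2 := by
      have := nsq 1 z
      simp only [Complex.ofReal_one] at this
      rw [this, nz]
      nlinarith
    have p2 : a i ^ 2 ≤ ‖(a i : ℂ) + z‖ ^ 2 := by
      rw [nsq]
      nlinarith [ha i, sq_nonneg z.im]
    have p3 : ∏ k ∈ s.erase i, ‖((a k : ℂ) - z) / (a k + z)‖ ≤ 1 := by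
      apply Finset.prod_le_one
      · intros; positivity
      · intro k _
        rw [norm_div]
        apply div_le_one_of_le₀ _ (norm_nonneg _)
        rw [← sq_le_sq₀ (norm_nonneg _) (norm_nonneg _), nsq, nsq']
        nlinarith [ha k, mul_nonneg (ha k).le hz]
    have p4 : ‖z‖ ≤ ‖1 + z‖ := by
      rw [← sq_le_sq₀ (norm_nonneg _) (norm_nonneg _)]
      linarith
    have p5 : 1 ≤ ‖1 + z‖ := by
      rw [← sq_le_sq₀ (by norm_num) (norm_nonneg _)]
      nlinarith [sq_nonneg ‖z‖]
    have p6 : ‖z ^ 5 / (1 + z) ^ 8‖ ≤ 1 / (1 + ‖z‖ ^ 2) := by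
      rw [norm_div, norm_pow, norm_pow, div_le_div_iff₀ (by positivity) (by positivity), one_mul]
      calc ‖z‖ ^ 5 * (1 + ‖z‖ ^ 2) ≤ ‖1 + z‖ ^ 5 * ‖1 + z‖ ^ 2 := by gcongr
        _ = ‖1 + z‖ ^ 7 := by ring
        _ ≤ ‖1 + z‖ ^ 8 := pow_le_pow_right₀ p5 (by norm_num)
    rw [hf]
    simp only [norm_mul, norm_prod]
    have p7 : ‖1 / ((a i : ℂ) + z) ^ 2‖ ≤ 1 / a i ^ 2 := by
      rw [norm_div, norm_pow, norm_one]
      have := ha i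
      gcongr
    calc _ ≤ 1 / (1 + ‖z‖ ^ 2) * 1 * (1 / a i ^ 2) := by gcongr
      _ = _ := by ring
  obtain ⟨hint, h0⟩ := half_plane_cauchy f _ hd hb
  have h := Complex.reCLM.integral_comp_comm hint
  rw [h0] at h
  simp only [Complex.reCLM_apply, Complex.zero_re] at h
  rw [← h]
  congr 1
  ext y
  rw [hf]
  simp only
  rw [phs_exp a ha s i hi y, Complex.re_ofReal_mul]
  congr 1
  rw [← Complex.ofReal_neg, Complex.exp_mul_I, ← Complex.ofReal_cos, ← Complex.ofReal_sin]
  simp only [Real.sin_neg, Real.cos_neg, Complex.mul_re, Complex.I_re, Complex.I_im, Complex.add_im,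
    Complex.ofReal_im, Complex.mul_im, Complex.ofReal_re]
  ring

lemma finite_half (ι : Type*) (a : ι → ℝ) (ha : ∀ i, 0 < a i) (s : Finset ι) (i : ι)
    (hi : i ∈ s) :
    ∫ u in Set.Iio (0:ℝ), (u ^ 2 / (1 + |u|) ^ 4 * Real.sin (phs a s √(-u))) / (u - a i ^ 2) = 0 := by
  have h1 := finite_full ι a ha s i hi
  have h2 := integral_comp_abs (f := fun y : ℝ =>
    y ^ 5 / ((1 + y ^ 2) ^ 4 * (a i ^ 2 + y ^ 2)) * Real.sin (phs a s y))
  have h3 : ∀ y : ℝ, |y| ^ 5 / ((1 + |y| ^ 2) ^ 4 * (a i ^ 2 + |y| ^ 2)) * Real.sin (phs a s |y|)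
      = y ^ 5 / ((1 + y ^ 2) ^ 4 * (a i ^ 2 + y ^ 2)) * Real.sin (phs a s y) := by
    intro y
    rcases abs_choice y with h | h
    · rw [h]
    · rw [h, phs_neg, Real.sin_neg]
      ring
  simp only [h3, h1] at h2
  have h4 : ∫ y in Set.Ioi (0:ℝ),
    y ^ 5 / ((1 + y ^ 2) ^ 4 * (a i ^ 2 + y ^ 2)) * Real.sin (phs a s y) = 0 := by linarith
  rw [← MeasureTheory.integral_Iic_eq_integral_Iio]
  have h5 := integral_comp_neg_Ioi (0:ℝ) (fun u : ℝ =>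
    (u ^ 2 / (1 + |u|) ^ 4 * Real.sin (phs a s √(-u))) / (u - a i ^ 2))
  rw [neg_zero] at h5
  rw [← h5, ← integral_comp_rpow_Ioi_of_pos (p := 2) two_pos]
  have h6 : ∫ y in Set.Ioi (0:ℝ),
    (-2) * (y ^ 5 / ((1 + y ^ 2) ^ 4 * (a i ^ 2 + y ^ 2)) * Real.sin (phs a s y)) = 0 := by
    rw [integral_const_mul, h4, mul_zero]
  refine Eq.trans ?_ h6
  refine setIntegral_congr_fun measurableSet_Ioi (fun y hy => ?_)
  have hy' : (0:ℝ) < y := hy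
  have hai := ha i
  have e1 : y ^ (2:ℝ) = y ^ 2 := by norm_cast
  have e2 : y ^ ((2:ℝ) - 1) = y := by norm_num
  simp only [e1, e2, smul_eq_mul, neg_neg, abs_neg, abs_of_nonneg (sq_nonneg y),
    Real.sqrt_sq hy'.le]
  have : -y ^ 2 - a i ^ 2 = -(a i ^ 2 + y ^ 2) := by ring
  rw [this]
  field_simp

lemma reg_lemma (φ φ' : ℝ → ℝ) (M : ℝ) (h : ∀ y, HasDerivAt φ (φ' y) y) (hc : Continuous φ')
    (hM : ∀ y, |φ' y| ≤ M) (h0 : φ 0 = 0) (G : ℝ → ℝ)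
    (hG : G = fun u => u ^ 2 / (1 + |u|) ^ 4 * Real.sin (φ √(-u))) :
    ContDiff ℝ 1 G ∧ Integrable G ∧ Integrable (deriv G) := by
  have hφc : Continuous φ := continuous_iff_continuousAt.mpr fun y => (h y).continuousAt
  set D : ℝ → ℝ := fun u => (2 * u + 2 * u ^ 2) / (1 + |u|) ^ 5 * Real.sin (φ √(-u))
    + u * √(-u) / (2 * (1 + |u|) ^ 4) * Real.cos (φ √(-u)) * φ' √(-u) with hD
  have hpos : ∀ u : ℝ, 1 + |u| ≠ 0 := fun u => by positivity
  have hDc : Continuous D := by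
    rw [hD]
    refine Continuous.add (Continuous.mul (Continuous.div (by fun_prop) (by fun_prop) ?_) (by fun_prop))
      (Continuous.mul (Continuous.mul (Continuous.div (by fun_prop) (by fun_prop) ?_) (by fun_prop)) (by fun_prop))
    · intro u; positivity
    · intro u; positivity
  have hGc : Continuous G := by
    rw [hG]
    refine Continuous.mul (Continuous.div (by fun_prop) (by fun_prop) ?_) (by fun_prop)
    intro u; positivity
  have hsin : ∀ x : ℝ, |Real.sin x| ≤ 1 := Real.abs_sin_le_one
  have hcos : ∀ x : ℝ, |Real.cos x| ≤ 1 := Real.abs_cos_le_one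
  have hM0 : 0 ≤ M := (abs_nonneg _).trans (hM 0)
  have hder : ∀ u, HasDerivAt G (D u) u := by
    intro u
    rcases lt_trichotomy u 0 with hu | hu | hu
    · have hy : 0 < √(-u) := Real.sqrt_pos.mpr (by linarith)
      have hev : G =ᶠ[nhds u] fun u => u ^ 2 / (1 - u) ^ 4 * Real.sin (φ √(-u)) := by
        filter_upwards [Iio_mem_nhds hu] with v hv
        rw [hG]
        simp only
        rw [abs_of_neg hv, sub_eq_add_neg]
      refine HasDerivAt.congr_of_eventuallyEq ?_ hev
      have d1 : HasDerivAt (fun u : ℝ => √(-u)) (-1 / (2 * √(-u))) u :=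
        (hasDerivAt_neg u).sqrt (by linarith)
      have d2 : HasDerivAt (fun u : ℝ => Real.sin (φ √(-u)))
          (Real.cos (φ √(-u)) * (φ' √(-u) * (-1 / (2 * √(-u))))) u :=
        ((h √(-u)).comp u d1).sin
      have d3 : HasDerivAt (fun u : ℝ => (1 - u) ^ 4) (4 * (1 - u) ^ 3 * (-1)) u := by
        exact (((hasDerivAt_id u).const_sub 1).pow 4).congr_deriv (by simp)
      have d4 : HasDerivAt (fun u : ℝ => u ^ 2) (2 * u) u := by
        simpa using hasDerivAt_pow 2 u
      have hu1 : 0 < 1 - u := by linarith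
      have d5 := (d4.div d3 (by positivity)).mul d2
      refine d5.congr_deriv ?_
      rw [hD]
      simp only
      rw [abs_of_neg hu, ← sub_eq_add_neg]
      have hs : √(-u) ^ 2 = -u := Real.sq_sqrt (by linarith)
      congr 1
      · congr 1
        field_simp
        ring
      · have : u ^ 2 * (-1 / (2 * √(-u))) = u * √(-u) / 2 := by
          field_simp
          rw [hs]; ring
        calc _ = (u ^ 2 * (-1 / (2 * √(-u)))) / (1 - u) ^ 4 * Real.cos (φ √(-u)) * φ' √(-u) := by
              simp only [Pi.div_apply]; ring
          _ = _ := by rw [this, div_div]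
    · subst hu
      have hD0 : D 0 = 0 := by simp [hD]
      rw [hD0, hasDerivAt_iff_isLittleO_nhds_zero]
      have : (fun h : ℝ => G (0 + h) - G 0 - h • (0:ℝ)) = G := by
        ext v; simp [hG]
      rw [this]
      have hO : G =O[nhds 0] fun v : ℝ => v ^ 2 := by
        refine Asymptotics.IsBigO.of_bound 1 (Filter.Eventually.of_forall fun v => ?_)
        rw [hG]
        simp only [norm_mul, norm_div, Real.norm_eq_abs, one_mul]
        rw [abs_of_nonneg (by positivity : 0 ≤ (1 + |v|) ^ 4)]
        have : |v ^ 2| / (1 + |v|) ^ 4 ≤ |v ^ 2| :=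
          div_le_self (abs_nonneg _) (one_le_pow₀ (by linarith [abs_nonneg v]))
        calc _ ≤ |v ^ 2| * 1 := by gcongr; exact hsin _
          _ = _ := mul_one _
      refine hO.trans_isLittleO ?_
      simpa using Asymptotics.isLittleO_pow_pow (𝕜 := ℝ) (show 1 < 2 by norm_num)
    · have hev : G =ᶠ[nhds u] fun _ => 0 := by
        filter_upwards [Ioi_mem_nhds hu] with v hv
        rw [hG]
        simp only
        rw [Real.sqrt_eq_zero_of_nonpos (by linarith [Set.mem_Ioi.mp hv]), h0]
        simp
      have hDu : D u = 0 := by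
        rw [hD]
        simp only
        rw [Real.sqrt_eq_zero_of_nonpos (by linarith), h0]
        simp
      rw [hDu]
      exact (hasDerivAt_const u (0:ℝ)).congr_of_eventuallyEq hev
  have hdG : deriv G = D := by ext u; exact (hder u).deriv
  have hq : ∀ u : ℝ, 1 / (1 + |u|) ^ 2 ≤ (1 + u ^ 2)⁻¹ := by
    intro u
    rw [← one_div]
    apply one_div_le_one_div_of_le (by positivity)
    nlinarith [abs_nonneg u, sq_abs u]
  refine ⟨?_, ?_, ?_⟩
  · rw [contDiff_one_iff_deriv, hdG]
    exact ⟨fun u => (hder u).differentiableAt, hDc⟩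
  · refine Integrable.mono' integrable_inv_one_add_sq hGc.aestronglyMeasurable ?_
    filter_upwards with u
    refine le_trans ?_ (hq u)
    rw [hG]
    simp only [norm_mul, norm_div, Real.norm_eq_abs]
    rw [abs_of_nonneg (by positivity : 0 ≤ (1 + |u|) ^ 4), abs_pow]
    calc _ ≤ |u| ^ 2 / (1 + |u|) ^ 4 * 1 := by gcongr; exact hsin _
      _ ≤ (1 + |u|) ^ 2 / (1 + |u|) ^ 4 * 1 := by gcongr; linarith
      _ = _ := by have := hpos u; field_simp
  · rw [hdG]
    refine Integrable.mono' (integrable_inv_one_add_sq.const_mul (2 + M)) hDc.aestronglyMeasurable ?_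
    filter_upwards with u
    refine le_trans ?_ (mul_le_mul_of_nonneg_left (hq u) (by positivity))
    have hA := abs_nonneg u
    have hy : √(-u) ≤ 1 + |u| := by
      rw [Real.sqrt_le_left (by positivity)]
      nlinarith [neg_le_abs u]
    have t1 : |(2 * u + 2 * u ^ 2) / (1 + |u|) ^ 5 * Real.sin (φ √(-u))| ≤ 2 * (1 / (1 + |u|) ^ 2) := by
      rw [abs_mul, abs_div, abs_of_nonneg (by positivity : 0 ≤ (1 + |u|) ^ 5)]
      have : |2 * u + 2 * u ^ 2| ≤ 2 * (1 + |u|) ^ 3 := by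
        refine (abs_add_le _ _).trans ?_
        rw [abs_mul, abs_mul, abs_pow, abs_two]
        nlinarith [pow_nonneg hA 3, sq_nonneg |u|]
      calc _ ≤ (2 * (1 + |u|) ^ 3) / (1 + |u|) ^ 5 * 1 := by gcongr; exact hsin _
        _ = _ := by have := hpos u; field_simp
    have t2 : |u * √(-u) / (2 * (1 + |u|) ^ 4) * Real.cos (φ √(-u)) * φ' √(-u)|
        ≤ M * (1 / (1 + |u|) ^ 2) := by
      rw [abs_mul, abs_mul, abs_div, abs_mul, abs_of_nonneg (Real.sqrt_nonneg _),
        abs_of_nonneg (by positivity : 0 ≤ 2 * (1 + |u|) ^ 4)]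
      have hu1 : |u| ≤ 1 + |u| := by linarith
      calc _ ≤ ((1 + |u|) * (1 + |u|)) / (1 * (1 + |u|) ^ 4) * 1 * M := by
            gcongr
            · norm_num
            · exact hcos _
            · exact hM _
        _ = _ := by have := hpos u; field_simp
    calc ‖D u‖ ≤ _ := norm_add_le _ _
      _ ≤ 2 * (1 / (1 + |u|) ^ 2) + M * (1 / (1 + |u|) ^ 2) := add_le_add t1 t2
      _ = _ := by ring

/-- **Lemma (key construction).** For a uniformly discrete `Γ ⊂ (0,∞)` with
`∑_{γ∈Γ} 1/√γ < ∞` there is a nontrivial `g ∈ C¹(ℝ)` vanishing on `[0,∞)`, with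
`g, g' ∈ L¹(ℝ)`, whose Cauchy transform vanishes on `Γ`. -/
theorem exists_cauchy_annihilator (Γ : Set ℝ) (hΓ : Γ ⊆ Set.Ioi 0)
    (hud : UniformlyDiscrete Γ)
    (hsum : Summable fun γ : Γ => 1 / Real.sqrt (γ : ℝ)) :
    ∃ g : ℝ → ℂ, ContDiff ℝ 1 g ∧ (∀ t : ℝ, 0 ≤ t → g t = 0) ∧
      Integrable g ∧ Integrable (deriv g) ∧ (∃ t, g t ≠ 0) ∧
      ∀ γ ∈ Γ, (∫ u in Set.Iio (0:ℝ), g u / ((u : ℂ) - (γ : ℂ))) = 0 := by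
  set a : Γ → ℝ := fun γ => √(γ : ℝ) with ha_def
  have ha : ∀ i, 0 < a i := fun i => Real.sqrt_pos.mpr (hΓ i.2)
  have hcount : Countable Γ := by
    have h1 := hsum.countable_support
    have h2 : Function.support (fun γ : Γ => 1 / √(γ : ℝ)) = Set.univ := by
      ext i
      simp only [Function.mem_support, Set.mem_univ, iff_true]
      exact (one_div_pos.mpr (ha i)).ne'
    rw [h2] at h1
    exact Set.countable_univ_iff.mp h1
  set ψ : Γ → ℝ → ℝ := fun i y => 2 * Real.arctan (y / a i) with hψ
  set ψ' : Γ → ℝ → ℝ := fun i y => 2 * (1 / (1 + (y / a i) ^ 2) * (1 / a i)) with hψ'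
  have hu : Summable (fun i => 2 * (1 / a i)) := hsum.mul_left 2
  have hψd : ∀ i y, HasDerivAt (ψ i) (ψ' i y) y := fun i y =>
    (((hasDerivAt_id y).div_const (a i)).arctan).const_mul 2
  have hψpos : ∀ i y, 0 ≤ ψ' i y := by
    intro i y
    have := ha i
    simp only [hψ']
    positivity
  have hψb : ∀ i y, ‖ψ' i y‖ ≤ 2 * (1 / a i) := by
    intro i y
    rw [Real.norm_of_nonneg (hψpos i y)]
    have := ha i
    simp only [hψ']
    have h1 : 1 / (1 + (y / a i) ^ 2) ≤ 1 := by
      rw [div_le_one (by positivity)]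
      nlinarith [sq_nonneg (y / a i)]
    have h2 : 0 < 1 / a i := by positivity
    nlinarith
  have hψ0 : Summable fun i => ψ i 0 := by
    simp only [hψ, zero_div, Real.arctan_zero, mul_zero]
    exact summable_zero
  set φ : ℝ → ℝ := fun y => 8 * Real.arctan y + ∑' i, ψ i y with hφ
  set φ' : ℝ → ℝ := fun y => 8 * (1 / (1 + y ^ 2)) + ∑' i, ψ' i y with hφ'
  have hφd : ∀ y, HasDerivAt φ (φ' y) y := fun y =>
    ((Real.hasDerivAt_arctan y).const_mul 8).add (hasDerivAt_tsum hu hψd hψb hψ0 y)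
  have hφ'c : Continuous φ' := by
    refine Continuous.add ?_ (continuous_tsum ?_ hu hψb)
    · refine continuous_const.mul (Continuous.div (by fun_prop) (by fun_prop) ?_)
      intro y; positivity
    · intro i
      simp only [hψ']
      refine continuous_const.mul (Continuous.mul (Continuous.div (by fun_prop) (by fun_prop) ?_) (by fun_prop))
      intro y; positivity
  have hs' : ∀ y, Summable fun i => ψ' i y := fun y => .of_norm_bounded hu fun i => hψb i y
  have hφ'pos : ∀ y, 0 < φ' y := by
    intro y
    have : 0 ≤ ∑' i, ψ' i y := tsum_nonneg fun i => hψpos i y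
    simp only [hφ']
    positivity
  have hφ'b : ∀ y, |φ' y| ≤ 8 + ∑' i, 2 * (1 / a i) := by
    intro y
    rw [abs_of_pos (hφ'pos y)]
    refine add_le_add ?_ (Summable.tsum_le_tsum (fun i => (le_abs_self _).trans (hψb i y)) (hs' y) hu)
    have : 1 / (1 + y ^ 2) ≤ 1 := by
      rw [div_le_one (by positivity)]
      nlinarith [sq_nonneg y]
    linarith
  have hφ0 : φ 0 = 0 := by simp [hφ, hψ]
  have hψs : ∀ y, Summable fun i => ψ i y := fun y =>
    summable_of_summable_hasDerivAt hu hψd hψb hψ0 y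
  have hφlim : ∀ y, Filter.Tendsto (fun s => phs a s y) Filter.atTop (nhds (φ y)) := by
    intro y
    exact ((hψs y).hasSum).const_add (8 * Real.arctan y)
  set G : ℝ → ℝ := fun u => u ^ 2 / (1 + |u|) ^ 4 * Real.sin (φ √(-u)) with hG
  obtain ⟨hC, hI, hI'⟩ := reg_lemma φ φ' _ hφd hφ'c hφ'b hφ0 G hG
  have hφc : Continuous φ := continuous_iff_continuousAt.mpr fun y => (hφd y).continuousAt
  have hgd : deriv (fun u => (G u : ℂ)) = fun u => ((deriv G u : ℝ) : ℂ) := by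
    ext u
    exact ((hC.differentiable (by norm_num)) u).hasDerivAt.ofReal_comp.deriv
  refine ⟨fun u => (G u : ℂ), Complex.ofRealCLM.contDiff.comp hC, ?_, hI.ofReal, ?_, ?_, ?_⟩
  · intro t ht
    simp only [hG]
    rw [Real.sqrt_eq_zero_of_nonpos (by linarith), hφ0]
    simp
  · rw [hgd]
    exact hI'.ofReal
  · skip
    have hmono : StrictMono φ := strictMono_of_deriv_pos fun y => by
      rw [(hφd y).deriv]; exact hφ'pos y
    have hev : ∀ᶠ y in nhdsWithin (0:ℝ) (Set.Ioi 0), φ y < Real.pi := by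
      refine nhdsWithin_le_nhds ?_
      refine hφc.continuousAt.eventually_lt continuousAt_const ?_
      rw [hφ0]; exact Real.pi_pos
    obtain ⟨y, hy1, hy2⟩ := (hev.and self_mem_nhdsWithin).exists
    have hy2 : 0 < y := hy2
    refine ⟨-y ^ 2, ?_⟩
    have hp : 0 < φ y := by rw [← hφ0]; exact hmono hy2
    have hsin := Real.sin_pos_of_pos_of_lt_pi hp hy1
    have : 0 < G (-y ^ 2) := by
      simp only [hG, neg_neg, Real.sqrt_sq hy2.le]
      refine mul_pos (div_pos ?_ (by positivity)) hsin
      rw [neg_sq]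
      positivity
    exact Complex.ofReal_ne_zero.mpr this.ne'
  · intro γ hγ
    set i : Γ := ⟨γ, hγ⟩ with hi
    have hγ0 : 0 < γ := hΓ hγ
    have hai : a i ^ 2 = γ := Real.sq_sqrt hγ0.le
    have hlim : Filter.Tendsto (fun s : Finset Γ => ∫ u in Set.Iio (0:ℝ),
        (u ^ 2 / (1 + |u|) ^ 4 * Real.sin (phs a s √(-u))) / (u - γ)) Filter.atTop
        (nhds (∫ u in Set.Iio (0:ℝ), G u / (u - γ))) := by
      refine tendsto_integral_filter_of_dominated_convergence (fun u => (1 + u ^ 2)⁻¹ * γ⁻¹) ?_ ?_ ?_ ?_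
      · refine Filter.Eventually.of_forall fun s => ?_
        have hm : Measurable (phs a s) := by
          unfold phs
          refine Continuous.measurable ?_
          refine Continuous.add (by fun_prop) (continuous_finsetSum _ fun i _ => by fun_prop)
        refine Measurable.aestronglyMeasurable ?_
        fun_prop
      · refine Filter.Eventually.of_forall fun s => ?_
        filter_upwards [ae_restrict_mem measurableSet_Iio] with u hu
        have hu : u < 0 := hu
        rw [norm_div, norm_mul, norm_div, Real.norm_eq_abs, Real.norm_eq_abs, Real.norm_eq_abs,
          Real.norm_eq_abs, abs_of_nonneg (by positivity : 0 ≤ (1 + |u|) ^ 4),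
          abs_of_neg (by linarith : u - γ < 0), abs_of_nonneg (sq_nonneg u), div_eq_mul_inv]
        have h1 : u ^ 2 / (1 + |u|) ^ 4 ≤ (1 + u ^ 2)⁻¹ := by
          rw [← one_div, div_le_div_iff₀ (by positivity) (by positivity), one_mul, ← sq_abs u]
          nlinarith [abs_nonneg u, pow_nonneg (abs_nonneg u) 3]
        have h2 : (-(u - γ))⁻¹ ≤ γ⁻¹ := by
          apply inv_anti₀ hγ0
          linarith
        have h3 : 0 ≤ (-(u - γ))⁻¹ := inv_nonneg.mpr (by linarith)
        refine mul_le_mul ?_ h2 h3 (by positivity)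
        calc _ ≤ u ^ 2 / (1 + |u|) ^ 4 * 1 := by gcongr; exact Real.abs_sin_le_one _
          _ ≤ _ := by rw [mul_one]; exact h1
      · exact (integrable_inv_one_add_sq.mul_const _).integrableOn
      · filter_upwards with u
        refine Filter.Tendsto.div_const (Filter.Tendsto.const_mul _ ?_) _
        exact (Real.continuous_sin.tendsto _).comp (hφlim √(-u))
    have hzero : ∫ u in Set.Iio (0:ℝ), G u / (u - γ) = 0 := by
      refine tendsto_nhds_unique hlim ?_
      refine tendsto_const_nhds.congr' ?_
      filter_upwards [Filter.eventually_ge_atTop {i}] with s hs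
      have := finite_half Γ a ha s i (hs (Finset.mem_singleton_self i))
      rw [hai] at this
      exact this.symm
    have e : ∀ u : ℝ, (G u : ℂ) / ((u : ℂ) - (γ : ℂ)) = ((G u / (u - γ) : ℝ) : ℂ) := by
      intro u; push_cast; rfl
    simp only [e]
    rw [integral_complex_ofReal, hzero, Complex.ofReal_zero]
end
end

section
/- There exists a set Γ ⊆ ℕ of lower density one (i.e. liminf_{n→∞} #(Γ∩[1,n])/n = 1) such that the system E(ℕ∖Γ) = {e^{2πint} : n ∈ ℕ∖Γ} is complete in L²(𝕋, w) for some positive increasing weight w on (0,1) with ∫₀¹ log w(t) dt = −∞. -/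
open MeasureTheory Filter

noncomputable section

lemma quot_removable {A D : ℂ → ℂ} (hA : Differentiable ℂ A) (hD : Differentiable ℂ D)
    {U : Set ℂ} (hDs : ∀ z, D z = 0 → deriv D z ≠ 0)
    (hAz : ∀ z ∈ U, D z = 0 → A z = 0) :
    ∃ G : ℂ → ℂ, (∀ z ∈ U, DifferentiableAt ℂ G z) ∧ ∀ z ∈ U, A z = G z * D z := by
  classical
  refine ⟨fun z => if D z = 0 then deriv A z / deriv D z else A z / D z, ?_, ?_⟩
  · intro z0 hz0
    by_cases h0 : D z0 = 0
    · have hA0 := hAz z0 hz0 h0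
      have dA : Differentiable ℂ (dslope A z0) := by
        rw [← differentiableOn_univ]
        exact (Complex.differentiableOn_dslope Filter.univ_mem).2 hA.differentiableOn
      have dD : Differentiable ℂ (dslope D z0) := by
        rw [← differentiableOn_univ]
        exact (Complex.differentiableOn_dslope Filter.univ_mem).2 hD.differentiableOn
      have hne : dslope D z0 z0 ≠ 0 := by rw [dslope_same]; exact hDs z0 h0
      have hq : DifferentiableAt ℂ (fun z => dslope A z0 z / dslope D z0 z) z0 :=
        (dA z0).div (dD z0) hne
      refine hq.congr_of_eventuallyEq ?_
      have hev : ∀ᶠ z in nhds z0, dslope D z0 z ≠ 0 := dD.continuous.continuousAt.eventually_ne hne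
      filter_upwards [hev] with z hz
      by_cases hzz : z = z0
      · subst hzz; simp [h0, dslope_same]
      · have e1 := sub_smul_dslope A z0 z
        have e2 := sub_smul_dslope D z0 z
        rw [hA0, sub_zero, smul_eq_mul] at e1
        rw [h0, sub_zero, smul_eq_mul] at e2
        have hs : z - z0 ≠ 0 := sub_ne_zero.2 hzz
        have hDz : D z ≠ 0 := by rw [← e2]; exact mul_ne_zero hs hz
        rw [if_neg hDz, ← e1, ← e2, mul_div_mul_left _ _ hs]
    · have hq : DifferentiableAt ℂ (fun z => A z / D z) z0 := (hA z0).div (hD z0) h0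
      refine hq.congr_of_eventuallyEq ?_
      filter_upwards [hD.continuous.continuousAt.eventually_ne h0] with z hz
      rw [if_neg hz]
  · intro z hz
    by_cases h0 : D z = 0
    · simp [h0, hAz z hz h0]
    · simp only [if_neg h0]; field_simp

/-- smallness on a block -/
lemma block_small {A : ℂ → ℂ} (hA : Differentiable ℂ A) {C β : ℝ} (hC : 0 ≤ C)
    (hβ : 0 < β) (hβ1 : β < 1)
    (hb : ∀ z : ℂ, ‖A z‖ ≤ C * Real.exp (2 * Real.pi * β * max 0 (-z.re)))
    (L : ℕ) (hz : ∀ j : ℤ, |j| ≤ L → A (j * Complex.I) = 0) (y : ℝ)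
    (hy : |y| ≤ (L + 1/2 : ℝ) / 2) :
    ‖A (y * Complex.I)‖ ≤ 4 * C * Real.exp (-((1 - β) * (L + 1/2))) := by
  set R : ℝ := L + 1/2 with hR
  have hR0 : 0 < R := by positivity
  have hpi := Real.pi_pos
  set D : ℂ → ℂ := fun u => Complex.sinh (Real.pi * u) with hDdef
  have hD : Differentiable ℂ D := by
    intro z; exact (Complex.differentiable_sinh _).comp z (by fun_prop)
  have hderiv : ∀ z, deriv D z = Real.pi * Complex.cosh (Real.pi * z) := by
    intro z
    have h1 : HasDerivAt (fun u : ℂ => (Real.pi : ℂ) * u) Real.pi z := by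
      simpa using (hasDerivAt_id z).const_mul (Real.pi : ℂ)
    have := (Complex.hasDerivAt_sinh (Real.pi * z)).comp z h1
    rw [mul_comm]; exact this.deriv
  have hzero : ∀ z, D z = 0 → ∃ j : ℤ, z = j * Complex.I := by
    intro z h
    have h1 : Complex.sin ((Real.pi * z) * Complex.I) = 0 := by
      rw [Complex.sin_mul_I]; simp only [hDdef] at h; rw [h, zero_mul]
    rw [Complex.sin_eq_zero_iff] at h1
    obtain ⟨k, hk⟩ := h1
    refine ⟨-k, ?_⟩
    have hpc : (Real.pi : ℂ) ≠ 0 := by exact_mod_cast Real.pi_ne_zero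
    have h2 : z * Complex.I = k := by
      apply mul_left_cancel₀ hpc; rw [← mul_assoc, hk, mul_comm]
    have h3 : z = - (z * Complex.I) * Complex.I := by
      rw [neg_mul, mul_assoc, Complex.I_mul_I]; ring
    rw [h3, h2]; push_cast; ring
  set U : Set ℂ := {u | |u.im| < L + 1} with hU
  set A' : ℂ → ℂ := fun u => A u * Complex.exp (Real.pi * β * u) with hA'
  have hA'd : Differentiable ℂ A' := hA.mul (by fun_prop)
  obtain ⟨G, hGd, hG⟩ := quot_removable (A := A') (U := U) hA'd hD (by
    intro z h
    rw [hderiv]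
    refine mul_ne_zero (by exact_mod_cast Real.pi_ne_zero) ?_
    intro hc
    have := Complex.cosh_sq (Real.pi * z)
    simp only [hDdef] at h
    rw [hc, h] at this
    norm_num at this) (by
    intro z hzU h
    obtain ⟨j, rfl⟩ := hzero z h
    simp only [hA']
    rw [hz j, zero_mul]
    have h1 : |(j:ℝ)| < L + 1 := by simpa [hU] using hzU
    have : |j| < L + 1 := by exact_mod_cast h1
    omega)
  set K : ℂ → ℂ := fun u => G u * Complex.exp (Real.pi * (1 - β) * (R^2 + u^2) / (2 * R)) with hK
  set V : Set ℂ := Set.Ioo (-R) R ×ℂ Set.Ioo (-R) R with hV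
  have hVcl : closure V = Set.Icc (-R) R ×ℂ Set.Icc (-R) R := by
    rw [hV, Complex.closure_reProdIm, closure_Ioo (by linarith)]
  have hVU : closure V ⊆ U := by
    rw [hVcl]; intro u hu
    rw [Complex.mem_reProdIm] at hu
    simp only [hU, Set.mem_ofPred_eq]
    rw [abs_lt]; constructor <;> linarith [hu.2.1, hu.2.2]
  have hKd : DiffContOnCl ℂ K V := by
    apply DifferentiableOn.diffContOnCl
    intro u hu
    apply DifferentiableAt.differentiableWithinAt
    exact (hGd u (hVU hu)).mul (by fun_prop)
  have hnexp : ∀ u : ℂ, ‖Complex.exp (Real.pi * (1 - β) * (R^2 + u^2) / (2 * R))‖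
      = Real.exp (Real.pi * (1 - β) * (R^2 + u.re^2 - u.im^2) / (2 * R)) := by
    intro u
    rw [Complex.norm_exp]
    congr 1
    have : (Real.pi * (1 - β) * (R^2 + u^2) / (2 * R) : ℂ)
      = ((Real.pi * (1 - β) / (2 * R) : ℝ) : ℂ) * ((R^2 : ℝ) + u^2) := by push_cast; ring
    rw [this, Complex.re_ofReal_mul]
    simp [pow_two]; ring
  have hA'b : ∀ u, ‖A' u‖ ≤ C * Real.exp (Real.pi * β * |u.re|) := by
    intro u
    simp only [hA']
    rw [norm_mul, Complex.norm_exp]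
    have : (Real.pi * β * u : ℂ).re = Real.pi * β * u.re := by
      rw [← Complex.ofReal_mul, Complex.re_ofReal_mul]
    rw [this]
    calc _ ≤ C * Real.exp (2 * Real.pi * β * max 0 (-u.re)) * Real.exp (Real.pi * β * u.re) := by
            gcongr; exact hb u
      _ = C * Real.exp (Real.pi * β * |u.re|) := by
            rw [mul_assoc, ← Real.exp_add]; congr 2
            rcases le_total 0 u.re with h | h
            · rw [max_eq_left (by linarith), abs_of_nonneg h]; ring
            · rw [max_eq_right (by linarith), abs_of_nonpos h]; ring
  have hDn : ∀ u : ℂ, ‖D u‖^2 = Real.sinh (Real.pi * u.re)^2 + Real.sin (Real.pi * u.im)^2 := by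
    intro u
    have h1 : (Real.pi : ℂ) * u = ((Real.pi * u.re : ℝ) : ℂ) + ((Real.pi * u.im : ℝ) : ℂ) * Complex.I := by
      conv_lhs => rw [← Complex.re_add_im u]
      push_cast; ring
    simp only [hDdef]
    rw [h1, Complex.sinh_add, Complex.cosh_mul_I, Complex.sinh_mul_I, ← Complex.ofReal_sinh,
      ← Complex.ofReal_cosh, ← Complex.ofReal_sin, ← Complex.ofReal_cos, ← mul_assoc,
      ← Complex.ofReal_mul, ← Complex.ofReal_mul, Complex.sq_norm, Complex.normSq_add_mul_I]
    have e1 := Real.cosh_sq (Real.pi * u.re)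
    have e2 := Real.sin_sq_add_cos_sq (Real.pi * u.im)
    rw [mul_pow, mul_pow, e1]
    linear_combination Real.sinh (Real.pi * u.re)^2 * e2
  have hfront : ∀ u ∈ frontier V, |u.re| ≤ R ∧ |u.im| ≤ R ∧ (|u.re| = R ∨ |u.im| = R) := by
    intro u hu
    have hu1 := hu
    rw [hV, Complex.frontier_reProdIm, closure_Ioo (by linarith), frontier_Ioo (by linarith)] at hu
    simp only [Set.mem_union, Complex.mem_reProdIm, Set.mem_Icc, Set.mem_insert_iff, Set.mem_singleton_iff] at hu
    rcases hu with ⟨h1, h2⟩ | ⟨h1, h2⟩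
    · refine ⟨abs_le.2 h1, ?_, Or.inr ?_⟩ <;> rcases h2 with h | h <;> rw [h] <;> simp [abs_of_pos hR0]
    · refine ⟨?_, abs_le.2 h2, Or.inl ?_⟩ <;> rcases h1 with h | h <;> rw [h] <;> simp [abs_of_pos hR0]
  have hDlow : ∀ u ∈ frontier V, Real.exp (Real.pi * |u.re|) ≤ 4 * ‖D u‖ := by
    intro u hu
    obtain ⟨h1, h2, h3⟩ := hfront u hu
    have hn := hDn u
    have key : (Real.exp (Real.pi * |u.re|))^2 ≤ (4 * ‖D u‖)^2 := by
      rw [mul_pow, hn]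
      set E := Real.exp (Real.pi * |u.re|) with hE
      have hE1 : 1 ≤ E := Real.one_le_exp (by positivity)
      have hsq : Real.sinh (Real.pi * u.re)^2 = ((E - E⁻¹)/2)^2 := by
        rw [hE, ← Real.exp_neg, ← Real.sinh_eq]
        rcases abs_cases u.re with ⟨h, _⟩ | ⟨h, _⟩ <;> rw [h]
        rw [mul_neg, Real.sinh_neg, neg_sq]
      rw [hsq]
      have hEi : E * E⁻¹ = 1 := mul_inv_cancel₀ (by positivity)
      have hEi0 : 0 < E⁻¹ := by positivity
      rcases h3 with h3 | h3
      · have hE2 : 2 ≤ E := by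
          have : Real.pi * |u.re| + 1 ≤ E := Real.add_one_le_exp _
          have h5 : (1/2 : ℝ) ≤ |u.re| := by rw [h3, hR]; linarith [(Nat.cast_nonneg L : (0:ℝ) ≤ L)]
          nlinarith [Real.pi_gt_three]
        have hEi1 : E⁻¹ ≤ 1/2 := by
          rw [one_div]; exact inv_anti₀ (by norm_num) hE2
        nlinarith [sq_nonneg (Real.sin (Real.pi * u.im)), sq_nonneg (E⁻¹)]
      · have hs : Real.sin (Real.pi * u.im)^2 = 1 := by
          have hc : Real.cos (Real.pi * u.im) = 0 := by
            rw [← Real.cos_abs, abs_mul, abs_of_pos hpi, h3, hR, Real.cos_eq_zero_iff]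
            exact ⟨L, by push_cast; ring⟩
          have := Real.sin_sq_add_cos_sq (Real.pi * u.im)
          rw [hc] at this; linarith
        rw [hs]
        nlinarith [sq_nonneg (E⁻¹)]
    exact (pow_le_pow_iff_left₀ (by positivity) (by positivity) two_ne_zero).1 key
  have hKb : ∀ u ∈ frontier V, ‖K u‖ ≤ 4 * C := by
    intro u hu
    obtain ⟨h1, h2, h3⟩ := hfront u hu
    have hlow := hDlow u hu
    have hGu := hG u (hVU (frontier_subset_closure hu))
    have hDpos : 0 < ‖D u‖ := by
      have := Real.exp_pos (Real.pi * |u.re|); linarith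
    have hGn : ‖G u‖ * ‖D u‖ ≤ C * Real.exp (Real.pi * β * |u.re|) := by
      rw [← norm_mul, ← hGu]; exact hA'b u
    have hG2 : ‖G u‖ ≤ 4 * C * Real.exp (-(Real.pi * (1-β) * |u.re|)) := by
      have : ‖G u‖ * Real.exp (Real.pi * |u.re|) ≤ 4 * C * Real.exp (Real.pi * β * |u.re|) := by
        calc _ ≤ ‖G u‖ * (4 * ‖D u‖) := by gcongr
          _ = 4 * (‖G u‖ * ‖D u‖) := by ring
          _ ≤ _ := by linarith
      calc ‖G u‖ = ‖G u‖ * Real.exp (Real.pi * |u.re|) * Real.exp (-(Real.pi * |u.re|)) := by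
            rw [mul_assoc, ← Real.exp_add]; simp
        _ ≤ 4 * C * Real.exp (Real.pi * β * |u.re|) * Real.exp (-(Real.pi * |u.re|)) := by gcongr
        _ = _ := by rw [mul_assoc, ← Real.exp_add]; congr 2; ring
    simp only [hK]
    rw [norm_mul, hnexp]
    calc _ ≤ 4 * C * Real.exp (-(Real.pi * (1-β) * |u.re|)) * Real.exp (Real.pi * (1 - β) * (R^2 + u.re^2 - u.im^2) / (2 * R)) := by gcongr
      _ = 4 * C * Real.exp (-(Real.pi * (1-β) * |u.re|) + Real.pi * (1 - β) * (R^2 + u.re^2 - u.im^2) / (2 * R)) := by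
          rw [mul_assoc, ← Real.exp_add]
      _ ≤ 4 * C * 1 := by
          gcongr
          rw [Real.exp_le_one_iff]
          have h5 : (R^2 + u.re^2 - u.im^2) / (2 * R) ≤ |u.re| := by
            rw [div_le_iff₀ (by positivity), ← sq_abs u.re, ← sq_abs u.im]
            rcases h3 with h | h <;> rw [h] <;> nlinarith [abs_nonneg u.re, abs_nonneg u.im]
          have h6 : 0 ≤ Real.pi * (1-β) := mul_nonneg hpi.le (by linarith)
          have := mul_le_mul_of_nonneg_left h5 h6
          rw [mul_div_assoc]; linarith
      _ = _ := by ring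
  have hVb : Bornology.IsBounded V := (Metric.isBounded_Ioo _ _).reProdIm (Metric.isBounded_Ioo _ _)
  have hyV : (y * Complex.I : ℂ) ∈ closure V := by
    rw [hVcl, Complex.mem_reProdIm]
    have := abs_le.1 hy
    simp; refine ⟨hR0.le, ?_, ?_⟩ <;> linarith [this.1, this.2]
  have hfin := Complex.norm_le_of_forall_mem_frontier_norm_le hVb hKd hKb hyV
  simp only [hK] at hfin
  rw [norm_mul, hnexp] at hfin
  have hGy := hG _ (hVU hyV)
  have hAy : ‖A (y * Complex.I)‖ = ‖G (y * Complex.I)‖ * ‖D (y * Complex.I)‖ := by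
    rw [← norm_mul, ← hGy]
    simp only [hA']
    rw [norm_mul, Complex.norm_exp]
    have : (Real.pi * β * (y * Complex.I) : ℂ).re = 0 := by simp
    rw [this]; simp
  have hDy : ‖D (y * Complex.I)‖ ≤ 1 := by
    have := hDn (y * Complex.I)
    simp at this
    have h2 := Real.sin_sq_le_one (Real.pi * y)
    nlinarith [norm_nonneg (D (y * Complex.I))]
  rw [hAy]
  simp at hfin
  have hy2 : y^2 ≤ R^2/4 := by
    rw [← sq_abs]; nlinarith [abs_nonneg y]
  have h7 : (1-β) * R ≤ Real.pi * (1 - β) * (R^2 - y^2) / (2 * R) := by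
    rw [le_div_iff₀ (by positivity)]
    have h8 : 0 ≤ 1 - β := by linarith
    have : (1-β) * (2 * R^2) ≤ (1-β) * (Real.pi * (R^2 - y^2)) := by
      refine mul_le_mul_of_nonneg_left ?_ h8
      nlinarith [Real.pi_gt_three]
    nlinarith
  calc ‖G (y * Complex.I)‖ * ‖D (y * Complex.I)‖ ≤ ‖G (y * Complex.I)‖ * 1 := by gcongr
    _ = ‖G (y * Complex.I)‖ * Real.exp ((1-β) * R) * Real.exp (-((1-β)*R)) := by
        rw [mul_assoc, ← Real.exp_add]; simp
    _ ≤ 4 * C * Real.exp (-((1-β)*R)) := by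
        have h9 : ‖G (y * Complex.I)‖ * Real.exp ((1-β) * R) ≤ 4 * C := by
          refine le_trans ?_ hfin
          gcongr
        gcongr

def Sset (p : ℕ) : Set ℕ := {n | ∃ k, p ≤ k ∧ 2^k ≤ n ∧ n ≤ 2^k + 2^(k-p)}

lemma pl_bounded {f : ℂ → ℂ} {C B M : ℝ} (hf : DiffContOnCl ℂ f {z | 0 < z.re})
    (hb : ∀ z : ℂ, 0 < z.re → ‖f z‖ ≤ M * Real.exp (B * ‖z‖))
    (hre : ∃ X : ℝ, ∀ x : ℝ, X ≤ x → ‖f x‖ ≤ M) (him : ∀ x : ℝ, ‖f (x * Complex.I)‖ ≤ C)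
    {z : ℂ} (hz : 0 ≤ z.re) : ‖f z‖ ≤ C := by
  refine PhragmenLindelof.right_half_plane_of_bounded_on_real hf ⟨1, by norm_num, B, ?_⟩ ?_ him hz
  · refine Asymptotics.IsBigO.of_bound M ?_
    refine eventually_inf_principal.2 <| Eventually.of_forall fun z hz => ?_
    rw [Real.norm_of_nonneg (Real.exp_pos _).le, Real.rpow_one]
    exact hb z hz
  · obtain ⟨X, hX⟩ := hre
    exact ⟨M, by rw [eventually_map]; filter_upwards [eventually_ge_atTop X] with x hx using hX x hx⟩

lemma re_inv_shift (z : ℂ) (m s : ℝ) :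
    ((z - m * Complex.I + s)⁻¹ : ℂ).re = (z.re + s) / ((z.re + s)^2 + (z.im - m)^2) := by
  rw [Complex.inv_re, Complex.normSq_apply]
  simp [pow_two]

/-- comparison with rational Poisson kernels -/
lemma compare {Φ : ℂ → ℂ} (hΦ : Differentiable ℂ Φ) {C κ R m : ℝ} (hC : 0 ≤ C)
    (hb : ∀ z : ℂ, 0 ≤ z.re → ‖Φ z‖ ≤ C) (hκ : 0 < κ) (hR : 0 < R) (hκR : 4 ≤ κ * R) (hm : 0 < m)
    (hsm : ∀ y : ℝ, |y - m| ≤ R/2 → ‖Φ (y * Complex.I)‖ ≤ 4 * C * Real.exp (-(κ * R)))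
    (x : ℝ) (hx : m ≤ x) (hxR : R/8 ≤ x) :
    ‖Φ x‖ ≤ C * Real.exp (-(κ * R^2 / (160 * x))) := by
  have hx0 : 0 < x := by linarith
  set s := R/8 with hs
  have hs0 : 0 < s := by positivity
  set γ := κ * R^2 / 16 with hγ
  have hγ0 : 0 < γ := by positivity
  set h : ℂ → ℂ := fun z => (z - m * Complex.I + s)⁻¹ - (1/2 : ℝ) * (z - m * Complex.I + (4*s:ℝ))⁻¹ with hh
  have hre : ∀ z : ℂ, (h z).re = (z.re + s) / ((z.re + s)^2 + (z.im - m)^2)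
      - 1/2 * ((z.re + 4 * s) / ((z.re + 4*s)^2 + (z.im - m)^2)) := by
    intro z
    simp only [hh]
    rw [Complex.sub_re, Complex.re_ofReal_mul, re_inv_shift, re_inv_shift]
  have hne : ∀ z : ℂ, 0 ≤ z.re → ∀ s : ℝ, 0 < s → z - m * Complex.I + s ≠ 0 := by
    intro z hz s hs h0
    have := congrArg Complex.re h0
    simp at this; linarith
  have hd : ∀ z : ℂ, 0 ≤ z.re → DifferentiableAt ℂ h z := by
    intro z hz
    have h1 := hne z hz s hs0
    have h2 := hne z hz (4*s) (by positivity)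
    simp only [hh]
    have d1 : DifferentiableAt ℂ (fun z : ℂ => z - m * Complex.I + s) z := by fun_prop
    have d2 : DifferentiableAt ℂ (fun z : ℂ => z - m * Complex.I + (4*s:ℝ)) z := by fun_prop
    exact (d1.fun_inv h1).sub ((d2.fun_inv h2).const_mul _)
  set F : ℂ → ℂ := fun z => Φ z * Complex.exp (γ * h z) with hF
  have hFd : ∀ z : ℂ, 0 ≤ z.re → DifferentiableAt ℂ F z := fun z hz =>
    (hΦ z).mul ((hd z hz).const_mul _).cexp
  have hcl : closure {z : ℂ | 0 < z.re} = {z | 0 ≤ z.re} := Complex.closure_setOfPred_lt_re 0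
  have hFdc : DiffContOnCl ℂ F {z | 0 < z.re} := by
    apply DifferentiableOn.diffContOnCl
    rw [hcl]
    intro z hz
    exact (hFd z hz).differentiableWithinAt
  have hFn : ∀ z, ‖F z‖ = ‖Φ z‖ * Real.exp (γ * (h z).re) := by
    intro z; simp only [hF]; rw [norm_mul, Complex.norm_exp, Complex.re_ofReal_mul]
  have hhle : ∀ z : ℂ, 0 ≤ z.re → (h z).re ≤ 1/s := by
    intro z hz
    rw [hre]
    have h1 : (z.re + s) / ((z.re + s)^2 + (z.im - m)^2) ≤ 1/s := by
      rw [div_le_div_iff₀ (by positivity) hs0]; nlinarith [sq_nonneg (z.im - m)]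
    have h2 : 0 ≤ 1/2 * ((z.re + 4 * s) / ((z.re + 4*s)^2 + (z.im - m)^2)) := by positivity
    linarith
  have hFM : ∀ z : ℂ, 0 ≤ z.re → ‖F z‖ ≤ C * Real.exp (γ * (1/s)) := by
    intro z hz
    rw [hFn]; gcongr
    · exact hb z hz
    · exact hhle z hz
  have hγs : γ * (1/s) = κ * R / 2 := by rw [hγ, hs]; field_simp; norm_num
  have him : ∀ y : ℝ, ‖F (y * Complex.I)‖ ≤ C := by
    intro y
    rw [hFn]
    rcases le_total |y - m| (R/2) with h1 | h1
    · calc _ ≤ 4 * C * Real.exp (-(κ * R)) * Real.exp (γ * (1/s)) := by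
            gcongr
            · exact hsm y h1
            · exact hhle _ (by simp)
        _ = C * (4 * Real.exp (-(κ*R/2))) := by
            rw [hγs, mul_assoc, ← Real.exp_add]
            rw [show -(κ * R) + κ * R / 2 = -(κ*R/2) by ring]; ring
        _ ≤ C * 1 := by
            gcongr
            have h2 : Real.exp (-(κ*R/2)) ≤ Real.exp (-2) := by
              gcongr; linarith
            have h3 : Real.exp (-2) ≤ 1/4 := by
              rw [Real.exp_neg, one_div]
              apply inv_anti₀ (by norm_num)
              have := Real.exp_one_gt_d9
              have e : Real.exp 2 = Real.exp 1 * Real.exp 1 := by rw [← Real.exp_add]; norm_num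
              rw [e]; nlinarith
            linarith
        _ = C := mul_one C
    · calc _ ≤ C * 1 := by
            gcongr
            · exact hb _ (by simp)
            · rw [Real.exp_le_one_iff]
              apply mul_nonpos_of_nonneg_of_nonpos hγ0.le
              have hr : (h (y * Complex.I)).re = s/(s^2+(y-m)^2) - 1/2*(4*s/((4*s)^2+(y-m)^2)) := by
                rw [hre]; simp
              rw [hr, sub_nonpos, show 1/2*(4*s/((4*s)^2+(y-m)^2)) = 2*s/((4*s)^2+(y-m)^2) by ring]
              have h2 : 16 * s^2 ≤ (y - m)^2 := by
                rw [← sq_abs (y-m)]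
                have : 4 * s ≤ |y - m| := by rw [hs]; linarith
                nlinarith
              rw [div_le_div_iff₀ (by positivity) (by positivity)]
              nlinarith
        _ = C := mul_one C
  have hfin := pl_bounded (f := F) (B := 0) hFdc (fun z hz => by simpa using hFM z hz.le)
    ⟨0, fun x hx => hFM x (by simpa using hx)⟩ him (z := x) (by simpa using hx0.le)
  rw [hFn] at hfin
  have hlow : 1/(10*x) ≤ (h x).re := by
    rw [hre]
    simp only [Complex.ofReal_re, Complex.ofReal_im, zero_sub, neg_sq]
    have h1 : (x + 4 * s) / ((x + 4*s)^2 + m^2) ≤ (x + s) / ((x + s)^2 + m^2) := by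
      rw [div_le_div_iff₀ (by positivity) (by positivity)]
      have : m^2 ≤ (x+s) * (x+4*s) := by nlinarith
      nlinarith
    have h2 : 1/(5*x) ≤ (x + s) / ((x + s)^2 + m^2) := by
      rw [div_le_div_iff₀ (by positivity) (by positivity)]
      nlinarith
    have : 1/(10*x) = 1/(5*x)/2 := by field_simp; norm_num
    linarith
  have hlow2 : κ * R^2 / (160 * x) ≤ γ * (h x).re := by
    have := mul_le_mul_of_nonneg_left hlow hγ0.le
    have e : γ * (1/(10*x)) = κ * R^2/(160*x) := by rw [hγ]; field_simp; norm_num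
    linarith
  calc ‖Φ x‖ = ‖Φ x‖ * Real.exp (γ * (h x).re) * Real.exp (-(γ * (h x).re)) := by
        rw [mul_assoc, ← Real.exp_add]; simp
    _ ≤ C * Real.exp (-(κ * R^2 / (160 * x))) := by gcongr

lemma step {Φ : ℂ → ℂ} (hΦ : Differentiable ℂ Φ) {C β : ℝ} (hC : 0 ≤ C)
    (hβ : 0 < β) (hβ1 : β < 1) (p : ℕ)
    (hb : ∀ z : ℂ, ‖Φ z‖ ≤ C * Real.exp (2 * Real.pi * β * max 0 (-z.re)))
    (hz : ∀ n ∈ Sset p, Φ (n * Complex.I) = 0) (z : ℂ) (hzre : 0 ≤ z.re) :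
    ‖Φ z * Complex.exp (((1-β) / (160 * (2^(p+3))^2) : ℝ) * z)‖ ≤ C := by
  have hκ : 0 < 1 - β := by linarith
  set c : ℝ := (1-β) / (160 * (2^(p+3))^2) with hc
  have hc0 : 0 < c := by positivity
  have hb0 : ∀ z : ℂ, 0 ≤ z.re → ‖Φ z‖ ≤ C := by
    intro z hz
    have := hb z
    rw [max_eq_left (by linarith)] at this
    simpa using this
  -- decay at real points
  obtain ⟨k0, hk0⟩ : ∃ k0 : ℕ, 4 ≤ (1-β) * 2^k0 := by
    obtain ⟨k, hk⟩ := pow_unbounded_of_one_lt (4/(1-β)) (one_lt_two : (1:ℝ) < 2)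
    refine ⟨k, ?_⟩
    rw [div_lt_iff₀ hκ] at hk; linarith
  have hdec : ∀ x : ℝ, 2^(k0+p+3) ≤ x → ‖Φ x‖ ≤ C * Real.exp (-(c * x)) := by
    intro x hx
    have hx1 : (1:ℝ) ≤ x := le_trans (one_le_pow₀ (by norm_num)) hx
    obtain ⟨n, hn1, hn2⟩ := exists_nat_pow_near hx1 (one_lt_two : (1:ℝ) < 2)
    have hn3 : k0 + p + 3 ≤ n := by
      have : (2:ℝ)^(k0+p+3) < 2^(n+1) := lt_of_le_of_lt hx hn2
      have := (pow_lt_pow_iff_right₀ (one_lt_two : (1:ℝ) < 2)).1 this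
      omega
    -- n = k+1, k = p + 1 + l
    obtain ⟨l, rfl⟩ : ∃ l, n = p + l + 2 := ⟨n - (p+2), by omega⟩
    have hl : k0 ≤ l := by omega
    set L : ℕ := 2^l with hL
    set M : ℕ := 2^(p+l+1) + 2^l with hM
    have hblock : ∀ j : ℤ, |j| ≤ L → Φ (M * Complex.I + j * Complex.I) = 0 := by
      intro j hj
      rw [abs_le] at hj
      obtain ⟨q, hq⟩ : ∃ q : ℕ, (q:ℤ) = M + j := by
        refine ⟨((M:ℤ)+j).toNat, Int.toNat_of_nonneg ?_⟩
        have : L ≤ M := by rw [hM, hL]; exact Nat.le_add_left _ _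
        omega
      have hqS : q ∈ Sset p := by
        refine ⟨p+l+1, by omega, ?_, ?_⟩
        · have : (M:ℤ) = 2^(p+l+1) + L := by rw [hM, hL]; push_cast; ring
          zify; omega
        · have e : p + l + 1 - p = l + 1 := by omega
          rw [e]
          have : (M:ℤ) = 2^(p+l+1) + L := by rw [hM, hL]; push_cast; ring
          have h2 : (2:ℤ)^(l+1) = 2 * L := by rw [hL]; push_cast; ring
          zify; omega
      have := hz q hqS
      rw [← this]; congr 1
      have hq' : (q:ℂ) = M + j := by exact_mod_cast hq
      rw [hq']; ring
    have hAd : Differentiable ℂ (fun u => Φ (M * Complex.I + u)) := hΦ.comp (by fun_prop)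
    have hsm := block_small (A := fun u => Φ (M * Complex.I + u)) hAd hC hβ hβ1 (by
      intro u
      have := hb (M * Complex.I + u)
      simpa using this) L hblock
    have hLr : (L:ℝ) = 2^l := by rw [hL]; push_cast; rfl
    have hMr : (M:ℝ) = 2^(p+1) * 2^l + 2^l := by rw [hM]; push_cast; ring
    have hP : (1:ℝ) ≤ 2^p := one_le_pow₀ (by norm_num)
    have hl0 : (1:ℝ) ≤ 2^l := one_le_pow₀ (by norm_num)
    have hxl : 4 * 2^p * (2:ℝ)^l ≤ x := by
      refine le_trans (le_of_eq ?_) hn1; ring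
    have hxu : x ≤ 8 * 2^p * (2:ℝ)^l := by
      refine le_trans hn2.le (le_of_eq ?_); ring
    have hPl : (2:ℝ)^l ≤ 2^p * 2^l := by nlinarith
    have hcmp := compare hΦ (κ := 1-β) (R := L + 1/2) (m := M) hC hb0 hκ (by positivity) (by
        rw [hLr]
        have : (2:ℝ)^k0 ≤ 2^l := pow_le_pow_right₀ (by norm_num) hl
        nlinarith) (by rw [hMr]; positivity) (by
        intro y hy
        have := hsm (y - M) hy
        have e : (M * Complex.I + ((y - M : ℝ) : ℂ) * Complex.I) = y * Complex.I := by
          push_cast; ring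
        rw [e] at this
        exact this) x (by rw [hMr, pow_succ]; nlinarith) (by rw [hLr]; linarith)
    refine hcmp.trans ?_
    gcongr
    rw [hc, hLr]
    have e : (2:ℝ)^(p+3) = 8 * 2^p := by ring
    rw [e, le_div_iff₀ (by positivity), div_mul_eq_mul_div, div_mul_eq_mul_div, div_le_iff₀ (by positivity)]
    have h1 : x ≤ (8 * 2^p) * (2^l + 1/2 : ℝ) := by nlinarith
    have h2 : x^2 ≤ ((8 * 2^p) * (2^l + 1/2 : ℝ))^2 := by gcongr
    calc (1-β) * x * (160 * x) = 160 * (1-β) * x^2 := by ring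
      _ ≤ 160 * (1-β) * ((8 * 2^p) * (2^l + 1/2 : ℝ))^2 := by gcongr
      _ = _ := by ring
  have hn : ∀ z : ℂ, ‖Φ z * Complex.exp ((c:ℝ) * z)‖ = ‖Φ z‖ * Real.exp (c * z.re) := by
    intro z; rw [norm_mul, Complex.norm_exp, Complex.re_ofReal_mul]
  have hd : Differentiable ℂ (fun z => Φ z * Complex.exp ((c:ℝ) * z)) := hΦ.mul (by fun_prop)
  refine pl_bounded (f := fun z => Φ z * Complex.exp ((c:ℝ) * z)) (M := C) (B := c) hd.diffContOnCl
    ?_ ?_ ?_ hzre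
  · intro z hz
    rw [hn]
    gcongr
    · exact hb0 z hz.le
    · exact Complex.re_le_norm z
  · refine ⟨2^(k0+p+3), fun x hx => ?_⟩
    rw [hn]
    calc _ ≤ C * Real.exp (-(c*x)) * Real.exp (c * (x:ℂ).re) := by gcongr; exact hdec x hx
      _ = C := by rw [mul_assoc, ← Real.exp_add]; simp
  · intro y
    rw [hn]
    simpa using hb0 (y * Complex.I) (by simp)

lemma phi_zero {Φ : ℂ → ℂ} (hΦ : Differentiable ℂ Φ) {C β : ℝ} (hC : 0 ≤ C)
    (hβ : 0 < β) (hβ1 : β < 1) (p : ℕ)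
    (hb : ∀ z : ℂ, ‖Φ z‖ ≤ C * Real.exp (2 * Real.pi * β * max 0 (-z.re)))
    (hz : ∀ n ∈ Sset p, Φ (n * Complex.I) = 0) (y : ℝ) : Φ (y * Complex.I) = 0 := by
  set c : ℝ := ((1-β) / (160 * (2^(p+3))^2) : ℝ) with hc
  have hκ : 0 < 1 - β := by linarith
  have hc0 : 0 < c := by positivity
  have hind : ∀ n : ℕ, ∀ z : ℂ, ‖Φ z * Complex.exp ((n * c : ℝ) * z)‖ ≤
      C * Real.exp (2 * Real.pi * β * max 0 (-z.re)) := by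
    intro n
    induction n with
    | zero => simpa using hb
    | succ n ih =>
      intro z
      have hsplit : Complex.exp ((((n+1:ℕ):ℝ) * c : ℝ) * z) =
          Complex.exp ((n * c : ℝ) * z) * Complex.exp ((c:ℝ) * z) := by
        rw [← Complex.exp_add]; congr 1; push_cast; ring
      rw [hsplit, ← mul_assoc]
      rcases le_total 0 z.re with h | h
      · have := step (Φ := fun z => Φ z * Complex.exp ((n * c : ℝ) * z)) (hΦ.mul (by fun_prop)) hC hβ hβ1 p ih
          (fun q hq => by simp [hz q hq]) z h
        rw [max_eq_left (by linarith), mul_zero, Real.exp_zero, mul_one]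
        exact this
      · rw [norm_mul]
        refine le_trans (mul_le_of_le_one_right (norm_nonneg _) ?_) (ih z)
        rw [Complex.norm_exp, Complex.re_ofReal_mul, Real.exp_le_one_iff]
        exact mul_nonpos_of_nonneg_of_nonpos hc0.le h
  have hpos : ∀ z : ℂ, 0 < z.re → Φ z = 0 := by
    intro z hzr
    have h1 : ∀ n : ℕ, ‖Φ z‖ ≤ C * Real.exp (-(c * z.re)) ^ n := by
      intro n
      have := hind n z
      rw [max_eq_left (by linarith), norm_mul, Complex.norm_exp, Complex.re_ofReal_mul] at this
      simp only [mul_zero, Real.exp_zero, mul_one] at this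
      rw [← Real.exp_nat_mul]
      calc ‖Φ z‖ = ‖Φ z‖ * Real.exp (n * c * z.re) * Real.exp (n * -(c * z.re)) := by
            rw [mul_assoc, ← Real.exp_add]; ring_nf; simp
        _ ≤ _ := by gcongr
    have ht : Tendsto (fun n : ℕ => C * Real.exp (-(c * z.re)) ^ n) atTop (nhds (C * 0)) :=
      (tendsto_pow_atTop_nhds_zero_of_lt_one (Real.exp_pos _).le
        (by rw [Real.exp_lt_one_iff]; nlinarith [mul_pos hc0 hzr])).const_mul C
    have := ge_of_tendsto' ht h1
    rw [mul_zero] at this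
    exact norm_le_zero_iff.1 this
  have ht : Tendsto (fun n : ℕ => Φ ((1 / ((n:ℝ) + 1) : ℝ) + y * Complex.I)) atTop (nhds (Φ ((0:ℝ) + y * Complex.I))) := by
    apply (hΦ.continuous.tendsto _).comp
    exact ((Complex.continuous_ofReal.tendsto 0).comp tendsto_one_div_add_atTop_nhds_zero_nat).add_const _
  have h0 : ∀ n : ℕ, Φ ((1 / ((n:ℝ) + 1) : ℝ) + y * Complex.I) = 0 := by
    intro n
    apply hpos
    rw [Complex.add_re, Complex.ofReal_re]
    simp; positivity
  simp only [h0] at ht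
  have := tendsto_nhds_unique ht tendsto_const_nhds
  simpa using this

lemma norm_expf (l t : ℝ) : ‖expf l t‖ = 1 := by
  unfold expf
  rw [show (2 * Real.pi * Complex.I * l * t : ℂ) = ((2 * Real.pi * l * t : ℝ) : ℂ) * Complex.I by
    push_cast; ring]
  exact Complex.norm_exp_ofReal_mul_I _

lemma continuous_expf (l : ℝ) : Continuous (expf l) := by
  unfold expf; fun_prop

lemma memLp_expf (μ : Measure ℝ) [IsFiniteMeasure μ] (l : ℝ) : MemLp (expf l) 2 μ :=
  MemLp.of_bound (continuous_expf l).aestronglyMeasurable 1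
    (Eventually.of_forall fun t => (norm_expf l t).le)

lemma star_expf (l t : ℝ) : (starRingEnd ℂ) (expf l t) = expf (-l) t := by
  unfold expf
  rw [← Complex.exp_conj]
  congr 1
  simp only [map_mul, Complex.conj_ofReal, Complex.conj_I, Complex.conj_ofNat]
  push_cast; ring

lemma inner_expf (μ : Measure ℝ) [IsFiniteMeasure μ] (l : ℝ) (f : Lp ℂ 2 μ) :
    inner ℂ ((memLp_expf μ l).toLp) f = ∫ t, f t * expf (-l) t ∂μ := by
  rw [L2.inner_def]
  apply integral_congr_ae
  filter_upwards [(memLp_expf μ l).coeFn_toLp] with t ht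
  rw [ht, RCLike.inner_apply, star_expf]

lemma laplace_facts {a : ℝ} (ha : 0 < a) (ha1 : a < 1) (f : ℝ → ℂ)
    (hf : Integrable f (volume.restrict (Set.Ioo a 1))) :
    Differentiable ℂ (fun z : ℂ => ∫ t in Set.Ioo a 1, f t * Complex.exp (-2 * Real.pi * z * (t - a : ℝ))) ∧
    ∀ z : ℂ, ‖∫ t in Set.Ioo a 1, f t * Complex.exp (-2 * Real.pi * z * (t - a : ℝ))‖ ≤
      (∫ t in Set.Ioo a 1, ‖f t‖) * Real.exp (2 * Real.pi * (1 - a) * max 0 (-z.re)) := by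
  have hpi := Real.pi_pos
  have hnorm : ∀ z : ℂ, ∀ t : ℝ, ‖Complex.exp (-2 * Real.pi * z * (t - a : ℝ))‖ =
      Real.exp (2 * Real.pi * (t - a) * (-z.re)) := by
    intro z t
    rw [Complex.norm_exp]; congr 1
    rw [show (-2 * Real.pi * z * (t - a : ℝ) : ℂ) = ((2 * Real.pi * (t-a) : ℝ) : ℂ) * (-z) by push_cast; ring,
      Complex.re_ofReal_mul, Complex.neg_re]
  have hle : ∀ z : ℂ, ∀ t ∈ Set.Ioo a 1, ‖Complex.exp (-2 * Real.pi * z * (t - a : ℝ))‖ ≤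
      Real.exp (2 * Real.pi * (1 - a) * max 0 (-z.re)) := by
    intro z t ht
    rw [hnorm]
    apply Real.exp_le_exp.2
    calc 2 * Real.pi * (t - a) * (-z.re) ≤ 2 * Real.pi * (t-a) * max 0 (-z.re) := by
          have : 0 ≤ 2 * Real.pi * (t-a) := by have := ht.1; apply mul_nonneg <;> linarith
          exact mul_le_mul_of_nonneg_left (le_max_right _ _) this
      _ ≤ _ := by gcongr; exact ht.2.le
  have hcont : ∀ z : ℂ, Continuous (fun t : ℝ => Complex.exp (-2 * Real.pi * z * (t - a : ℝ))) := by
    intro z; fun_prop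
  constructor
  · intro z0
    have := hasDerivAt_integral_of_dominated_loc_of_deriv_le (μ := volume.restrict (Set.Ioo a 1))
      (F := fun z t => f t * Complex.exp (-2 * Real.pi * z * (t - a : ℝ)))
      (F' := fun z t => f t * (Complex.exp (-2 * Real.pi * z * (t - a : ℝ)) * (-2 * Real.pi * (t - a : ℝ))))
      (x₀ := z0) (s := Metric.ball z0 1)
      (bound := fun t => ‖f t‖ * (Real.exp (2 * Real.pi * (1 - a) * (‖z0‖ + 1)) * (2 * Real.pi)))
      (Metric.ball_mem_nhds z0 one_pos)
      (Eventually.of_forall fun z => hf.aestronglyMeasurable.mul (hcont z).aestronglyMeasurable)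
      (by
        refine (hf.norm.mul_const (Real.exp (2 * Real.pi * (1 - a) * max 0 (-z0.re)))).mono'
          (hf.aestronglyMeasurable.mul (hcont z0).aestronglyMeasurable) ?_
        filter_upwards [ae_restrict_mem measurableSet_Ioo] with t ht
        rw [norm_mul]; gcongr; exact hle z0 t ht)
      (hf.aestronglyMeasurable.mul (by
        apply Continuous.aestronglyMeasurable; fun_prop))
      (by
        filter_upwards [ae_restrict_mem measurableSet_Ioo] with t ht z hz
        rw [norm_mul, norm_mul]
        gcongr
        · refine (hle z t ht).trans (Real.exp_le_exp.2 ?_)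
          refine mul_le_mul_of_nonneg_left (max_le (by positivity) ?_)
            (mul_nonneg (by positivity) (by linarith))
          have h1 : -z.re ≤ ‖z‖ := by
            have := Complex.abs_re_le_norm z
            have := neg_abs_le z.re
            linarith
          have h2 : ‖z‖ ≤ ‖z0‖ + ‖z - z0‖ := by
            have := norm_add_le z0 (z - z0); simpa using this
          rw [Metric.mem_ball, dist_eq_norm] at hz
          linarith
        · rw [show (-2 * Real.pi * (t - a : ℝ) : ℂ) = ((-2 * Real.pi * (t-a) : ℝ) : ℂ) by push_cast; ring,
            Complex.norm_real, Real.norm_eq_abs, abs_mul, abs_mul, abs_of_pos hpi]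
          have : |t - a| ≤ 1 := by rw [abs_le]; constructor <;> linarith [ht.1, ht.2]
          rw [show |(-2:ℝ)| = 2 by norm_num]
          nlinarith)
      (hf.norm.mul_const _)
      (by
        refine Eventually.of_forall fun t z _ => ?_
        have h1 : HasDerivAt (fun z : ℂ => -2 * Real.pi * z * (t - a : ℝ)) (-2 * Real.pi * (t - a : ℝ)) z := by
          simpa using ((hasDerivAt_id z).const_mul (-2 * Real.pi : ℂ)).mul_const ((t - a : ℝ) : ℂ)
        exact h1.cexp.const_mul (f t))
    exact this.2.differentiableAt
  · intro z
    rw [← integral_mul_const]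
    apply norm_integral_le_of_norm_le (hf.norm.mul_const _)
    filter_upwards [ae_restrict_mem measurableSet_Ioo] with t ht
    rw [norm_mul]; gcongr; exact hle z t ht

lemma mem_closure_a {a : ℝ} (ha : 0 < a) (ha1 : a < 1) (p : ℕ) (l : ℝ) :
    (memLp_expf (volume.restrict (Set.Ioo a 1)) l).toLp ∈
      (Submodule.span ℂ ((fun n : ℕ => (memLp_expf (volume.restrict (Set.Ioo a 1)) n).toLp) ''
        Sset p)).topologicalClosure := by
  set μ := volume.restrict (Set.Ioo a 1) with hμ
  rw [← Submodule.orthogonal_orthogonal_eq_closure, Submodule.mem_orthogonal']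
  intro f hf
  have hf1 : Integrable f μ := (Lp.memLp f).integrable (by norm_num)
  obtain ⟨hd, hb⟩ := laplace_facts ha ha1 f hf1
  have hrel : ∀ l : ℝ, ∫ t in Set.Ioo a 1, f t * Complex.exp (-2 * Real.pi * (l * Complex.I) * (t - a : ℝ)) =
      inner ℂ ((memLp_expf μ l).toLp) f * Complex.exp (2 * Real.pi * l * a * Complex.I) := by
    intro l
    rw [inner_expf, ← integral_mul_const]
    congr 1; ext t
    unfold expf
    rw [mul_assoc (f t), ← Complex.exp_add]
    congr 2; push_cast; ring
  have hz := phi_zero hd (integral_nonneg fun _ => norm_nonneg _) (by linarith) (by linarith) p hb (by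
    intro n hn
    have h1 := hrel n
    rw [Complex.ofReal_natCast] at h1
    rw [h1]
    rw [Submodule.mem_orthogonal] at hf
    rw [hf _ (Submodule.subset_span ⟨n, hn, rfl⟩), zero_mul]) l
  rw [hrel] at hz
  exact (mul_eq_zero.1 hz).resolve_right (Complex.exp_ne_zero _)

/-- the trigonometric polynomial with coefficients `c` -/
def tpoly (c : ℕ →₀ ℂ) : ℝ → ℂ := fun t => ∑ n ∈ c.support, c n * expf n t

lemma continuous_tpoly (c : ℕ →₀ ℂ) : Continuous (tpoly c) := by
  unfold tpoly
  exact continuous_finsetSum _ fun n _ => continuous_const.mul (continuous_expf n)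

lemma toLp_comb (μ : Measure ℝ) [IsFiniteMeasure μ] (c : ℕ →₀ ℂ) :
    (Finsupp.linearCombination ℂ (fun n : ℕ => (memLp_expf μ n).toLp) c : Lp ℂ 2 μ) =ᵐ[μ] tpoly c := by
  rw [Finsupp.linearCombination_apply, Finsupp.sum]
  refine (Lp.coeFn_finsetSum _ _).trans ?_
  have : ∀ᵐ t ∂μ, ∀ n ∈ c.support, (c n • (memLp_expf μ n).toLp : Lp ℂ 2 μ) t = c n * expf n t := by
    rw [Finset.eventually_all]
    intro n _
    filter_upwards [Lp.coeFn_smul (c n) (memLp_expf μ n).toLp, (memLp_expf μ n).coeFn_toLp] with t h1 h2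
    rw [h1, Pi.smul_apply, h2, smul_eq_mul]
  filter_upwards [this] with t ht
  rw [Finset.sum_apply]
  exact Finset.sum_congr rfl ht

lemma approx_a {a : ℝ} (ha : 0 < a) (ha1 : a < 1) (p : ℕ) (l : ℝ) {ε : ℝ} (hε : 0 < ε) :
    ∃ c : ℕ →₀ ℂ, (↑c.support ⊆ Sset p) ∧
      ∫ t in Set.Ioo a 1, ‖expf l t - tpoly c t‖^2 ≤ ε := by
  set μ := volume.restrict (Set.Ioo a 1) with hμ
  have h := mem_closure_a ha ha1 p l
  rw [← SetLike.mem_coe, Submodule.topologicalClosure_coe, Metric.mem_closure_iff] at h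
  obtain ⟨v, hv, hd⟩ := h (Real.sqrt ε) (Real.sqrt_pos.2 hε)
  rw [SetLike.mem_coe, Finsupp.mem_span_image_iff_linearCombination] at hv
  obtain ⟨c, hc, rfl⟩ := hv
  refine ⟨c, hc, ?_⟩
  set v := Finsupp.linearCombination ℂ (fun n : ℕ => (memLp_expf μ n).toLp) c
  have h1 : ‖(memLp_expf μ l).toLp - v‖^2 ≤ ε := by
    rw [dist_eq_norm] at hd
    have := Real.sq_sqrt hε.le
    nlinarith [norm_nonneg ((memLp_expf μ l).toLp - v)]
  refine le_trans (le_of_eq ?_) h1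
  have h2 : (inner ℂ ((memLp_expf μ l).toLp - v) ((memLp_expf μ l).toLp - v)) = ((∫ t, ‖expf l t - tpoly c t‖^2 ∂μ : ℝ) : ℂ) := by
    rw [L2.inner_def, ← integral_complex_ofReal]
    apply integral_congr_ae
    filter_upwards [Lp.coeFn_sub (memLp_expf μ l).toLp v, (memLp_expf μ l).coeFn_toLp, toLp_comb μ c] with t h1 h2 h3
    rw [h1, Pi.sub_apply, h2, h3, inner_self_eq_norm_sq_to_K]
    simp
  rw [inner_self_eq_norm_sq_to_K] at h2
  apply Complex.ofReal_injective
  rw [← h2]; simp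

lemma Sset_anti {p q : ℕ} (h : p ≤ q) : Sset q ⊆ Sset p := by
  rintro n ⟨k, hk, h1, h2⟩
  refine ⟨k, h.trans hk, h1, h2.trans ?_⟩
  gcongr
  · norm_num

lemma Sset_pos {p n : ℕ} (h : n ∈ Sset p) : 1 ≤ n := by
  obtain ⟨k, -, h1, -⟩ := h
  exact Nat.one_le_two_pow.trans h1

lemma Sset_count (p n : ℕ) :
    2^p * (Sset p ∩ Set.Icc 1 n).ncard ≤ 2 * n + 2^p * (Nat.log 2 n + 1) := by
  rcases Nat.eq_zero_or_pos n with rfl | hn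
  · simp
  set K := Nat.log 2 n with hK
  have hsub : Sset p ∩ Set.Icc 1 n ⊆
      (((Finset.range (K+1)).filter (fun k => p ≤ k)).biUnion
        (fun k => Finset.Icc (2^k) (2^k + 2^(k-p))) : Finset ℕ) := by
    rintro m ⟨⟨k, hk, h1, h2⟩, h3⟩
    simp only [Finset.coe_biUnion, Set.mem_iUnion, Finset.mem_coe, Finset.mem_filter, Finset.mem_range,
      Finset.mem_Icc]
    refine ⟨k, ⟨?_, hk⟩, h1, h2⟩
    have : 2^k ≤ n := h1.trans h3.2
    exact Nat.lt_succ_of_le (Nat.le_log_of_pow_le (by norm_num) this)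
  have h1 := Set.ncard_le_ncard hsub (Finset.finite_toSet _)
  rw [Set.ncard_coe_finset] at h1
  have h2 := h1.trans Finset.card_biUnion_le
  calc 2^p * (Sset p ∩ Set.Icc 1 n).ncard
      ≤ 2^p * ∑ k ∈ (Finset.range (K+1)).filter (fun k => p ≤ k), (Finset.Icc (2^k) (2^k + 2^(k-p))).card :=
        Nat.mul_le_mul_left _ h2
    _ = ∑ k ∈ (Finset.range (K+1)).filter (fun k => p ≤ k), (2^k + 2^p) := by
        rw [Finset.mul_sum]
        refine Finset.sum_congr rfl fun k hk => ?_
        have hk := (Finset.mem_filter.1 hk).2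
        rw [Nat.card_Icc, show 2^k + 2^(k-p) + 1 - 2^k = 2^(k-p) + 1 by rw [add_assoc, Nat.add_sub_cancel_left], mul_add, ← pow_add,
          Nat.add_sub_cancel' hk, mul_one]
    _ ≤ ∑ k ∈ Finset.range (K+1), (2^k + 2^p) :=
        Finset.sum_le_sum_of_subset (Finset.filter_subset _ _)
    _ ≤ 2 * n + 2^p * (K + 1) := by
        rw [Finset.sum_add_distrib, Finset.sum_const, Finset.card_range, smul_eq_mul, mul_comm (K+1)]
        gcongr
        have h5 : ∑ k ∈ Finset.range (K+1), 2^k < 2^(K+1) :=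
          Nat.geomSum_lt (le_refl 2) (fun k hk => Finset.mem_range.1 hk)
        have h6 : 2^K ≤ n := Nat.pow_log_le_self 2 hn.ne'
        rw [pow_succ] at h5
        omega

lemma density_zero {T : Set ℕ} (hT : ∀ p, (T \ Sset p).Finite) :
    Tendsto (fun n : ℕ => ((T ∩ Set.Icc 1 n).ncard : ℝ) / n) atTop (nhds 0) := by
  have hlog : Tendsto (fun n : ℕ => (Nat.log 2 n : ℝ) / n) atTop (nhds 0) := by
    have h1 : Tendsto (fun n : ℕ => Real.log n / n * (Real.log 2)⁻¹) atTop (nhds (0 * (Real.log 2)⁻¹)) :=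
      (Real.isLittleO_log_id_atTop.tendsto_div_nhds_zero.comp tendsto_natCast_atTop_atTop).mul_const _
    rw [zero_mul] at h1
    refine squeeze_zero (fun n => by positivity) (fun n => ?_) h1
    have := Real.natLog_le_logb n 2
    rw [Real.logb] at this
    calc _ ≤ (Real.log n / Real.log ((2:ℕ):ℝ)) / n := by gcongr
      _ = _ := by push_cast; ring
  rw [Metric.tendsto_atTop']
  intro ε hε
  obtain ⟨p, hp⟩ := pow_unbounded_of_one_lt (4/ε) (one_lt_two : (1:ℝ) < 2)
  set F := (T \ Sset p).ncard
  have h2 : Tendsto (fun n : ℕ => (Nat.log 2 n : ℝ) / n + (F + 1 : ℝ) / n) atTop (nhds (0 + 0)) :=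
    hlog.add (tendsto_const_div_atTop_nhds_zero_nat _)
  rw [add_zero] at h2
  have h3 := h2.eventually (gt_mem_nhds (half_pos hε))
  obtain ⟨N, hN⟩ := eventually_atTop.1 h3
  refine ⟨N, fun n hn => ?_⟩
  have hN' := hN n hn.le
  have hn0 : 0 < n := by omega
  have hnr : (0:ℝ) < n := by exact_mod_cast hn0
  rw [dist_zero_right, Real.norm_of_nonneg (by positivity)]
  have hc : (T ∩ Set.Icc 1 n).ncard ≤ F + (Sset p ∩ Set.Icc 1 n).ncard := by
    refine le_trans (Set.ncard_le_ncard ?_ ((hT p).union ((Set.finite_Icc 1 n).subset Set.inter_subset_right)))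
      (Set.ncard_union_le _ _)
    rintro m ⟨h1, h2⟩
    by_cases h : m ∈ Sset p
    · exact Or.inr ⟨h, h2⟩
    · exact Or.inl ⟨h1, h⟩
  have hs := Sset_count p n
  have hcr : ((T ∩ Set.Icc 1 n).ncard : ℝ) ≤ F + (Sset p ∩ Set.Icc 1 n).ncard := by exact_mod_cast hc
  have hsr : (2:ℝ)^p * ((Sset p ∩ Set.Icc 1 n).ncard : ℝ) ≤ 2 * n + 2^p * (Nat.log 2 n + 1) := by
    exact_mod_cast hs
  have hP : (0:ℝ) < 2^p := by positivity
  have h6 : ((Sset p ∩ Set.Icc 1 n).ncard : ℝ) ≤ 2 * n / 2^p + (Nat.log 2 n + 1) := by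
    have : ((Sset p ∩ Set.Icc 1 n).ncard : ℝ) ≤ (2 * n + 2^p * (Nat.log 2 n + 1)) / 2^p := by
      rw [le_div_iff₀ hP]; linarith
    rwa [add_div, mul_div_cancel_left₀ _ hP.ne'] at this
  have h7 : 2 * n / 2^p < ε/2 * n := by
    rw [div_lt_iff₀ hP]
    rw [div_lt_iff₀ hε] at hp
    nlinarith
  rw [← add_div, div_lt_iff₀ hnr] at hN'
  rw [div_lt_iff₀ hnr]
  linarith

lemma liminf_gamma {T : Set ℕ} (hT : ∀ p, (T \ Sset p).Finite) :
    Filter.atTop.liminf (fun n : ℕ => (({n : ℕ | 1 ≤ n ∧ n ∉ T} ∩ Set.Icc 1 n).ncard : ℝ) / n) = 1 := by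
  apply Tendsto.liminf_eq
  have h := (density_zero hT).const_sub 1
  rw [sub_zero] at h
  refine h.congr' ?_
  filter_upwards [eventually_gt_atTop 0] with n hn
  have hnr : (n:ℝ) ≠ 0 := by positivity
  have hfin : (T ∩ Set.Icc 1 n).Finite := (Set.finite_Icc 1 n).subset Set.inter_subset_right
  have e : {n : ℕ | 1 ≤ n ∧ n ∉ T} ∩ Set.Icc 1 n = Set.Icc 1 n \ (T ∩ Set.Icc 1 n) := by
    ext m; simp only [Set.mem_inter_iff, Set.mem_ofPred_eq, Set.mem_Icc, Set.mem_sdiff]; tauto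
  have h1 := Set.ncard_sdiff_add_ncard_of_subset (Set.inter_subset_right : T ∩ Set.Icc 1 n ⊆ Set.Icc 1 n)
    (Set.finite_Icc 1 n)
  rw [← e] at h1
  have h2 : (Set.Icc 1 n).ncard = n := by
    rw [← Finset.coe_Icc, Set.ncard_coe_finset]; simp
  rw [h2] at h1
  have h3 : (({n : ℕ | 1 ≤ n ∧ n ∉ T} ∩ Set.Icc 1 n).ncard : ℝ) = n - (T ∩ Set.Icc 1 n).ncard := by
    rw [eq_sub_iff_add_eq]; exact_mod_cast h1
  rw [h3, sub_div, div_self hnr]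

lemma exists_weight (b : ℕ → ℝ) (hb : ∀ j, 0 ≤ b j) :
    ∃ w : ℝ → ℝ, Measurable w ∧ (∀ t, 0 < w t) ∧ (∀ t ∈ Set.Ioo (0:ℝ) 1, w t ≤ 1) ∧
      MonotoneOn w (Set.Ioo (0:ℝ) 1) ∧ LogIntNegInf w ∧
      ∀ j : ℕ, ∀ t : ℝ, 0 < t → t ≤ 1 / ((j:ℝ) + 2) → w t * b j ≤ 1 := by
  set B : ℕ → ℝ := fun n => 1 + ∑ j ∈ Finset.range n, b j with hB
  have hB1 : ∀ n, 1 ≤ B n := fun n => by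
    simp only [hB]; linarith [Finset.sum_nonneg (fun j (_ : j ∈ Finset.range n) => hb j)]
  have hB0 : ∀ n, 0 < B n := fun n => lt_of_lt_of_le one_pos (hB1 n)
  have hBm : Monotone B := by
    intro m n h
    simp only [hB]
    gcongr
    exact fun i _ _ => hb i
  have hBb : ∀ j n, j < n → b j ≤ B n := by
    intro j n h
    simp only [hB]
    have := Finset.single_le_sum (f := b) (fun j _ => hb j) (Finset.mem_range.2 h)
    linarith
  set w : ℝ → ℝ := fun t => Real.exp (-t⁻¹) / B ⌊t⁻¹⌋₊ with hw
  have hpos : ∀ t, 0 < w t := fun t => div_pos (Real.exp_pos _) (hB0 _)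
  have hle : ∀ t, w t ≤ Real.exp (-t⁻¹) := fun t => div_le_self (Real.exp_pos _).le (hB1 _)
  have hle1 : ∀ t : ℝ, 0 < t → w t ≤ 1 := by
    intro t ht
    refine (hle t).trans ?_
    rw [Real.exp_le_one_iff]
    have := inv_pos.2 ht; linarith
  refine ⟨w, ?_, hpos, fun t ht => hle1 t ht.1, ?_, ⟨?_, ?_⟩, ?_⟩
  · refine Measurable.div (by fun_prop) ?_
    exact (measurable_from_nat (f := B)).comp (Nat.measurable_floor.comp measurable_inv)
  · intro s hs t ht hst
    simp only [hw]
    have h1 : t⁻¹ ≤ s⁻¹ := inv_anti₀ hs.1 hst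
    have h2 : B ⌊t⁻¹⌋₊ ≤ B ⌊s⁻¹⌋₊ := hBm (Nat.floor_mono h1)
    apply div_le_div₀ (Real.exp_pos _).le _ (hB0 _) h2
    exact Real.exp_le_exp.2 (by linarith)
  · have : ∫⁻ t in Set.Ioo (0:ℝ) 1, ENNReal.ofReal (Real.log (w t)) = ∫⁻ t in Set.Ioo (0:ℝ) 1, 0 := by
      apply setLIntegral_congr_fun measurableSet_Ioo
      intro t ht
      exact ENNReal.ofReal_of_nonpos (Real.log_nonpos (hpos t).le (hle1 t ht.1))
    rw [this]; simp
  · by_contra hne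
    have h1 : ∫⁻ t in Set.Ioo (0:ℝ) 1, ENNReal.ofReal (t⁻¹) ≠ ⊤ := by
      refine ne_top_of_le_ne_top hne ?_
      apply setLIntegral_mono' measurableSet_Ioo
      intro t ht
      apply ENNReal.ofReal_le_ofReal
      have := Real.log_le_log (hpos t) (hle t)
      rw [Real.log_exp] at this
      linarith
    rw [lintegral_ofReal_ne_top_iff_integrable (by fun_prop) (by
      filter_upwards [ae_restrict_mem measurableSet_Ioo] with t ht
      exact (inv_pos.2 ht.1).le)] at h1
    have h2 : IntervalIntegrable (fun t : ℝ => t⁻¹) volume 0 1 := by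
      rw [intervalIntegrable_iff_integrableOn_Ioo_of_le zero_le_one]; exact h1
    rw [intervalIntegrable_inv_iff] at h2
    simp at h2
  · intro j t ht htj
    have hfl : j < ⌊t⁻¹⌋₊ := by
      have h1 : (j:ℝ) + 2 ≤ t⁻¹ := by
        rw [one_div] at htj
        exact (le_inv_comm₀ ht (by positivity)).1 htj
      have : j + 2 ≤ ⌊t⁻¹⌋₊ := Nat.le_floor (by push_cast; exact h1)
      omega
    simp only [hw]
    rw [div_mul_eq_mul_div, div_le_one (hB0 _)]
    have h2 : Real.exp (-t⁻¹) ≤ 1 := by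
      rw [Real.exp_le_one_iff]; have := inv_pos.2 ht; linarith
    calc _ ≤ 1 * b j := by gcongr; exact hb j
      _ ≤ _ := by rw [one_mul]; exact hBb j _ hfl

lemma norm_sq_sub (μ : Measure ℝ) [IsFiniteMeasure μ] (l : ℝ) (c : ℕ →₀ ℂ) :
    ‖(memLp_expf μ l).toLp - Finsupp.linearCombination ℂ (fun n : ℕ => (memLp_expf μ n).toLp) c‖^2 =
      ∫ t, ‖expf l t - tpoly c t‖^2 ∂μ := by
  set v := Finsupp.linearCombination ℂ (fun n : ℕ => (memLp_expf μ n).toLp) c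
  have h2 : (inner ℂ ((memLp_expf μ l).toLp - v) ((memLp_expf μ l).toLp - v)) = ((∫ t, ‖expf l t - tpoly c t‖^2 ∂μ : ℝ) : ℂ) := by
    rw [L2.inner_def, ← integral_complex_ofReal]
    apply integral_congr_ae
    filter_upwards [Lp.coeFn_sub (memLp_expf μ l).toLp v, (memLp_expf μ l).coeFn_toLp, toLp_comb μ c] with t h1 h2 h3
    rw [h1, Pi.sub_apply, h2, h3, inner_self_eq_norm_sq_to_K]
    simp
  rw [inner_self_eq_norm_sq_to_K] at h2
  apply Complex.ofReal_injective
  rw [← h2]; simp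

lemma integral_wMeasure (w : ℝ → ℝ) (hw : Measurable w) (hpos : ∀ t, 0 < w t) (f : ℝ → ℂ) :
    ∫ t, f t ∂(wMeasure w) = ∫ t in Set.Ioo (0:ℝ) 1, (w t : ℂ) * f t := by
  unfold wMeasure
  rw [integral_withDensity_eq_integral_toReal_smul hw.ennreal_ofReal (Eventually.of_forall fun t => by simp)]
  congr 1; ext t
  rw [ENNReal.toReal_ofReal (hpos t).le, Complex.real_smul]

lemma integral_wMeasure_real (w : ℝ → ℝ) (hw : Measurable w) (hpos : ∀ t, 0 < w t) (f : ℝ → ℝ) :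
    ∫ t, f t ∂(wMeasure w) = ∫ t in Set.Ioo (0:ℝ) 1, w t * f t := by
  unfold wMeasure
  rw [integral_withDensity_eq_integral_toReal_smul hw.ennreal_ofReal (Eventually.of_forall fun t => by simp)]
  congr 1; ext t
  rw [ENNReal.toReal_ofReal (hpos t).le, smul_eq_mul]

lemma finite_wMeasure (w : ℝ → ℝ) (hle : ∀ t ∈ Set.Ioo (0:ℝ) 1, w t ≤ 1) :
    IsFiniteMeasure (wMeasure w) := by
  apply isFiniteMeasure_withDensity
  refine ne_top_of_le_ne_top (b := ∫⁻ t in Set.Ioo (0:ℝ) 1, 1) (by simp) ?_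
  apply setLIntegral_mono' measurableSet_Ioo
  intro t ht
  simpa using hle t ht

/-- the exponentials with integer frequencies are total in the weighted space -/
lemma eq_zero_of_coeff (w : ℝ → ℝ) (hw : Measurable w) (hpos : ∀ t, 0 < w t)
    (hle : ∀ t ∈ Set.Ioo (0:ℝ) 1, w t ≤ 1) (g : Lp ℂ 2 (wMeasure w))
    (hg : ∀ i : ℤ, ∫ t, g t * expf (-i) t ∂(wMeasure w) = 0) : g = 0 := by
  set G : ℝ → ℂ := fun t => (w t : ℂ) * g t with hG
  have hgm : StronglyMeasurable (g : ℝ → ℂ) := Lp.stronglyMeasurable g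
  have hGm : StronglyMeasurable G :=
    (Complex.measurable_ofReal.comp hw).stronglyMeasurable.mul hgm
  have hwg_integrable : Integrable (fun t => w t * ‖g t‖^2) (volume.restrict (Set.Ioo (0:ℝ) 1)) := by
    have h1 := (memLp_two_iff_integrable_sq_norm hgm.aestronglyMeasurable).1 (Lp.memLp g)
    unfold wMeasure at h1
    rw [integrable_withDensity_iff_integrable_smul' hw.ennreal_ofReal
      (Eventually.of_forall fun t => by simp)] at h1
    refine h1.congr (Eventually.of_forall fun t => ?_)
    simp only [ENNReal.toReal_ofReal (hpos t).le, smul_eq_mul]; rfl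
  have hGL : MemLp G 2 (volume.restrict (Set.Ioo (0:ℝ) 1)) := by
    rw [memLp_two_iff_integrable_sq_norm hGm.aestronglyMeasurable]
    refine hwg_integrable.mono' (by have := hGm.norm.measurable; exact (this.pow_const 2).aestronglyMeasurable) ?_
    filter_upwards [ae_restrict_mem measurableSet_Ioo] with t ht
    rw [Real.norm_of_nonneg (by positivity)]
    simp only [hG]
    rw [norm_mul, mul_pow, Complex.norm_real, Real.norm_of_nonneg (hpos t).le]
    have := hle t ht
    have := hpos t
    gcongr
    nlinarith
  have hGL' : MemLp G 2 (volume.restrict (Set.Ioc (0:ℝ) 1)) := by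
    rwa [← Measure.restrict_congr_set Ioo_ae_eq_Ioc]
  have hco : ∀ i : ℤ, fourierCoeffOn (zero_lt_one : (0:ℝ) < 1) G i = 0 := by
    intro i
    rw [fourierCoeffOn_eq_integral, intervalIntegral.integral_of_le zero_le_one,
      integral_Ioc_eq_integral_Ioo]
    have h1 := hg i
    rw [integral_wMeasure w hw hpos] at h1
    have h2 : ∫ x in Set.Ioo (0:ℝ) 1, fourier (-i) (x : AddCircle ((1:ℝ) - 0)) • G x = 0 := by
      rw [← h1]
      congr 1; ext t
      rw [fourier_coe_apply]
      simp only [hG, expf, smul_eq_mul]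
      push_cast
      rw [show (2 * Real.pi * Complex.I * -(i:ℂ) * t / (1 - 0) : ℂ) = 2 * Real.pi * Complex.I * -(i:ℂ) * t by simp]
      ring
    rw [h2, smul_zero]
  have hP := tsum_sq_fourierCoeffOn (zero_lt_one : (0:ℝ) < 1) hGL'
  simp only [hco, norm_zero] at hP
  rw [intervalIntegral.integral_of_le zero_le_one, integral_Ioc_eq_integral_Ioo] at hP
  have h0 : ∫ t in Set.Ioo (0:ℝ) 1, ‖G t‖^2 = 0 := by
    simpa using hP.symm
  rw [integral_eq_zero_iff_of_nonneg (fun t => by positivity)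
    ((memLp_two_iff_integrable_sq_norm hGm.aestronglyMeasurable).1 hGL)] at h0
  have hae : ∀ᵐ t ∂(volume.restrict (Set.Ioo (0:ℝ) 1)), g t = 0 := by
    filter_upwards [h0] with t ht
    have h1 : G t = 0 := by simpa using ht
    simp only [hG] at h1
    exact (mul_eq_zero.1 h1).resolve_left (by exact_mod_cast (hpos t).ne')
  rw [Lp.eq_zero_iff_ae_eq_zero]
  exact (withDensity_absolutelyContinuous _ _).ae_le hae

/-- **Proposition 1.** There is a set `Γ ⊆ ℕ` of lower density one such that `E(ℕ∖Γ)` is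
complete in `L²(𝕋,w)` for some positive increasing weight `w` with `∫₀¹ log w = -∞`. -/
theorem exists_density_one_removable :
    ∃ Γ : Set ℕ, 0 ∉ Γ ∧
      Filter.atTop.liminf (fun n : ℕ => ((Γ ∩ Set.Icc 1 n).ncard : ℝ) / n) = 1 ∧
      ∃ w : ℝ → ℝ, (∀ t ∈ Set.Ioo (0:ℝ) 1, 0 < w t) ∧
        MonotoneOn w (Set.Ioo (0:ℝ) 1) ∧ LogIntNegInf w ∧
        ExpSpans w {x : ℝ | ∃ n : ℕ, 1 ≤ n ∧ n ∉ Γ ∧ x = n} := by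
  have hA : ∀ (j : ℕ) (i : ℤ), ∃ c : ℕ →₀ ℂ, (↑c.support ⊆ Sset j) ∧
      ∫ t in Set.Ioo (1/((j:ℝ)+2)) 1, ‖expf i t - tpoly c t‖^2 ≤ 1/((j:ℝ)+1) := by
    intro j i
    refine approx_a (by positivity) ?_ j i (by positivity)
    rw [div_lt_one (by positivity)]; linarith [(Nat.cast_nonneg j : (0:ℝ) ≤ j)]
  choose c hcS hcI using hA
  set T : Set ℕ := {n | ∃ j : ℕ, ∃ i ∈ Finset.Icc (-(j:ℤ)) j, n ∈ (c j i).support} with hT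
  have hTfin : ∀ p, (T \ Sset p).Finite := by
    intro p
    refine ((Finset.range p).biUnion fun j => (Finset.Icc (-(j:ℤ)) j).biUnion
      fun i => (c j i).support).finite_toSet.subset ?_
    rintro n ⟨⟨j, i, hi, hn⟩, hnp⟩
    simp only [Finset.coe_biUnion, Set.mem_iUnion, Finset.mem_coe, Finset.mem_range]
    refine ⟨j, ?_, i, hi, hn⟩
    by_contra h
    exact hnp (Sset_anti (not_lt.1 h) (hcS j i hn))
  set M : ℕ → ℤ → ℝ := fun j i => (1 + ∑ n ∈ (c j i).support, ‖c j i n‖)^2 with hM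
  have hMb : ∀ j (i : ℤ) t, ‖expf i t - tpoly (c j i) t‖^2 ≤ M j i := by
    intro j i t
    simp only [hM]
    gcongr
    refine (norm_sub_le _ _).trans ?_
    rw [norm_expf]
    gcongr
    unfold tpoly
    refine (norm_sum_le _ _).trans (Finset.sum_le_sum fun n _ => ?_)
    rw [norm_mul, norm_expf, mul_one]
  set b : ℕ → ℝ := fun j => ((j:ℝ)+1) * ∑ i ∈ Finset.Icc (-(j:ℤ)) j, M j i with hb
  have hM0 : ∀ j i, 0 ≤ M j i := fun j i => sq_nonneg _
  obtain ⟨w, hwm, hpos, hle, hmono, hlog, hwb⟩ := exists_weight b (fun j =>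
    mul_nonneg (by positivity) (Finset.sum_nonneg fun i _ => hM0 j i))
  refine ⟨{n | 1 ≤ n ∧ n ∉ T}, by simp, liminf_gamma hTfin, w, fun t _ => hpos t, hmono, hlog, ?_⟩
  have hfinm := finite_wMeasure w hle
  unfold ExpSpans
  set V : Submodule ℂ (Lp ℂ 2 (wMeasure w)) := Submodule.span ℂ _ with hV
  have hmemV : ∀ n ∈ T, (memLp_expf (wMeasure w) n).toLp ∈ V := by
    intro n hn
    apply Submodule.subset_span
    refine ⟨n, ⟨n, ?_, by simp [hn], rfl⟩, (memLp_expf (wMeasure w) n).coeFn_toLp⟩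
    obtain ⟨j, i, hi, hn⟩ := hn
    exact Sset_pos (hcS j i hn)
  have hEst : ∀ j : ℕ, ∀ i ∈ Finset.Icc (-(j:ℤ)) j,
      ∫ t, ‖expf i t - tpoly (c j i) t‖^2 ∂(wMeasure w) ≤ 2 / ((j:ℝ)+1) := by
    intro j i hi
    rw [integral_wMeasure_real w hwm hpos]
    set d : ℝ → ℝ := fun t => ‖expf i t - tpoly (c j i) t‖^2 with hd
    have hdc : Continuous d := ((continuous_expf i).sub (continuous_tpoly _)).norm.pow 2
    set a : ℝ := 1/((j:ℝ)+2) with ha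
    have ha0 : 0 < a := by positivity
    have hpt : ∀ t ∈ Set.Ioo (0:ℝ) 1, w t * d t ≤ 1/((j:ℝ)+1) + (Set.Ioo a 1).indicator d t := by
      intro t ht
      by_cases hta : t ≤ a
      · have h1 : w t * d t ≤ 1/((j:ℝ)+1) := by
          rw [le_div_iff₀ (by positivity)]
          refine le_trans ?_ (hwb j t ht.1 hta)
          rw [mul_assoc]
          refine mul_le_mul_of_nonneg_left ?_ (hpos t).le
          simp only [hb]
          rw [mul_comm]
          refine mul_le_mul_of_nonneg_left ?_ (by positivity)
          exact (hMb j i t).trans (Finset.single_le_sum (f := M j) (fun i _ => hM0 j i) hi)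
        have h2 : 0 ≤ (Set.Ioo a 1).indicator d t := Set.indicator_nonneg (fun _ _ => sq_nonneg _) t
        linarith
      · rw [Set.indicator_of_mem (show t ∈ Set.Ioo a 1 from ⟨not_le.1 hta, ht.2⟩)]
        have h1 : w t * d t ≤ 1 * d t := mul_le_mul_of_nonneg_right (hle t ht) (sq_nonneg _)
        have h2 : 0 ≤ 1/((j:ℝ)+1) := by positivity
        linarith
    have hdi : Integrable ((Set.Ioo a 1).indicator d) volume := by
      rw [integrable_indicator_iff measurableSet_Ioo]
      exact (hdc.integrableOn_Icc (a := a) (b := 1)).mono_set Set.Ioo_subset_Icc_self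
    calc ∫ t in Set.Ioo (0:ℝ) 1, w t * d t
        ≤ ∫ t in Set.Ioo (0:ℝ) 1, (1/((j:ℝ)+1) + (Set.Ioo a 1).indicator d t) := by
          apply integral_mono_of_nonneg
          · exact Eventually.of_forall fun t => mul_nonneg (hpos t).le (sq_nonneg _)
          · exact (integrable_const _).add hdi.integrableOn
          · filter_upwards [ae_restrict_mem measurableSet_Ioo] with t ht using hpt t ht
      _ = 1/((j:ℝ)+1) + ∫ t in Set.Ioo a 1, d t := by
          rw [integral_add (integrable_const _) hdi.integrableOn, setIntegral_indicator measurableSet_Ioo,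
            Set.inter_eq_self_of_subset_right (Set.Ioo_subset_Ioo_left ha0.le)]
          simp
      _ ≤ 1/((j:ℝ)+1) + 1/((j:ℝ)+1) := by gcongr; exact hcI j i
      _ = _ := by ring
  have hcl : ∀ i : ℤ, (memLp_expf (wMeasure w) i).toLp ∈ V.topologicalClosure := by
    intro i
    rw [← SetLike.mem_coe, Submodule.topologicalClosure_coe, Metric.mem_closure_iff]
    intro ε hε
    obtain ⟨j0, hj0⟩ := exists_nat_gt (2/ε^2)
    set j := max j0 i.natAbs with hj
    have hi : i ∈ Finset.Icc (-(j:ℤ)) j := by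
      have : i.natAbs ≤ j := le_max_right _ _
      rw [Finset.mem_Icc]; omega
    refine ⟨Finsupp.linearCombination ℂ (fun n : ℕ => (memLp_expf (wMeasure w) n).toLp) (c j i), ?_, ?_⟩
    · rw [Finsupp.linearCombination_apply, Finsupp.sum]
      exact Submodule.sum_mem _ fun n hn => Submodule.smul_mem _ _ (hmemV n ⟨j, i, hi, hn⟩)
    · rw [dist_eq_norm]
      have h1 := norm_sq_sub (wMeasure w) i (c j i)
      have h2 := hEst j i hi
      have h3 : 2/((j:ℝ)+1) < ε^2 := by
        have : (j0:ℝ) ≤ j := by exact_mod_cast le_max_left _ _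
        rw [div_lt_iff₀ (by positivity)]
        rw [div_lt_iff₀ (by positivity)] at hj0
        nlinarith [sq_nonneg ε]
      exact lt_of_pow_lt_pow_left₀ 2 hε.le (by linarith)
  have htop : V.topologicalClosure = ⊤ := by
    rw [Submodule.topologicalClosure_eq_top_iff, Submodule.eq_bot_iff]
    intro g hg
    apply eq_zero_of_coeff w hwm hpos hle g
    intro i
    have h1 := hcl i
    rw [← Submodule.orthogonal_orthogonal_eq_closure, Submodule.mem_orthogonal'] at h1
    rw [← inner_expf]
    exact h1 g hg
  have := congrArg (fun W : Submodule ℂ (Lp ℂ 2 (wMeasure w)) => (W : Set (Lp ℂ 2 (wMeasure w)))) htop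
  simpa only [Submodule.topologicalClosure_coe, Submodule.top_coe] using this
end
end
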